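/- arXiv:2106.09615 — 2 statements merged into one kernel-verified Lean document; each statement's English description precedes it below -/
import Mathlib

section
/- There exist absolute constants C0, C1, C2 > 0 with the following property. Let p be a prime, α, β ∈ F_p^*, and let f : F_p → F_p be given by f(x) = x/(αx + β) when αx + β ≠ 0 and f(−β/α) = 1/α. Let X, Y1, Y2, Z ⊆ F_p^* be finite nonempty sets, put A = X·Y1 and B = X·Y2, and let K_*, K ≥ 1 and K̃ ≥ 2 be reals with |X||Y1| = K_*·|A|, |X||Y2| = K_*·|B|, |X·Z| ≤ K·|X| and |Z·Z| ≤ K̃·|Z|. Suppose log p > log K̃ (so that log(log p / log K̃) is defined and positive where needed), and that |Z| ≥ p^δ for some δ ∈ (0,1] with δ ≥ C0 / log(log p / log K̃). Then there is an integer k with 1 ≤ k ≤ C1/δ such that #{(a, b) ∈ A × B : a = f(b)} − K²·K_*²·|A||B|/p ≤ C2·K²·K_*²·K̃·sqrt(|A||B|)·p^{−1/16^k}. -/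
open scoped BigOperators Pointwise


namespace S5

section BSG
variable {G : Type*} [AddCommGroup G] [Fintype G] [DecidableEq G]

/-- shifted intersection -/
def shiftInter (A : Finset G) (d : G) : Finset G := A.filter (fun x => x - d ∈ A)

lemma shiftInter_sum (A : Finset G) :
    ∑ d, ((shiftInter A d).card : ℝ) = (A.card : ℝ) ^ 2 := by
  have h : ∀ d, ((shiftInter A d).card : ℝ) = ∑ x ∈ A, if x - d ∈ A then (1:ℝ) else 0 := by
    intro d
    simp [shiftInter]
  simp_rw [h]
  rw [Finset.sum_comm]
  have h2 : ∀ x ∈ A, (∑ d, if x - d ∈ A then (1:ℝ) else 0) = A.card := by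
    intro x _
    rw [Fintype.sum_equiv (Equiv.subLeft x) (fun d => if x - d ∈ A then (1:ℝ) else 0)
      (fun y => if y ∈ A then (1:ℝ) else 0) (by intro d; simp)]
    simp
  rw [Finset.sum_congr rfl h2]
  simp [sq]

lemma shiftInter_common (A : Finset G) (a b : G) :
    ∑ d, (if a - d ∈ A ∧ b - d ∈ A then (1:ℝ) else 0) = ((shiftInter A (a - b)).card : ℝ) := by
  rw [Fintype.sum_equiv (Equiv.subLeft a)
      (fun d => if a - d ∈ A ∧ b - d ∈ A then (1:ℝ) else 0)
      (fun y => if y ∈ A ∧ y - (a - b) ∈ A then (1:ℝ) else 0) (by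
        intro d
        have : a - d - (a - b) = b - d := by abel
        simp [this])]
  rw [Finset.sum_boole]
  congr 2
  ext y
  simp [shiftInter]

theorem bsg (A : Finset G) (hA : A.Nonempty) (K : ℝ) (hK : 1 ≤ K)
    (hE : (A.card : ℝ) ^ 3 ≤ K * ∑ d, ((shiftInter A d).card : ℝ) ^ 2) :
    ∃ A' ⊆ A, A'.Nonempty ∧ (A.card : ℝ) ≤ 6 * K * A'.card ∧
      ((A' - A').card : ℝ) ≤ 2 ^ 13 * K ^ 3 * A.card := by
  classical
  set r : G → ℝ := fun d => ((shiftInter A d).card : ℝ) with hr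
  have hr0 : ∀ d, 0 ≤ r d := fun d => by positivity
  have hn : (0:ℝ) < A.card := by exact_mod_cast hA.card_pos
  set n : ℝ := (A.card : ℝ) with hndef
  set ε : ℝ := 1 / (32 * K) with hε
  have hε0 : 0 < ε := by positivity
  -- number of unpopular pairs
  set U : G → ℝ := fun d => ∑ a ∈ A, ∑ b ∈ A,
    if (a - d ∈ A ∧ b - d ∈ A) ∧ r (a - b) < ε * n then (1:ℝ) else 0 with hU
  have hUsum : ∑ d, U d ≤ ε * n ^ 3 := by
    simp only [hU]
    rw [Finset.sum_comm]
    have h1 : ∀ a ∈ A, ∑ d, ∑ b ∈ A, (if (a - d ∈ A ∧ b - d ∈ A) ∧ r (a - b) < ε * n then (1:ℝ) else 0)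
        ≤ n * (ε * n) := by
      intro a _
      rw [Finset.sum_comm]
      have h2 : ∀ b ∈ A, ∑ d, (if (a - d ∈ A ∧ b - d ∈ A) ∧ r (a - b) < ε * n then (1:ℝ) else 0) ≤ ε * n := by
        intro b _
        by_cases hp : r (a - b) < ε * n
        · simp only [hp, and_true]
          rw [shiftInter_common]
          exact hp.le
        · simp only [hp, and_false, if_false, Finset.sum_const_zero]
          positivity
      refine (Finset.sum_le_sum h2).trans ?_
      simp [hndef]
    refine (Finset.sum_le_sum h1).trans ?_
    simp only [Finset.sum_const, nsmul_eq_mul]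
    rw [← hndef]
    apply le_of_eq; ring
  have hrsum : ∑ d, r d = n ^ 2 := shiftInter_sum A
  have hex : ∃ d, 0 < r d ^ 2 - 16 * U d - n / (4 * K) * r d := by
    by_contra hcon
    push Not at hcon
    have h1 : ∑ d, (r d ^ 2 - 16 * U d - n / (4 * K) * r d) ≤ 0 :=
      Finset.sum_nonpos (fun d _ => hcon d)
    rw [Finset.sum_sub_distrib, Finset.sum_sub_distrib, ← Finset.mul_sum, ← Finset.mul_sum, hrsum] at h1
    have h2 : n ^ 3 / K ≤ ∑ d, r d ^ 2 := by
      rw [div_le_iff₀ (by positivity)]; linarith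
    have h3 : n / (4 * K) * n ^ 2 = n ^ 3 / K / 4 := by field_simp
    have h4 : 16 * (ε * n ^ 3) = n ^ 3 / K / 2 := by rw [hε]; field_simp; norm_num
    have h5 : 0 < n ^ 3 / K := by positivity
    linarith
  obtain ⟨d, hd⟩ := hex
  set B := shiftInter A d with hB
  have hBA : B ⊆ A := Finset.filter_subset _ _
  have hUd0 : 0 ≤ U d := Finset.sum_nonneg fun a _ => Finset.sum_nonneg fun b _ => by split_ifs <;> norm_num
  have hrd0 : 0 < r d := by
    rcases (hr0 d).lt_or_eq with h | h
    · exact h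
    · rw [← h] at hd; norm_num at hd; linarith
  have hrd1 : n / (4 * K) < r d := by
    have : 0 < r d * (r d - n / (4 * K)) := by nlinarith
    have := pos_of_mul_pos_right this hrd0.le
    linarith
  have hUd : 16 * U d < r d ^ 2 := by
    have : 0 ≤ n / (4 * K) * r d := by positivity
    linarith
  have hBcard : (B.card : ℝ) = r d := rfl
  -- bad neighbours inside B
  set bad : G → Finset G := fun a => B.filter (fun b => r (a - b) < ε * n) with hbad
  have hUeq : U d = ∑ a ∈ B, ((bad a).card : ℝ) := by
    simp only [hU, hbad, hB, shiftInter, Finset.sum_filter]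
    apply Finset.sum_congr rfl
    intro a _
    by_cases h : a - d ∈ A
    · simp only [h, true_and, if_true]
      rw [Finset.card_filter, Finset.sum_filter]
      push_cast
      apply Finset.sum_congr rfl
      intro b _
      by_cases h' : b - d ∈ A <;> simp [h']
    · simp [h]
  set A' := B.filter (fun a => ((bad a).card : ℝ) ≤ r d / 4) with hA'
  have hA'B : A' ⊆ B := Finset.filter_subset _ _
  have hA'card : 3 / 4 * r d ≤ A'.card := by
    have h1 : ∑ a ∈ B, (if ((bad a).card : ℝ) ≤ r d / 4 then 0 else r d / 4) ≤ U d := by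
      rw [hUeq]
      apply Finset.sum_le_sum
      intro a _
      split_ifs with h
      · positivity
      · linarith
    have h2 : ∑ a ∈ B, (if ((bad a).card : ℝ) ≤ r d / 4 then 0 else r d / 4)
        = (r d - A'.card) * (r d / 4) := by
      have : ∀ a ∈ B, (if ((bad a).card : ℝ) ≤ r d / 4 then 0 else r d / 4)
          = r d / 4 - (if ((bad a).card : ℝ) ≤ r d / 4 then 1 else 0) * (r d / 4) := by
        intro a _
        split_ifs <;> ring
      rw [Finset.sum_congr rfl this, Finset.sum_sub_distrib, ← Finset.sum_mul, Finset.sum_boole]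
      simp only [Finset.sum_const, nsmul_eq_mul, hBcard]
      rw [← hA']; ring
    rw [h2] at h1
    have h3 : (r d - A'.card) * (r d / 4) < (r d / 4) * (r d / 4) := by nlinarith
    have := lt_of_mul_lt_mul_right h3 (by positivity)
    linarith
  have hA'pos : (0:ℝ) < A'.card := by linarith
  have hA'ne : A'.Nonempty := by
    rw [← Finset.card_pos]; exact_mod_cast hA'pos
  refine ⟨A', hA'B.trans hBA, hA'ne, ?_, ?_⟩
  · have h1 : n < r d * (4 * K) := by rwa [div_lt_iff₀ (by positivity)] at hrd1
    have : r d * (4 * K) ≤ (4 / 3 * A'.card) * (4 * K) := by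
      apply mul_le_mul_of_nonneg_right _ (by positivity)
      linarith
    have h2 : 0 < K * A'.card := by positivity
    nlinarith
  · set q : G → ℝ := fun u => ∑ e, r e * r (e - u) with hq
    have hqsum : ∑ u, q u = n ^ 4 := by
      simp only [hq]
      rw [Finset.sum_comm]
      have : ∀ e ∈ (Finset.univ : Finset G), ∑ u, r e * r (e - u) = r e * n ^ 2 := by
        intro e _
        rw [← Finset.mul_sum, ← hrsum]
        congr 1
        exact Fintype.sum_equiv (Equiv.subLeft e) _ _ (by intro x; simp)
      rw [Finset.sum_congr rfl this, ← Finset.sum_mul, hrsum]; ring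
    have hq0 : ∀ u, 0 ≤ q u := fun u => Finset.sum_nonneg fun e _ => mul_nonneg (hr0 _) (hr0 _)
    have hqlow : ∀ u ∈ A' - A', r d / 2 * (ε * n) ^ 2 ≤ q u := by
      intro u hu
      obtain ⟨a, ha, b, hb, rfl⟩ := Finset.mem_sub.1 hu
      set Cm := B \ (bad a ∪ bad b) with hCm
      have hCmcard : r d / 2 ≤ Cm.card := by
        have h1 : B.card ≤ Cm.card + (bad a ∪ bad b).card := by
          have : B.card - (bad a ∪ bad b).card ≤ Cm.card := Finset.le_card_sdiff (bad a ∪ bad b) B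
          omega
        have h2 := Finset.card_union_le (bad a) (bad b)
        have h3 := (Finset.mem_filter.1 ha).2
        have h4 := (Finset.mem_filter.1 hb).2
        have h5 : (B.card : ℝ) ≤ Cm.card + ((bad a).card + (bad b).card) := by exact_mod_cast (by omega)
        rw [hBcard] at h5
        linarith
      have h6 : ∑ c ∈ Cm, (ε * n) ^ 2 ≤ ∑ c ∈ Cm, r (a - c) * r (b - c) := by
        apply Finset.sum_le_sum
        intro c hc
        simp only [hCm, hbad, Finset.mem_sdiff, Finset.mem_union, Finset.mem_filter, not_or, not_and, not_lt] at hc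
        rw [sq]
        exact mul_le_mul (hc.2.1 hc.1) (hc.2.2 hc.1) (by positivity) (hr0 _)
      have h7 : ∑ c ∈ Cm, r (a - c) * r (b - c) ≤ q (a - b) := by
        calc ∑ c ∈ Cm, r (a - c) * r (b - c) ≤ ∑ c, r (a - c) * r (b - c) :=
              Finset.sum_le_sum_of_subset_of_nonneg (Finset.subset_univ _)
                (fun _ _ _ => mul_nonneg (hr0 _) (hr0 _))
          _ = q (a - b) := by
              apply Fintype.sum_equiv (Equiv.subLeft a)
              intro c
              have : a - c - (a - b) = b - c := by abel
              simp [this]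
      simp only [Finset.sum_const, nsmul_eq_mul] at h6
      have h8 : r d / 2 * (ε * n) ^ 2 ≤ Cm.card * (ε * n) ^ 2 :=
        mul_le_mul_of_nonneg_right hCmcard (by positivity)
      linarith
    have h9 : ((A' - A').card : ℝ) * (r d / 2 * (ε * n) ^ 2) ≤ n ^ 4 := by
      rw [← hqsum]
      calc ((A' - A').card : ℝ) * (r d / 2 * (ε * n) ^ 2) = ∑ u ∈ A' - A', (r d / 2 * (ε * n) ^ 2) := by
            simp
        _ ≤ ∑ u ∈ A' - A', q u := Finset.sum_le_sum hqlow
        _ ≤ ∑ u, q u := Finset.sum_le_sum_of_subset_of_nonneg (Finset.subset_univ _)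
                (fun _ _ _ => hq0 _)
    have h10 : (n / (4 * K)) / 2 * (ε * n) ^ 2 ≤ r d / 2 * (ε * n) ^ 2 := by gcongr
    have h11 : ((A' - A').card : ℝ) * ((n / (4 * K)) / 2 * (ε * n) ^ 2) ≤ n ^ 4 :=
      (mul_le_mul_of_nonneg_left h10 (by positivity)).trans h9
    have h12 : (n / (4 * K)) / 2 * (ε * n) ^ 2 = n ^ 3 / (2 ^ 13 * K ^ 3) := by
      rw [hε]; field_simp; norm_num
    rw [h12, ← mul_div_assoc, div_le_iff₀ (by positivity)] at h11
    have h13 : ((A' - A').card : ℝ) * n ^ 3 ≤ (2 ^ 13 * K ^ 3 * n) * n ^ 3 := by linarith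
    exact le_of_mul_le_mul_right h13 (by positivity)

end BSG
end S5


namespace S5

set_option linter.unusedSectionVars false
section Cov
variable {p : ℕ} [Fact p.Prime]

/-- dilation -/
def dil (c : ZMod p) (S : Finset (ZMod p)) : Finset (ZMod p) := S.image (AddMonoidHom.mulLeft c)

lemma mem_dil {c : ZMod p} {S : Finset (ZMod p)} {x : ZMod p} :
    x ∈ dil c S ↔ ∃ s ∈ S, c * s = x := by simp [dil]

lemma dil_add (c : ZMod p) (S T : Finset (ZMod p)) : dil c (S + T) = dil c S + dil c T :=
  Finset.image_add _

lemma dil_sub (c : ZMod p) (S T : Finset (ZMod p)) : dil c (S - T) = dil c S - dil c T := by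
  ext x
  simp only [mem_dil, Finset.mem_sub]
  constructor
  · rintro ⟨s, ⟨a, ha, b, hb, rfl⟩, rfl⟩
    exact ⟨c * a, ⟨a, ha, rfl⟩, c * b, ⟨b, hb, rfl⟩, by ring⟩
  · rintro ⟨_, ⟨a, ha, rfl⟩, _, ⟨b, hb, rfl⟩, rfl⟩
    exact ⟨a - b, ⟨a, ha, b, hb, rfl⟩, by ring⟩

lemma dil_mono (c : ZMod p) {S T : Finset (ZMod p)} (h : S ⊆ T) : dil c S ⊆ dil c T :=
  Finset.image_subset_image h

lemma card_dil_le (c : ZMod p) (S : Finset (ZMod p)) : (dil c S).card ≤ S.card :=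
  Finset.card_image_le

lemma card_dil (c : ZMod p) (hc : c ≠ 0) (S : Finset (ZMod p)) : (dil c S).card = S.card :=
  Finset.card_image_of_injective _ (fun x y h => mul_left_cancel₀ hc (by simpa using h))

lemma dil_dil (c d : ZMod p) (S : Finset (ZMod p)) : dil c (dil d S) = dil (c * d) S := by
  ext x; simp [mem_dil, mul_assoc]

/-- `S` is covered by at most `n` translates of `j (A - A)` -/
def Cov (A : Finset (ZMod p)) (n : ℝ) (j : ℕ) (S : Finset (ZMod p)) : Prop :=
  ∃ Q : Finset (ZMod p), (Q.card : ℝ) ≤ n ∧ S ⊆ Q + j • (A - A)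

variable {A : Finset (ZMod p)}

lemma Cov.mono {n : ℝ} {j : ℕ} {S T : Finset (ZMod p)} (h : Cov A n j T) (hST : S ⊆ T) :
    Cov A n j S := by
  obtain ⟨Q, hQ, h⟩ := h
  exact ⟨Q, hQ, hST.trans h⟩

lemma Cov.mono_n {n m : ℝ} {j : ℕ} {T : Finset (ZMod p)} (h : Cov A n j T) (hnm : n ≤ m) :
    Cov A m j T := by
  obtain ⟨Q, hQ, h⟩ := h
  exact ⟨Q, hQ.trans hnm, h⟩

lemma Cov.nonneg {n : ℝ} {j : ℕ} {T : Finset (ZMod p)} (h : Cov A n j T) : 0 ≤ n := by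
  obtain ⟨Q, hQ, h⟩ := h
  exact le_trans (by positivity) hQ

lemma Cov.add {n m : ℝ} {i j : ℕ} {S T : Finset (ZMod p)} (h : Cov A n i S) (h' : Cov A m j T) :
    Cov A (n * m) (i + j) (S + T) := by
  have hn := h.nonneg
  obtain ⟨Q, hQ, h⟩ := h
  obtain ⟨R, hR, h'⟩ := h'
  refine ⟨Q + R, ?_, ?_⟩
  · calc ((Q + R).card : ℝ) ≤ (Q.card * R.card : ℕ) := by exact_mod_cast Finset.card_add_le
      _ = Q.card * R.card := by push_cast; ring
      _ ≤ n * m := by gcongr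
  · refine (Finset.add_subset_add h h').trans ?_
    rw [add_nsmul, add_add_add_comm]

lemma Cov.sub {n m : ℝ} {i j : ℕ} {S T : Finset (ZMod p)} (h : Cov A n i S) (h' : Cov A m j T) :
    Cov A (n * m) (i + j) (S - T) := by
  have hn := h.nonneg
  obtain ⟨Q, hQ, h⟩ := h
  obtain ⟨R, hR, h'⟩ := h'
  refine ⟨Q - R, ?_, ?_⟩
  · calc ((Q - R).card : ℝ) ≤ (Q.card * R.card : ℕ) := by exact_mod_cast Finset.card_sub_le
      _ = Q.card * R.card := by push_cast; ring
      _ ≤ n * m := by gcongr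
  · refine (Finset.sub_subset_sub h h').trans ?_
    rw [add_nsmul, add_sub_add_comm]
    apply le_of_eq
    congr 1
    rw [sub_eq_add_neg, ← neg_nsmul, neg_sub]

lemma Cov.self (Q : Finset (ZMod p)) : Cov A Q.card 0 Q := ⟨Q, le_rfl, by simp⟩

lemma Cov.dil {n m : ℝ} {j : ℕ} {S : Finset (ZMod p)} {c : ZMod p} (h : Cov A n j S)
    (hc : Cov A m 1 (dil c A)) : Cov A (n * m ^ (2 * j)) (2 * j) (dil c S) := by
  have key : ∀ j : ℕ, Cov A (m ^ (2 * j)) (2 * j) (S5.dil c (j • (A - A))) := by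
    intro j
    induction j with
    | zero =>
      have h0 := Cov.self (A := A) ({0} : Finset (ZMod p))
      have : S5.dil c (0 • (A - A)) = {0} := by
        ext x; simp [mem_dil, eq_comm]
      rw [this]
      simpa using h0
    | succ j ih =>
      rw [succ_nsmul, dil_add, dil_sub]
      have := ih.add (hc.sub hc)
      have e1 : m ^ (2 * (j + 1)) = m ^ (2 * j) * (m * m) := by ring
      have e2 : 2 * (j + 1) = 2 * j + (1 + 1) := by ring
      rw [e1, e2]
      exact this
  have hn := h.nonneg
  obtain ⟨Q, hQ, h⟩ := h
  have h1 : Cov A n 0 (S5.dil c Q) :=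
    (Cov.self _).mono_n (le_trans (by exact_mod_cast card_dil_le c Q) hQ)
  have h2 := h1.add (key j)
  rw [zero_add] at h2
  refine h2.mono ?_
  rw [← dil_add]
  exact dil_mono c h

lemma Cov.biUnion {ι : Type*} [DecidableEq ι] {n : ℝ} {j : ℕ} (T : Finset ι)
    (S : ι → Finset (ZMod p)) (h : ∀ t ∈ T, Cov A n j (S t)) :
    Cov A (T.card * n) j (T.biUnion S) := by
  choose! Q hQ hS using h
  refine ⟨T.biUnion Q, ?_, ?_⟩
  · calc ((T.biUnion Q).card : ℝ) ≤ (∑ t ∈ T, (Q t).card : ℕ) := by exact_mod_cast Finset.card_biUnion_le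
      _ = ∑ t ∈ T, ((Q t).card : ℝ) := by push_cast; rfl
      _ ≤ ∑ t ∈ T, n := Finset.sum_le_sum hQ
      _ = T.card * n := by simp
  · rw [Finset.biUnion_subset]
    intro t ht
    refine (hS t ht).trans ?_
    exact Finset.add_subset_add_right (Finset.subset_biUnion_of_mem Q ht)

lemma nsmul_bound (hA : A.Nonempty) {M : ℝ} (hM : ((A - A).card : ℝ) ≤ M * A.card) (m n : ℕ) :
    ((m • A - n • A).card : ℝ) ≤ M ^ (m + n) * A.card := by
  have h := Finset.pluennecke_ruzsa_inequality_nsmul_sub_nsmul_sub hA A m n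
  have hpos : (0:ℝ) < A.card := by exact_mod_cast hA.card_pos
  have h' : ((m • A - n • A).card : ℝ) ≤ (((A - A).card : ℝ) / A.card) ^ (m + n) * A.card := by
    have h2 := (NNRat.cast_le (K := ℝ)).2 h
    push_cast at h2
    exact h2
  refine h'.trans ?_
  gcongr
  rwa [div_le_iff₀ hpos]

lemma Cov.card_le (hA : A.Nonempty) {M : ℝ} (hM : ((A - A).card : ℝ) ≤ M * A.card)
    {n : ℝ} {j : ℕ} {S : Finset (ZMod p)} (h : Cov A n j S) :
    (S.card : ℝ) ≤ n * (M ^ (2 * j) * A.card) := by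
  have hn := h.nonneg
  obtain ⟨Q, hQ, h⟩ := h
  calc (S.card : ℝ) ≤ ((Q + j • (A - A)).card : ℝ) := by exact_mod_cast Finset.card_le_card h
    _ ≤ (Q.card * (j • (A - A)).card : ℕ) := by exact_mod_cast Finset.card_add_le
    _ = Q.card * ((j • (A - A)).card : ℝ) := by push_cast; ring
    _ ≤ n * ((j • (A - A)).card : ℝ) := by gcongr
    _ ≤ _ := by
      rw [nsmul_sub]
      have := nsmul_bound hA hM j j
      rw [← two_mul] at this
      gcongr

/-- greedy covering -/
lemma greedy {ι κ : Type*} [DecidableEq ι] [DecidableEq κ] (T : Finset ι) (B : Finset κ)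
    (R : ι → κ → Prop) [∀ i k, Decidable (R i k)] (θ : ℝ) (hT : T.Nonempty)
    (hθ1 : θ ≤ 1)
    (h : ∀ b ∈ B, θ * T.card ≤ ((T.filter (fun t => R t b)).card : ℝ)) (n : ℕ) :
    ∃ T' ⊆ T, T'.card ≤ n ∧
      ((B.filter (fun b => ∀ t ∈ T', ¬ R t b)).card : ℝ) ≤ (1 - θ) ^ n * B.card := by
  induction n with
  | zero => exact ⟨∅, by simp, by simp, by simp⟩
  | succ n ih =>
    obtain ⟨T', hT', hc, hb⟩ := ih
    set B' := B.filter (fun b => ∀ t ∈ T', ¬ R t b) with hB'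
    have hTpos : (0:ℝ) < T.card := by exact_mod_cast hT.card_pos
    have h1 : ∑ t ∈ T, θ * (B'.card : ℝ) ≤ ∑ t ∈ T, ((B'.filter (fun b => R t b)).card : ℝ) := by
      have : ∑ t ∈ T, ((B'.filter (fun b => R t b)).card : ℝ)
          = ∑ b ∈ B', ((T.filter (fun t => R t b)).card : ℝ) := by
        exact_mod_cast Finset.sum_card_bipartiteAbove_eq_sum_card_bipartiteBelow R
      rw [this]
      calc ∑ t ∈ T, θ * (B'.card : ℝ) = ∑ b ∈ B', θ * T.card := by simp; ring
        _ ≤ _ := Finset.sum_le_sum fun b hb => h b (Finset.mem_filter.1 hb).1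
    obtain ⟨t, ht, ht2⟩ := Finset.exists_le_of_sum_le hT h1
    refine ⟨insert t T', ?_, ?_, ?_⟩
    · exact Finset.insert_subset ht hT'
    · exact (Finset.card_insert_le _ _).trans (by omega)
    · have h2 : B.filter (fun b => ∀ t' ∈ insert t T', ¬ R t' b) = B'.filter (fun b => ¬ R t b) := by
        ext b
        simp [hB']
        tauto
      rw [h2]
      have h3 := Finset.card_filter_add_card_filter_not (s := B') (fun b => R t b)
      have h4 : ((B'.filter (fun b => R t b)).card : ℝ) + ((B'.filter (fun b => ¬ R t b)).card : ℝ) = B'.card := by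
        exact_mod_cast h3
      have h5 : ((B'.filter (fun b => ¬ R t b)).card : ℝ) ≤ (1 - θ) * B'.card := by linarith
      refine h5.trans ?_
      rw [pow_succ]
      calc (1 - θ) * B'.card ≤ (1 - θ) * ((1 - θ) ^ n * B.card) := by
            apply mul_le_mul_of_nonneg_left hb; linarith
        _ = _ := by ring

end Cov
end S5


namespace S5
set_option linter.unusedSectionVars false
section SetLemma
variable {p : ℕ} [Fact p.Prime]

/-- units as field elements -/
def uv (B : Finset (ZMod p)ˣ) : Finset (ZMod p) := B.image (fun u : (ZMod p)ˣ => (u : ZMod p))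

lemma mem_uv {B : Finset (ZMod p)ˣ} {x : ZMod p} : x ∈ uv B ↔ ∃ b ∈ B, (b : ZMod p) = x := by
  simp [uv]

/-- elements of A which stay in A after multiplication by b -/
def stay (A : Finset (ZMod p)) (b : (ZMod p)ˣ) : Finset (ZMod p) :=
  A.filter (fun a => (b : ZMod p) * a ∈ A)

lemma popular (A D : Finset (ZMod p)) (H : Finset (ZMod p)ˣ) (M : ℝ) (hM : 2 ≤ M)
    (hA : A.Nonempty) (hH : H.Nonempty)
    (hD : ∀ h ∈ H, ∀ a ∈ A, (h : ZMod p) * a ∈ D) (hDc : (D.card : ℝ) ≤ M * A.card)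
    (hHH : ((H / H).card : ℝ) ≤ M * H.card) :
    ∃ B : Finset (ZMod p)ˣ, B.Nonempty ∧ (H.card : ℝ) ≤ 2 * M * B.card ∧
      ((B / B).card : ℝ) ≤ 2 * M ^ 2 * B.card ∧
      ∀ b ∈ B, (A.card : ℝ) ≤ 2 * M * (stay A b).card := by
  have hApos : (0:ℝ) < A.card := by exact_mod_cast hA.card_pos
  have hHpos : (0:ℝ) < H.card := by exact_mod_cast hH.card_pos
  set n : ZMod p → ℝ := fun x => ((H.filter (fun h => (((h⁻¹ : (ZMod p)ˣ) : ZMod p) * x ∈ A))).card : ℝ)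
    with hn
  have hn' : ∀ x, n x = ∑ h ∈ H, if (((h⁻¹ : (ZMod p)ˣ) : ZMod p) * x ∈ A) then (1:ℝ) else 0 := by
    intro x; simp only [hn, Finset.sum_boole]
  have h1 : (H.card : ℝ) * A.card ≤ ∑ x ∈ D, n x := by
    simp_rw [hn']
    rw [Finset.sum_comm]
    rw [← nsmul_eq_mul, ← Finset.sum_const]
    apply Finset.sum_le_sum
    intro h hh
    rw [Finset.sum_boole]
    have : (A.image (fun a => (h : ZMod p) * a)) ⊆
        D.filter (fun x => ((h⁻¹ : (ZMod p)ˣ) : ZMod p) * x ∈ A) := by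
      intro x hx
      rw [Finset.mem_image] at hx
      obtain ⟨a, ha, rfl⟩ := hx
      rw [Finset.mem_filter]
      refine ⟨hD h hh a ha, ?_⟩
      rw [Units.inv_mul_cancel_left]
      exact ha
    have h2 := Finset.card_le_card this
    rw [Finset.card_image_of_injective _ (mul_right_injective₀ h.ne_zero)] at h2
    exact_mod_cast h2
  have h2 : ∑ x ∈ D, n x ^ 2 ≤ ∑ h' ∈ H, ∑ h ∈ H, ((stay A (h / h')).card : ℝ) := by
    have : ∀ x ∈ D, n x ^ 2 = ∑ h' ∈ H, ∑ h ∈ H,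
        if (((h⁻¹ : (ZMod p)ˣ) : ZMod p) * x ∈ A ∧ ((h'⁻¹ : (ZMod p)ˣ) : ZMod p) * x ∈ A) then (1:ℝ) else 0 := by
      intro x _
      rw [sq, hn', Finset.sum_mul_sum, Finset.sum_comm]
      refine Finset.sum_congr rfl fun h' _ => Finset.sum_congr rfl fun h _ => ?_
      by_cases h1 : ((h⁻¹ : (ZMod p)ˣ) : ZMod p) * x ∈ A <;>
        by_cases h2 : ((h'⁻¹ : (ZMod p)ˣ) : ZMod p) * x ∈ A <;>
        simp only [h1, h2, if_true, if_false, and_true, and_false, true_and, mul_zero, mul_one, zero_mul]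
    rw [Finset.sum_congr rfl this, Finset.sum_comm]
    apply Finset.sum_le_sum
    intro h' _
    rw [Finset.sum_comm]
    apply Finset.sum_le_sum
    intro h _
    rw [Finset.sum_boole]
    have := Finset.card_le_card_of_injOn (s := D.filter (fun x => ((h⁻¹ : (ZMod p)ˣ) : ZMod p) * x ∈ A ∧ ((h'⁻¹ : (ZMod p)ˣ) : ZMod p) * x ∈ A))
      (t := stay A (h / h')) (fun x => ((h⁻¹ : (ZMod p)ˣ) : ZMod p) * x) (by
        intro x hx
        simp only [Finset.coe_filter, Set.mem_ofPred_eq] at hx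
        simp only [stay, Finset.coe_filter, Set.mem_ofPred_eq]
        refine ⟨hx.2.1, ?_⟩
        convert hx.2.2 using 1
        rw [← mul_assoc, ← Units.val_mul]
        congr 2
        rw [div_mul_eq_mul_div, mul_inv_cancel, one_div]) (by
        intro x _ y _ hxy
        exact mul_right_injective₀ (h⁻¹).ne_zero hxy)
    exact_mod_cast this
  have h3 : (∑ x ∈ D, n x) ^ 2 ≤ D.card * ∑ x ∈ D, n x ^ 2 := sq_sum_le_card_mul_sum_sq
  have h4 : (H.card : ℝ) ^ 2 * A.card ^ 2 ≤ (M * A.card) * ∑ h' ∈ H, ∑ h ∈ H, ((stay A (h / h')).card : ℝ) := by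
    calc (H.card : ℝ) ^ 2 * A.card ^ 2 = (H.card * A.card) ^ 2 := by ring
      _ ≤ (∑ x ∈ D, n x) ^ 2 := by gcongr
      _ ≤ D.card * ∑ x ∈ D, n x ^ 2 := h3
      _ ≤ (M * A.card) * ∑ h' ∈ H, ∑ h ∈ H, ((stay A (h / h')).card : ℝ) := by
        apply mul_le_mul hDc h2 (Finset.sum_nonneg fun _ _ => sq_nonneg _) (by positivity)
  have h5 : ∑ h' ∈ H, (H.card : ℝ) * A.card / M ≤ ∑ h' ∈ H, ∑ h ∈ H, ((stay A (h / h')).card : ℝ) := by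
    rw [Finset.sum_const, nsmul_eq_mul]
    have : (H.card : ℝ) ^ 2 * A.card ≤ M * ∑ h' ∈ H, ∑ h ∈ H, ((stay A (h / h')).card : ℝ) := by
      apply le_of_mul_le_mul_right _ hApos
      linarith
    rw [← mul_div_assoc, div_le_iff₀ (by linarith)]
    linarith
  obtain ⟨h0, hh0, h6⟩ := Finset.exists_le_of_sum_le hH h5
  set H1 := H.filter (fun h => (A.card : ℝ) ≤ 2 * M * (stay A (h / h0)).card) with hH1
  have h7 : (H.card : ℝ) ≤ 2 * M * H1.card := by
    have e : ∑ h ∈ H, ((stay A (h / h0)).card : ℝ) ≤ ∑ h ∈ H, ((A.card : ℝ) / (2 * M) +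
        (if (A.card : ℝ) ≤ 2 * M * (stay A (h / h0)).card then (1:ℝ) else 0) * A.card) := by
      apply Finset.sum_le_sum
      intro h _
      split_ifs with hc
      · have : ((stay A (h / h0)).card : ℝ) ≤ A.card := by
          exact_mod_cast Finset.card_le_card (Finset.filter_subset _ _)
        have h' : (0:ℝ) ≤ A.card / (2 * M) := by positivity
        linarith
      · push Not at hc
        rw [zero_mul, add_zero, le_div_iff₀ (by linarith)]
        linarith
    rw [Finset.sum_add_distrib, ← Finset.sum_mul, Finset.sum_boole, Finset.sum_const, nsmul_eq_mul, ← hH1] at e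
    have e2 : (H.card : ℝ) * A.card / M ≤ H.card * (A.card / (2 * M)) + H1.card * A.card := h6.trans e
    have e3 : (H.card : ℝ) * (A.card / (2 * M)) = H.card * A.card / M / 2 := by field_simp
    rw [e3] at e2
    have e4 : (H.card : ℝ) * A.card / M ≤ 2 * H1.card * A.card := by linarith
    rw [div_le_iff₀ (by linarith)] at e4
    apply le_of_mul_le_mul_right _ hApos
    linarith
  refine ⟨H1.image (fun h => h / h0), ?_, ?_, ?_, ?_⟩
  · rw [Finset.image_nonempty, ← Finset.card_pos]
    by_contra hc
    have : H1.card = 0 := by omega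
    rw [this] at h7
    simp at h7
    exact absurd h7 hH.ne_empty
  · rw [Finset.card_image_of_injective _ (fun x y hxy => by simpa using hxy)]
    exact h7
  · have hsub : (H1.image (fun h => h / h0)) / (H1.image (fun h => h / h0)) ⊆ H / H := by
      intro x hx
      rw [Finset.mem_div] at hx
      obtain ⟨y, hy, z, hz, rfl⟩ := hx
      rw [Finset.mem_image] at hy hz
      obtain ⟨y, hy, rfl⟩ := hy
      obtain ⟨z, hz, rfl⟩ := hz
      rw [div_div_div_cancel_right]
      exact Finset.div_mem_div (Finset.mem_filter.1 hy).1 (Finset.mem_filter.1 hz).1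
    rw [Finset.card_image_of_injective _ (fun x y hxy => by simpa using hxy)]
    calc (((H1.image (fun h => h / h0)) / (H1.image (fun h => h / h0))).card : ℝ) ≤ (H / H).card := by
          exact_mod_cast Finset.card_le_card hsub
      _ ≤ M * H.card := hHH
      _ ≤ M * (2 * M * H1.card) := by gcongr
      _ = _ := by ring
  · intro b hb
    rw [Finset.mem_image] at hb
    obtain ⟨h, hh, rfl⟩ := hb
    exact (Finset.mem_filter.1 hh).2

lemma cov_unit {A : Finset (ZMod p)} {M : ℝ} (hM : 2 ≤ M) (hA : A.Nonempty)
    (hAA : ((A - A).card : ℝ) ≤ M * A.card) {b : (ZMod p)ˣ}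
    (hb : (A.card : ℝ) ≤ 2 * M * (stay A b).card) :
    Cov A (M ^ 4) 1 (dil (b : ZMod p) A) ∧ Cov A (M ^ 4) 1 (dil ((b⁻¹ : (ZMod p)ˣ) : ZMod p) A) := by
  have hApos : (0:ℝ) < A.card := by exact_mod_cast hA.card_pos
  have hPpos : (0:ℝ) < (stay A b).card := by
    by_contra hc
    have : ((stay A b).card : ℝ) = 0 := le_antisymm (not_lt.1 hc) (by positivity)
    rw [this] at hb; linarith
  have hP : (stay A b).Nonempty := by
    rw [← Finset.card_pos]; exact_mod_cast hPpos
  have hPA : stay A b ⊆ A := Finset.filter_subset _ _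
  have hbP : dil (b : ZMod p) (stay A b) ⊆ A := by
    intro x hx
    rw [mem_dil] at hx
    obtain ⟨s, hs, rfl⟩ := hx
    exact (Finset.mem_filter.1 hs).2
  have hb0 : (b : ZMod p) ≠ 0 := b.ne_zero
  have hcP : (dil (b : ZMod p) (stay A b)).card = (stay A b).card := card_dil _ hb0 _
  have hbPn : (dil (b : ZMod p) (stay A b)).Nonempty := by
    rw [← Finset.card_pos, hcP]; exact hP.card_pos
  have h2 : ((A + A).card : ℝ) ≤ M ^ 4 * (stay A b).card := by
    have := nsmul_bound hA hAA 2 0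
    rw [two_nsmul, zero_nsmul, sub_zero] at this
    calc ((A + A).card : ℝ) ≤ M ^ (2 + 0) * A.card := this
      _ ≤ M ^ (2 + 0) * (2 * M * (stay A b).card) := by gcongr
      _ = (2 * M ^ 3) * (stay A b).card := by ring
      _ ≤ (M * M ^ 3) * (stay A b).card := by gcongr
      _ = _ := by ring
  constructor
  · have h3 : ((dil (b : ZMod p) A + dil (b : ZMod p) (stay A b)).card : ℝ)
        ≤ M ^ 4 * (dil (b : ZMod p) (stay A b)).card := by
      rw [hcP, ← dil_add, card_dil _ hb0]
      refine le_trans ?_ h2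
      exact_mod_cast Finset.card_le_card (Finset.add_subset_add_left hPA)
    obtain ⟨Q, -, hQ, hsub⟩ := Finset.ruzsa_covering_add hbPn h3
    refine ⟨Q, hQ, hsub.trans ?_⟩
    rw [one_nsmul]
    exact Finset.add_subset_add_left (Finset.sub_subset_sub hbP hbP)
  · have h3 : ((A + dil (b : ZMod p) (stay A b)).card : ℝ)
        ≤ M ^ 4 * (dil (b : ZMod p) (stay A b)).card := by
      rw [hcP]
      refine le_trans ?_ h2
      exact_mod_cast Finset.card_le_card (Finset.add_subset_add_left hbP)
    obtain ⟨Q, -, hQ, hsub⟩ := Finset.ruzsa_covering_add hbPn h3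
    refine ⟨dil ((b⁻¹ : (ZMod p)ˣ) : ZMod p) Q, le_trans (by exact_mod_cast card_dil_le _ Q) hQ, ?_⟩
    refine (dil_mono _ hsub).trans ?_
    rw [dil_add, dil_sub, dil_dil, one_nsmul]
    apply Finset.add_subset_add_left
    have : dil (((b⁻¹ : (ZMod p)ˣ) : ZMod p) * (b : ZMod p)) (stay A b) ⊆ A := by
      intro x hx
      rw [mem_dil] at hx
      obtain ⟨s, hs, rfl⟩ := hx
      rw [Units.inv_mul, one_mul]
      exact hPA hs
    exact Finset.sub_subset_sub this this

lemma cov_quot {A : Finset (ZMod p)} {M : ℝ} (hM : 2 ≤ M) (hA : A.Nonempty)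
    (hAA : ((A - A).card : ℝ) ≤ M * A.card) {b c : (ZMod p)ˣ}
    (hb : (A.card : ℝ) ≤ 2 * M * (stay A b).card)
    (hc : (A.card : ℝ) ≤ 2 * M * (stay A c).card) :
    Cov A (M ^ 12) 2 (dil ((b / c : (ZMod p)ˣ) : ZMod p) A) := by
  have h1 := (cov_unit hM hA hAA hb).1
  have h2 := (cov_unit hM hA hAA hc).2
  have h3 := h2.dil h1
  rw [dil_dil] at h3
  have e : M ^ 4 * (M ^ 4) ^ (2 * 1) = M ^ 12 := by ring
  rw [e] at h3
  rw [div_eq_mul_inv, Units.val_mul]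
  exact h3

/-- popular x -/
noncomputable def popW (A : Finset (ZMod p)) (B : Finset (ZMod p)ˣ) (M : ℝ) : Finset (ZMod p) := by
  classical
  exact A.filter (fun x => (B.card : ℝ) ≤ 4 * M * (B.filter (fun b : (ZMod p)ˣ => (b : ZMod p) * x ∈ A)).card)

lemma mem_popW {A : Finset (ZMod p)} {B : Finset (ZMod p)ˣ} {M : ℝ} {x : ZMod p} :
    x ∈ popW A B M ↔ x ∈ A ∧ (B.card : ℝ) ≤ 4 * M * (B.filter (fun b : (ZMod p)ˣ => (b : ZMod p) * x ∈ A)).card := by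
  simp [popW]

lemma popW_card {A : Finset (ZMod p)} {B : Finset (ZMod p)ˣ} {M : ℝ} (hM : 2 ≤ M)
    (hB : B.Nonempty) (h : ∀ b ∈ B, (A.card : ℝ) ≤ 2 * M * (stay A b).card) :
    (A.card : ℝ) ≤ 4 * M * (popW A B M).card := by
  classical
  have hBpos : (0:ℝ) < B.card := by exact_mod_cast hB.card_pos
  have h1 : (B.card : ℝ) * (A.card / (2 * M)) ≤ ∑ b ∈ B, ((stay A b).card : ℝ) := by
    rw [← nsmul_eq_mul, ← Finset.sum_const]
    apply Finset.sum_le_sum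
    intro b hb
    rw [div_le_iff₀ (by linarith)]
    linarith [h b hb]
  have h2 : ∑ b ∈ B, ((stay A b).card : ℝ) = ∑ x ∈ A, ((B.filter (fun b : (ZMod p)ˣ => (b : ZMod p) * x ∈ A)).card : ℝ) := by
    exact_mod_cast Finset.sum_card_bipartiteAbove_eq_sum_card_bipartiteBelow (fun (b : (ZMod p)ˣ) (x : ZMod p) => (b : ZMod p) * x ∈ A)
  have h3 : ∑ x ∈ A, ((B.filter (fun b : (ZMod p)ˣ => (b : ZMod p) * x ∈ A)).card : ℝ) ≤
      ∑ x ∈ A, ((B.card : ℝ) / (4 * M) + (if x ∈ popW A B M then (1:ℝ) else 0) * B.card) := by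
    apply Finset.sum_le_sum
    intro x hx
    split_ifs with hc
    · have : ((B.filter (fun b : (ZMod p)ˣ => (b : ZMod p) * x ∈ A)).card : ℝ) ≤ B.card := by
        exact_mod_cast Finset.card_le_card (Finset.filter_subset _ _)
      have h' : (0:ℝ) ≤ B.card / (4 * M) := by positivity
      linarith
    · rw [mem_popW] at hc
      push Not at hc
      have := hc hx
      rw [zero_mul, add_zero, le_div_iff₀ (by linarith)]
      linarith
  rw [Finset.sum_add_distrib, ← Finset.sum_mul, Finset.sum_boole, Finset.sum_const, nsmul_eq_mul] at h3
  have h4 : A.filter (fun x => x ∈ popW A B M) = popW A B M := by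
    ext x; simp [mem_popW]
  rw [h4] at h3
  have h5 := h1.trans (h2.le.trans h3)
  have e1 : (B.card : ℝ) * (A.card / (2 * M)) = 2 * (A.card * (B.card / (4 * M))) := by
    field_simp; ring
  rw [e1] at h5
  have h6 : (A.card : ℝ) * (B.card / (4 * M)) ≤ (popW A B M).card * B.card := by linarith
  rw [← mul_div_assoc, div_le_iff₀ (by linarith)] at h6
  apply le_of_mul_le_mul_right _ hBpos
  linarith

lemma cov_pop {A : Finset (ZMod p)} {B : Finset (ZMod p)ˣ} {M : ℝ} (hM : 2 ≤ M) (hA : A.Nonempty)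
    (hAA : ((A - A).card : ℝ) ≤ M * A.card) (hB : B.Nonempty)
    (hBB : ((B / B).card : ℝ) ≤ 2 * M ^ 2 * B.card)
    (h : ∀ b ∈ B, (A.card : ℝ) ≤ 2 * M * (stay A b).card) {x : ZMod p} (hx : x ∈ popW A B M) :
    ∃ B' ⊆ B, ((B \ B').card : ℝ) ≤ B.card / 8 ∧ Cov A (M ^ 20) 2 (dil x (uv B')) := by
  classical
  set Bx := B.filter (fun b : (ZMod p)ˣ => (b : ZMod p) * x ∈ A) with hBx
  have hxc := (mem_popW.1 hx).2
  rw [← hBx] at hxc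
  have hBpos : (0:ℝ) < B.card := by exact_mod_cast hB.card_pos
  set θ : ℝ := 1 / (8 * M ^ 3) with hθ
  have hM3 : (8:ℝ) ≤ M ^ 3 := by
    calc (8:ℝ) = 2 ^ 3 := by norm_num
      _ ≤ M ^ 3 := by gcongr
  have hθ1 : θ ≤ 1 := by
    rw [hθ, div_le_one (by positivity)]; linarith
  have hθ0 : 0 < θ := by positivity
  have hT : (B / B).Nonempty := hB.div hB
  have hg := greedy (B / B) B (fun t b => b / t ∈ Bx) θ hT hθ1 (by
    intro b hb
    have e : (Bx.image (fun c => b / c)) ⊆ (B / B).filter (fun t => b / t ∈ Bx) := by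
      intro t ht
      rw [Finset.mem_image] at ht
      obtain ⟨c, hc, rfl⟩ := ht
      rw [Finset.mem_filter]
      refine ⟨Finset.div_mem_div hb (Finset.mem_filter.1 hc).1, ?_⟩
      simpa using hc
    have e2 := Finset.card_le_card e
    rw [Finset.card_image_of_injective _ (fun x y hxy => by simpa using hxy)] at e2
    have e3 : (Bx.card : ℝ) ≤ ((B / B).filter (fun t => b / t ∈ Bx)).card := by exact_mod_cast e2
    refine le_trans ?_ e3
    have e4 : ((B / B).card : ℝ) ≤ 8 * M ^ 3 * Bx.card := by
      calc ((B / B).card : ℝ) ≤ 2 * M ^ 2 * B.card := hBB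
        _ ≤ 2 * M ^ 2 * (4 * M * Bx.card) := by gcongr
        _ = _ := by ring
    rw [hθ, div_mul_eq_mul_div, one_mul, div_le_iff₀ (by positivity)]
    linarith) ⌈24 * M ^ 3⌉₊
  obtain ⟨T, hTs, hTc, hb⟩ := hg
  have hn0 : (24 * M ^ 3 : ℝ) ≤ (⌈24 * M ^ 3⌉₊ : ℝ) := Nat.le_ceil _
  have hn1 : (⌈24 * M ^ 3⌉₊ : ℝ) ≤ M ^ 8 := by
    have := (Nat.ceil_lt_add_one (show (0:ℝ) ≤ 24 * M ^ 3 by positivity)).le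
    have e : M ^ 8 = M ^ 3 * M ^ 5 := by ring
    have e5 : (32:ℝ) ≤ M ^ 5 := by
      calc (32:ℝ) = 2 ^ 5 := by norm_num
        _ ≤ M ^ 5 := by gcongr
    rw [e]
    nlinarith
  have hpow : (1 - θ) ^ ⌈24 * M ^ 3⌉₊ ≤ 1 / 8 := by
    have h1 : (1 - θ) ≤ Real.exp (-θ) := by
      have := Real.add_one_le_exp (-θ); linarith
    calc (1 - θ) ^ ⌈24 * M ^ 3⌉₊ ≤ (Real.exp (-θ)) ^ ⌈24 * M ^ 3⌉₊ := by
          apply pow_le_pow_left₀ (by linarith) h1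
      _ = Real.exp ((⌈24 * M ^ 3⌉₊ : ℝ) * (-θ)) := by rw [Real.exp_nat_mul]
      _ ≤ Real.exp (-3) := by
        apply Real.exp_le_exp.2
        have : 24 * M ^ 3 * θ = 3 := by rw [hθ]; field_simp; norm_num
        nlinarith
      _ ≤ 1 / 8 := by
        rw [Real.exp_neg, inv_eq_one_div]
        apply one_div_le_one_div_of_le (by norm_num)
        have h2 : (2:ℝ) ≤ Real.exp 1 := by
          have := Real.add_one_le_exp (1:ℝ); linarith
        calc (8:ℝ) = 2 ^ 3 := by norm_num
          _ ≤ (Real.exp 1) ^ 3 := by gcongr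
          _ = Real.exp 3 := by rw [← Real.exp_nat_mul]; norm_num
  refine ⟨B.filter (fun b => ∃ t ∈ T, b / t ∈ Bx), Finset.filter_subset _ _, ?_, ?_⟩
  · have : B \ (B.filter (fun b => ∃ t ∈ T, b / t ∈ Bx)) = B.filter (fun b => ∀ t ∈ T, ¬ (b / t ∈ Bx)) := by
      ext b
      simp only [Finset.mem_sdiff, Finset.mem_filter]
      push Not
      tauto
    rw [this]
    refine le_trans (le_of_eq (by congr!)) (hb.trans ?_)
    calc (1 - θ) ^ ⌈24 * M ^ 3⌉₊ * (B.card : ℝ) ≤ 1 / 8 * B.card := by gcongr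
      _ = _ := by ring
  · have hcov := Cov.biUnion (A := A) (n := M ^ 12) (j := 2) T (fun t : (ZMod p)ˣ => dil (t : ZMod p) A) (by
      intro t ht
      have := hTs ht
      rw [Finset.mem_div] at this
      obtain ⟨b, hb, c, hc, rfl⟩ := this
      exact cov_quot hM hA hAA (h b hb) (h c hc))
    refine (hcov.mono_n ?_).mono ?_
    · calc (T.card : ℝ) * M ^ 12 ≤ M ^ 8 * M ^ 12 := by
            gcongr
            exact le_trans (by exact_mod_cast hTc) hn1
        _ = M ^ 20 := by ring
    · intro y hy
      rw [mem_dil] at hy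
      obtain ⟨s, hs, rfl⟩ := hy
      rw [mem_uv] at hs
      obtain ⟨b, hb, rfl⟩ := hs
      obtain ⟨hb, t, ht, hbt⟩ := Finset.mem_filter.1 hb
      rw [Finset.mem_biUnion]
      refine ⟨t, ht, ?_⟩
      rw [mem_dil]
      refine ⟨((b / t : (ZMod p)ˣ) : ZMod p) * x, (Finset.mem_filter.1 hbt).2, ?_⟩
      rw [← mul_assoc, ← Units.val_mul, mul_div_cancel, mul_comm]

end SetLemma
end S5


namespace S5
set_option linter.unusedSectionVars false

lemma card_sq_le_image {ι κ : Type*} [DecidableEq ι] [DecidableEq κ] (S : Finset ι) (φ : ι → κ) :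
    (S.card : ℝ) ^ 2 ≤ (S.image φ).card *
      (((S ×ˢ S).filter (fun q => φ q.1 = φ q.2)).card : ℝ) := by
  have h1 : (S.card : ℝ) = ∑ y ∈ S.image φ, ((S.filter (fun s => φ s = y)).card : ℝ) := by
    exact_mod_cast Finset.card_eq_sum_card_image φ S
  have h2 : (((S ×ˢ S).filter (fun q => φ q.1 = φ q.2)).card : ℝ) =
      ∑ y ∈ S.image φ, ((S.filter (fun s => φ s = y)).card : ℝ) ^ 2 := by
    have := Finset.card_eq_sum_card_fiberwise (f := fun q : ι × ι => φ q.1)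
      (s := (S ×ˢ S).filter (fun q => φ q.1 = φ q.2)) (t := S.image φ) (by
        intro q hq
        simp only [Finset.coe_filter, Finset.mem_product, Set.mem_ofPred_eq] at hq
        simp only [Finset.coe_image, Set.mem_image, Finset.mem_coe]
        exact ⟨q.1, hq.1.1, rfl⟩)
    rw [this]
    push_cast
    refine Finset.sum_congr rfl fun y _ => ?_
    have e : ((S ×ˢ S).filter (fun q => φ q.1 = φ q.2)).filter (fun q => φ q.1 = y)
        = (S.filter (fun s => φ s = y)) ×ˢ (S.filter (fun s => φ s = y)) := by
      ext q
      simp only [Finset.mem_filter, Finset.mem_product]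
      constructor
      · rintro ⟨⟨⟨a, b⟩, c⟩, d⟩
        exact ⟨⟨a, d⟩, b, c ▸ d⟩
      · rintro ⟨⟨a, b⟩, c, d⟩
        exact ⟨⟨⟨a, c⟩, b.trans d.symm⟩, b⟩
    rw [e, Finset.card_product]
    push_cast
    ring
  rw [h2, h1]
  exact sq_sum_le_card_mul_sum_sq

section SetLemma2
variable {p : ℕ} [Fact p.Prime]

/-- collision count -/
def coll (W : Finset (ZMod p)) (B : Finset (ZMod p)ˣ) (ξ : ZMod p) :
    Finset ((ZMod p × (ZMod p)ˣ) × (ZMod p × (ZMod p)ˣ)) :=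
  ((W ×ˢ B) ×ˢ (W ×ˢ B)).filter (fun q => q.1.1 + ξ * (q.1.2 : ZMod p) = q.2.1 + ξ * (q.2.2 : ZMod p))

lemma coll_diff {W : Finset (ZMod p)} {B : Finset (ZMod p)ˣ} {ξ : ZMod p}
    {q : (ZMod p × (ZMod p)ˣ) × (ZMod p × (ZMod p)ˣ)} (hq : q ∈ coll W B ξ) (hne : q.1 ≠ q.2) :
    ((q.2.2 : ZMod p) ≠ q.1.2) ∧ ξ * ((q.2.2 : ZMod p) - q.1.2) = q.1.1 - q.2.1 := by
  rw [coll, Finset.mem_filter] at hq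
  have h := hq.2
  refine ⟨fun hc => hne ?_, by linear_combination -h⟩
  rw [hc] at h
  have h1 : q.1.1 = q.2.1 := by linear_combination h
  exact Prod.ext h1 (Units.ext hc.symm)

lemma coll_not_mem {W : Finset (ZMod p)} {B : Finset (ZMod p)ˣ} {ξ : ZMod p}
    (h : ∀ q ∈ coll W B ξ, q.1 = q.2) : ((coll W B ξ).card : ℝ) ≤ W.card * B.card := by
  have : (coll W B ξ).card ≤ (W ×ˢ B).card := by
    apply Finset.card_le_card_of_injOn (fun q => q.1)
    · intro q hq
      have := (Finset.mem_filter.1 (Finset.mem_coe.1 hq)).1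
      rw [Finset.mem_product] at this
      exact this.1
    · intro q hq q' hq' he
      exact Prod.ext he (by rw [← h q hq, ← h q' hq']; exact he)
  rw [Finset.card_product] at this
  exact_mod_cast this

lemma coll_sum (W : Finset (ZMod p)) (B : Finset (ZMod p)ˣ) :
    ∑ ξ : ZMod p, ((coll W B ξ).card : ℝ) ≤ p * (W.card * B.card) + (W.card * B.card) ^ 2 := by
  have h1 : ∀ ξ : ZMod p, ((coll W B ξ).card : ℝ) = ∑ q ∈ (W ×ˢ B) ×ˢ (W ×ˢ B),
      if q.1.1 + ξ * (q.1.2 : ZMod p) = q.2.1 + ξ * (q.2.2 : ZMod p) then (1:ℝ) else 0 := by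
    intro ξ
    rw [Finset.sum_boole]; rfl
  simp_rw [h1]
  rw [Finset.sum_comm]
  have h2 : ∀ q ∈ (W ×ˢ B) ×ˢ (W ×ˢ B), (∑ ξ : ZMod p,
      if q.1.1 + ξ * (q.1.2 : ZMod p) = q.2.1 + ξ * (q.2.2 : ZMod p) then (1:ℝ) else 0) ≤
      (if q.1 = q.2 then (p:ℝ) else 0) + 1 := by
    intro q hq
    rw [Finset.sum_boole]
    split_ifs with hc
    · have : (Finset.univ.filter (fun ξ => q.1.1 + ξ * (q.1.2 : ZMod p) = q.2.1 + ξ * (q.2.2 : ZMod p))).card ≤ p := by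
        calc _ ≤ (Finset.univ : Finset (ZMod p)).card := Finset.card_le_card (Finset.filter_subset _ _)
          _ = p := by rw [Finset.card_univ, ZMod.card]
      have : ((Finset.univ.filter (fun ξ => q.1.1 + ξ * (q.1.2 : ZMod p) = q.2.1 + ξ * (q.2.2 : ZMod p))).card : ℝ) ≤ p := by
        exact_mod_cast this
      linarith
    · have : (Finset.univ.filter (fun ξ => q.1.1 + ξ * (q.1.2 : ZMod p) = q.2.1 + ξ * (q.2.2 : ZMod p))).card ≤ 1 := by
        rw [Finset.card_le_one]
        intro a ha b hb
        have ha' : q ∈ coll W B a := Finset.mem_filter.2 ⟨hq, (Finset.mem_filter.1 ha).2⟩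
        have hb' : q ∈ coll W B b := Finset.mem_filter.2 ⟨hq, (Finset.mem_filter.1 hb).2⟩
        obtain ⟨h3, h4⟩ := coll_diff ha' hc
        obtain ⟨_, h5⟩ := coll_diff hb' hc
        exact mul_right_cancel₀ (sub_ne_zero.2 h3) (h4.trans h5.symm)
      rw [zero_add]
      exact_mod_cast this
  refine (Finset.sum_le_sum h2).trans ?_
  rw [Finset.sum_add_distrib]
  apply add_le_add
  · rw [Finset.sum_product]
    have : ∀ x ∈ W ×ˢ B, ∑ y ∈ W ×ˢ B, (if (x, y).1 = (x, y).2 then (p:ℝ) else 0) = p := by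
      intro x hx
      rw [Finset.sum_ite_eq]
      simp only [hx, if_true]
    rw [Finset.sum_congr rfl this, Finset.sum_const, Finset.card_product, nsmul_eq_mul]
    push_cast
    linarith
  · rw [Finset.sum_const, Finset.card_product, Finset.card_product, nsmul_eq_mul]
    push_cast
    apply le_of_eq; ring

lemma good_exists (W : Finset (ZMod p)) (B : Finset (ZMod p)ˣ) (w0 : ZMod p) (hw : w0 ≠ 0)
    (hW : w0 ∈ W) {b1 b2 : (ZMod p)ˣ} (hb1 : b1 ∈ B) (hb2 : b2 ∈ B) (hb : b1 ≠ b2) :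
    ∃ ξ : ZMod p, (∃ b3 ∈ B, ∃ b4 ∈ B, b3 ≠ b4 ∧ ∃ x ∈ W, ∃ y ∈ W,
      ξ * ((b3 : ZMod p) - (b4 : ZMod p)) = x - y) ∧
      ((coll W B (ξ + w0)).card : ℝ) ≤ W.card * B.card + (W.card * B.card) ^ 2 / p := by
  by_contra hcon
  push Not at hcon
  have hp : (0:ℝ) < p := by exact_mod_cast (Fact.out : p.Prime).pos
  have hall : ∀ k : ℕ, (W.card * B.card + (W.card * B.card) ^ 2 / p : ℝ) < (coll W B (((k:ℕ) : ZMod p) * w0 + w0)).card := by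
    intro k
    induction k with
    | zero =>
      apply hcon
      exact ⟨b1, hb1, b2, hb2, hb, w0, hW, w0, hW, by simp⟩
    | succ k ih =>
      apply hcon
      by_contra hR
      push Not at hR
      have e : ((k + 1 : ℕ) : ZMod p) * w0 = (k : ZMod p) * w0 + w0 := by push_cast; ring
      have := coll_not_mem (W := W) (B := B) (ξ := ((k + 1 : ℕ) : ZMod p) * w0) (by
        intro q hq
        by_contra hne
        obtain ⟨h1, h2⟩ := coll_diff hq hne
        have hm := (Finset.mem_filter.1 hq).1
        rw [Finset.mem_product, Finset.mem_product, Finset.mem_product] at hm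
        exact hR _ hm.2.2 _ hm.1.2 (fun h => h1 (by rw [h])) _ hm.1.1 _ hm.2.1 h2)
      rw [e] at this
      have h0 : (0:ℝ) ≤ ((W.card : ℝ) * B.card) ^ 2 / p := by positivity
      linarith
  have hall2 : ∀ ξ : ZMod p, (W.card * B.card + (W.card * B.card) ^ 2 / p : ℝ) < (coll W B ξ).card := by
    intro ξ
    have := hall ((ξ - w0) / w0).val
    rw [ZMod.natCast_val, ZMod.cast_id', id] at this
    have e : (ξ - w0) / w0 * w0 + w0 = ξ := by field_simp; ring
    rwa [e] at this
  have h1 : ∑ ξ : ZMod p, (W.card * B.card + (W.card * B.card) ^ 2 / p : ℝ) < ∑ ξ : ZMod p, ((coll W B ξ).card : ℝ) :=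
    Finset.sum_lt_sum_of_nonempty ⟨0, Finset.mem_univ _⟩ (fun ξ _ => hall2 ξ)
  rw [Finset.sum_const, Finset.card_univ, ZMod.card, nsmul_eq_mul] at h1
  have h2 := h1.trans_le (coll_sum W B)
  have e : (p:ℝ) * (W.card * B.card + (W.card * B.card) ^ 2 / p) = p * (W.card * B.card) + (W.card * B.card) ^ 2 := by
    field_simp
  rw [e] at h2
  exact lt_irrefl _ h2

lemma image_lower {W : Finset (ZMod p)} {B B' : Finset (ZMod p)ˣ} {ξ : ZMod p} (hB : B' ⊆ B)
    (hWpos : 0 < W.card) (hBpos : 0 < B.card)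
    (hc : (B.card : ℝ) ≤ 2 * B'.card)
    (hg : ((coll W B ξ).card : ℝ) ≤ W.card * B.card + (W.card * B.card) ^ 2 / p) :
    (W.card * B.card : ℝ) ≤ 8 * (W + dil ξ (uv B')).card ∨
      (p : ℝ) ≤ 8 * (W + dil ξ (uv B')).card := by
  have hp : (0:ℝ) < p := by exact_mod_cast (Fact.out : p.Prime).pos
  have h1 := card_sq_le_image (W ×ˢ B') (fun q => q.1 + ξ * (q.2 : ZMod p))
  have h2 : (W ×ˢ B').image (fun q => q.1 + ξ * (q.2 : ZMod p)) ⊆ W + dil ξ (uv B') := by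
    intro x hx
    rw [Finset.mem_image] at hx
    obtain ⟨q, hq, rfl⟩ := hx
    rw [Finset.mem_product] at hq
    exact Finset.add_mem_add hq.1 (mem_dil.2 ⟨_, mem_uv.2 ⟨_, hq.2, rfl⟩, rfl⟩)
  have h2' : (((W ×ˢ B').image (fun q => q.1 + ξ * (q.2 : ZMod p))).card : ℝ) ≤ (W + dil ξ (uv B')).card := by
    exact_mod_cast Finset.card_le_card h2
  have h3 : (((W ×ˢ B') ×ˢ (W ×ˢ B')).filter (fun q => q.1.1 + ξ * (q.1.2 : ZMod p) = q.2.1 + ξ * (q.2.2 : ZMod p))) ⊆ coll W B ξ := by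
    apply Finset.filter_subset_filter
    exact Finset.product_subset_product (Finset.product_subset_product_right hB) (Finset.product_subset_product_right hB)
  have h3' : ((((W ×ˢ B') ×ˢ (W ×ˢ B')).filter (fun q => q.1.1 + ξ * (q.1.2 : ZMod p) = q.2.1 + ξ * (q.2.2 : ZMod p))).card : ℝ) ≤ (coll W B ξ).card := by
    exact_mod_cast Finset.card_le_card h3
  set S : ℝ := ((W + dil ξ (uv B')).card : ℝ) with hS
  have hS0 : 0 ≤ S := by positivity
  set m : ℝ := W.card * B.card with hm
  have hm0 : 0 < m := by positivity
  have h4 : m ^ 2 / 4 ≤ S * (m + m ^ 2 / p) := by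
    have e : (((W ×ˢ B').card : ℕ) : ℝ) = W.card * B'.card := by rw [Finset.card_product]; push_cast; ring
    rw [e] at h1
    calc m ^ 2 / 4 = (W.card * (B.card / 2)) ^ 2 := by rw [hm]; ring
      _ ≤ (W.card * B'.card : ℝ) ^ 2 := by gcongr; linarith
      _ ≤ _ := h1
      _ ≤ S * (m + m ^ 2 / p) := by
        apply mul_le_mul h2' (h3'.trans hg) (by positivity) hS0
  have h5 : m ≤ S * 4 * (1 + m / p) := by
    have e : S * (m + m ^ 2 / p) = m * (S * (1 + m / p)) := by ring
    rw [e] at h4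
    have : m * (m / 4) ≤ m * (S * (1 + m / p)) := by linarith [show m * (m/4) = m^2/4 by ring]
    have := le_of_mul_le_mul_left this hm0
    linarith
  by_cases hmp : m ≤ p
  · left
    have : m / p ≤ 1 := (div_le_one hp).2 hmp
    nlinarith
  · right
    push Not at hmp
    have h6 : 1 ≤ m / p := (one_le_div hp).2 hmp.le
    have h7 : m ≤ S * 8 * (m / p) := by nlinarith
    have h8 : m * p ≤ m * (S * 8) := by
      have := mul_le_mul_of_nonneg_right h7 hp.le
      have e : S * 8 * (m / p) * p = m * (S * 8) := by field_simp
      rw [e] at this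
      exact this
    have := le_of_mul_le_mul_left h8 hm0
    linarith

theorem set_lemma (A D : Finset (ZMod p)) (H : Finset (ZMod p)ˣ) (M : ℝ) (hM : 2 ≤ M)
    (hA : A.Nonempty) (hH : H.Nonempty)
    (hD : ∀ h ∈ H, ∀ a ∈ A, (h : ZMod p) * a ∈ D) (hDc : (D.card : ℝ) ≤ M * A.card)
    (hAA : ((A - A).card : ℝ) ≤ M * A.card)
    (hHH : ((H / H).card : ℝ) ≤ M * H.card) :
    (A.card : ℝ) ≤ 4 * M ∨ (H.card : ℝ) ≤ M ^ 156 ∨ (p : ℝ) ≤ M ^ 151 * A.card := by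
  classical
  by_cases hA4 : (A.card : ℝ) ≤ 4 * M
  · exact Or.inl hA4
  right
  push Not at hA4
  have hApos : (0:ℝ) < A.card := by exact_mod_cast hA.card_pos
  obtain ⟨B, hB, hHB, hBB, hP⟩ := popular A D H M hM hA hH hD hDc hHH
  have hBpos : (0:ℝ) < B.card := by exact_mod_cast hB.card_pos
  have hM1 : 1 ≤ M := by linarith
  by_cases hB1 : B.card ≤ 1
  · left
    have : (B.card : ℝ) ≤ 1 := by exact_mod_cast hB1
    calc (H.card : ℝ) ≤ 2 * M * B.card := hHB
      _ ≤ M * M * 1 := by gcongr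
      _ = M ^ 2 := by ring
      _ ≤ M ^ 156 := pow_le_pow_right₀ hM1 (by norm_num)
  push Not at hB1
  obtain ⟨b1, hb1, b2, hb2, hb12⟩ := Finset.one_lt_card.1 hB1
  have hW := popW_card hM hB hP
  set W := popW A B M with hWdef
  have hW1 : 1 < W.card := by
    have : (1:ℝ) < W.card := by
      by_contra hc
      push Not at hc
      have : 4 * M * (W.card : ℝ) ≤ 4 * M * 1 := by gcongr
      linarith
    exact_mod_cast this
  obtain ⟨w0, hw0, hw0n⟩ := Finset.exists_mem_ne hW1 0
  obtain ⟨ξ, ⟨b3, hb3, b4, hb4, hb34, x, hx, y, hy, hxy⟩, hgood⟩ := good_exists W B w0 hw0n hw0 hb1 hb2 hb12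
  obtain ⟨Bx, hBxs, hBxc, hBx⟩ := cov_pop hM hA hAA hB hBB hP hx
  obtain ⟨By, hBys, hByc, hBy⟩ := cov_pop hM hA hAA hB hBB hP hy
  obtain ⟨Bw, hBws, hBwc, hBw⟩ := cov_pop hM hA hAA hB hBB hP hw0
  set B' := B \ ((B \ Bx) ∪ (B \ By) ∪ (B \ Bw)) with hB'
  have hB'c : (B.card : ℝ) ≤ 2 * B'.card := by
    have e1 : B.card ≤ B'.card + ((B \ Bx) ∪ (B \ By) ∪ (B \ Bw)).card := by
      have := Finset.le_card_sdiff ((B \ Bx) ∪ (B \ By) ∪ (B \ Bw)) B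
      rw [← hB'] at this
      omega
    have e2 : ((B \ Bx) ∪ (B \ By) ∪ (B \ Bw)).card ≤ (B \ Bx).card + (B \ By).card + (B \ Bw).card :=
      (Finset.card_union_le _ _).trans (by gcongr; exact Finset.card_union_le _ _)
    have e3 : (B.card : ℝ) ≤ B'.card + ((B \ Bx).card + (B \ By).card + (B \ Bw).card) := by
      exact_mod_cast e1.trans (by omega)
    linarith
  have huv : ∀ {S T : Finset (ZMod p)ˣ}, S ⊆ T → uv S ⊆ uv T := fun h => Finset.image_subset_image h
  have hsx : B' ⊆ Bx := by
    intro b hb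
    simp only [hB', Finset.mem_sdiff, Finset.mem_union] at hb
    tauto
  have hsy : B' ⊆ By := by
    intro b hb
    simp only [hB', Finset.mem_sdiff, Finset.mem_union] at hb
    tauto
  have hsw : B' ⊆ Bw := by
    intro b hb
    simp only [hB', Finset.mem_sdiff, Finset.mem_union] at hb
    tauto
  have hlow := image_lower (ξ := ξ + w0) (show B' ⊆ B from Finset.sdiff_subset) (by omega) hB.card_pos hB'c hgood
  have c3 := (cov_unit hM hA hAA (hP b3 hb3)).1
  have c4 := (cov_unit hM hA hAA (hP b4 hb4)).1
  have cx := hBx.mono (dil_mono x (huv hsx))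
  have cy := hBy.mono (dil_mono y (huv hsy))
  have cw := hBw.mono (dil_mono w0 (huv hsw))
  have ctot := ((c3.sub c4).add (cx.sub cy)).add ((cw.dil c3).sub (cw.dil c4))
  have hsub : dil ((b3 : ZMod p) - (b4 : ZMod p)) (W + dil (ξ + w0) (uv B')) ⊆
      (dil (b3 : ZMod p) A - dil (b4 : ZMod p) A) + (dil x (uv B') - dil y (uv B')) +
      (dil (b3 : ZMod p) (dil w0 (uv B')) - dil (b4 : ZMod p) (dil w0 (uv B'))) := by
    intro z hz
    rw [mem_dil] at hz
    obtain ⟨s, hs, rfl⟩ := hz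
    rw [Finset.mem_add] at hs
    obtain ⟨w, hw, t, ht, rfl⟩ := hs
    rw [mem_dil] at ht
    obtain ⟨b, hb, rfl⟩ := ht
    have e : ((b3 : ZMod p) - (b4 : ZMod p)) * (w + (ξ + w0) * b) =
      ((b3 : ZMod p) * w - (b4 : ZMod p) * w) + (x * b - y * b) + ((b3 : ZMod p) * (w0 * b) - (b4 : ZMod p) * (w0 * b)) := by
      linear_combination b * hxy
    rw [e]
    have hwA : w ∈ A := (mem_popW.1 hw).1
    have hm : ∀ (c : ZMod p) {S : Finset (ZMod p)} {s : ZMod p}, s ∈ S → c * s ∈ dil c S :=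
      fun c S s hs => mem_dil.2 ⟨s, hs, rfl⟩
    exact Finset.add_mem_add (Finset.add_mem_add (Finset.sub_mem_sub (hm _ hwA) (hm _ hwA))
      (Finset.sub_mem_sub (hm _ hb) (hm _ hb))) (Finset.sub_mem_sub (hm _ (hm _ hb)) (hm _ (hm _ hb)))
  have hcard := (ctot.mono hsub).card_le hA hAA
  have hb34' : (b3 : ZMod p) - (b4 : ZMod p) ≠ 0 := sub_ne_zero.2 (fun h => hb34 (Units.ext h))
  rw [card_dil _ hb34'] at hcard
  have hcard2 : ((W + dil (ξ + w0) (uv B')).card : ℝ) ≤ M ^ 148 * A.card := by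
    refine hcard.trans (le_of_eq ?_)
    ring
  have h8 : 8 * ((W + dil (ξ + w0) (uv B')).card : ℝ) ≤ M ^ 151 * A.card := by
    calc 8 * ((W + dil (ξ + w0) (uv B')).card : ℝ) ≤ 2 ^ 3 * (M ^ 148 * A.card) := by linarith
      _ ≤ M ^ 3 * (M ^ 148 * A.card) := by gcongr
      _ = _ := by ring
  rcases hlow with h | h
  · left
    have h9 := h.trans h8
    have h10 : (A.card : ℝ) * B.card ≤ A.card * (4 * M * M ^ 151) := by
      calc (A.card : ℝ) * B.card ≤ (4 * M * W.card) * B.card := by gcongr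
        _ = 4 * M * (W.card * B.card) := by ring
        _ ≤ 4 * M * (M ^ 151 * A.card) := by gcongr
        _ = _ := by ring
    have h11 := le_of_mul_le_mul_left h10 hApos
    calc (H.card : ℝ) ≤ 2 * M * B.card := hHB
      _ ≤ 2 * M * (4 * M * M ^ 151) := by gcongr
      _ = 2 ^ 3 * M ^ 153 := by ring
      _ ≤ M ^ 3 * M ^ 153 := by gcongr
      _ = M ^ 156 := by ring
  · right
    exact h.trans h8

end SetLemma2
end S5


namespace S5
set_option linter.unusedSectionVars false

section Conv
variable {G : Type*} [AddCommGroup G] [Fintype G] [DecidableEq G]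

/-- convolution -/
def cv (f g : G → ℝ) (x : G) : ℝ := ∑ y, f y * g (x - y)

lemma cv_nonneg {f g : G → ℝ} (hf : ∀ x, 0 ≤ f x) (hg : ∀ x, 0 ≤ g x) (x : G) : 0 ≤ cv f g x :=
  Finset.sum_nonneg fun y _ => mul_nonneg (hf y) (hg _)

lemma sum_shift (f : G → ℝ) (y : G) : ∑ x, f (x - y) = ∑ x, f x :=
  Fintype.sum_equiv (Equiv.subRight y) _ _ (fun _ => rfl)

lemma sum_shift' (f : G → ℝ) (y : G) : ∑ x, f (x + y) = ∑ x, f x :=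
  Fintype.sum_equiv (Equiv.addRight y) _ _ (fun _ => rfl)

lemma sum_refl (f : G → ℝ) (y : G) : ∑ x, f (y - x) = ∑ x, f x :=
  Fintype.sum_equiv (Equiv.subLeft y) _ _ (fun _ => rfl)

lemma cv_mono {f g f' g' : G → ℝ} (hf : ∀ x, 0 ≤ f x) (hg : ∀ x, 0 ≤ g x)
    (hff : ∀ x, f x ≤ f' x) (hgg : ∀ x, g x ≤ g' x) (x : G) : cv f g x ≤ cv f' g' x :=
  Finset.sum_le_sum fun y _ => mul_le_mul (hff y) (hgg _) (hg _) ((hf y).trans (hff y))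

lemma cv_comm (f g : G → ℝ) (x : G) : cv f g x = cv g f x := by
  unfold cv
  rw [← sum_refl _ x]
  refine Finset.sum_congr rfl fun y _ => ?_
  rw [sub_sub_cancel, mul_comm]

lemma young {a b : G → ℝ} (ha : ∀ x, 0 ≤ a x) :
    ∑ x, cv a b x ^ 2 ≤ (∑ x, a x) ^ 2 * ∑ x, b x ^ 2 := by
  have h1 : ∀ x, cv a b x ^ 2 ≤ (∑ y, a y) * ∑ y, a y * b (x - y) ^ 2 := by
    intro x
    have := Finset.sum_sq_le_sum_mul_sum_of_sq_eq_mul (Finset.univ : Finset G)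
      (r := fun y => a y * b (x - y)) (f := a) (g := fun y => a y * b (x - y) ^ 2)
      (fun y _ => ha y) (fun y _ => mul_nonneg (ha y) (sq_nonneg _)) (fun y _ => by ring)
    exact this
  refine (Finset.sum_le_sum fun x _ => h1 x).trans (le_of_eq ?_)
  rw [← Finset.mul_sum, Finset.sum_comm]
  simp_rw [← Finset.mul_sum]
  have : ∀ y, ∑ x, b (x - y) ^ 2 = ∑ x, b x ^ 2 := fun y => sum_shift (fun x => b x ^ 2) y
  simp_rw [this]
  rw [← Finset.sum_mul]
  ring

lemma energy_eq (f : G → ℝ) : ∑ x, cv f f x ^ 2 = ∑ d, (∑ y, f y * f (y - d)) ^ 2 := by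
  have h1 : ∀ x, cv f f x ^ 2 = ∑ d, ∑ y, (f y * f (y - d)) * (f (x - y) * f (x - y + d)) := by
    intro x
    unfold cv
    rw [sq, Finset.sum_mul_sum, Finset.sum_comm]
    rw [Finset.sum_comm]
    conv_rhs => rw [Finset.sum_comm]
    refine Finset.sum_congr rfl fun y _ => ?_
    rw [← sum_refl _ y]
    refine Finset.sum_congr rfl fun d _ => ?_
    have : x - (y - d) = x - y + d := by abel
    rw [this]; ring
  simp_rw [h1]
  rw [Finset.sum_comm]
  refine Finset.sum_congr rfl fun d _ => ?_
  rw [Finset.sum_comm]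
  simp_rw [← Finset.mul_sum]
  have h2 : ∀ y, ∑ x, f (x - y) * f (x - y + d) = ∑ y, f y * f (y - d) := by
    intro y
    rw [sum_shift (fun x => f x * f (x + d)) y, ← sum_shift (fun x => f x * f (x + d)) d]
    refine Finset.sum_congr rfl fun x _ => ?_
    rw [sub_add_cancel, mul_comm]
  simp_rw [h2]
  rw [← Finset.sum_mul, sq]

/-- indicator -/
def ind (A : Finset G) (x : G) : ℝ := if x ∈ A then 1 else 0

lemma ind_nonneg (A : Finset G) (x : G) : 0 ≤ ind A x := by unfold ind; split_ifs <;> norm_num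

lemma energy_ind (A : Finset G) :
    ∑ x, cv (ind A) (ind A) x ^ 2 = ∑ d, ((shiftInter A d).card : ℝ) ^ 2 := by
  rw [energy_eq]
  refine Finset.sum_congr rfl fun d _ => ?_
  congr 1
  unfold shiftInter
  rw [← Finset.sum_boole, ← Finset.sum_filter_add_sum_filter_not Finset.univ (fun y => y ∈ A)]
  rw [Finset.filter_mem_eq_inter, Finset.univ_inter]
  have : ∑ y ∈ Finset.univ.filter (fun y => ¬ y ∈ A), ind A y * ind A (y - d) = 0 := by
    apply Finset.sum_eq_zero
    intro y hy
    have := (Finset.mem_filter.1 hy).2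
    simp [ind, this]
  rw [this, add_zero]
  refine Finset.sum_congr rfl fun y hy => ?_
  simp [ind, hy]

lemma sum_ind (A : Finset G) : ∑ x, ind A x = A.card := by
  unfold ind
  rw [Finset.sum_boole]; simp

lemma sum_ind_sq (A : Finset G) : ∑ x, ind A x ^ 2 = A.card := by
  rw [← sum_ind]
  refine Finset.sum_congr rfl fun x _ => ?_
  unfold ind; split_ifs <;> norm_num

lemma energy_split {f : G → ℝ} (hf : ∀ x, 0 ≤ f x) {m l h : G → ℝ} (hm : ∀ x, 0 ≤ m x)
    (hl : ∀ x, 0 ≤ l x) (hh : ∀ x, 0 ≤ h x) (hs : ∀ x, f x = m x + l x + h x) :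
    ∑ x, cv f f x ^ 2 ≤ 3 * ∑ x, cv m m x ^ 2 + 12 * (∑ x, cv f l x ^ 2) + 12 * ∑ x, cv h f x ^ 2 := by
  rw [Finset.mul_sum, Finset.mul_sum, Finset.mul_sum, ← Finset.sum_add_distrib, ← Finset.sum_add_distrib]
  apply Finset.sum_le_sum
  intro x _
  have h1 : cv f f x ≤ cv m m x + 2 * cv f l x + 2 * cv h f x := by
    have e1 : cv f l x = cv l f x := cv_comm _ _ _
    have e2 : cv f f x = cv m f x + cv l f x + cv h f x := by
      unfold cv
      rw [← Finset.sum_add_distrib, ← Finset.sum_add_distrib]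
      refine Finset.sum_congr rfl fun y _ => ?_
      rw [hs y]; ring
    have e3 : cv m f x = cv m m x + cv m l x + cv m h x := by
      unfold cv
      rw [← Finset.sum_add_distrib, ← Finset.sum_add_distrib]
      refine Finset.sum_congr rfl fun y _ => ?_
      rw [hs (x - y)]; ring
    have e4 : cv m l x ≤ cv f l x := cv_mono hm hl (fun y => by rw [hs y]; linarith [hl y, hh y]) (fun _ => le_rfl) x
    have e5 : cv m h x ≤ cv h f x := by
      rw [cv_comm]
      exact cv_mono hh hm (fun _ => le_rfl) (fun y => by rw [hs y]; linarith [hl y, hh y]) x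
    linarith
  have h0 := cv_nonneg hf hf x
  have ha := cv_nonneg hm hm x
  have hb := cv_nonneg hf hl x
  have hc := cv_nonneg hh hf x
  calc cv f f x ^ 2 ≤ (cv m m x + 2 * cv f l x + 2 * cv h f x) ^ 2 := by gcongr
    _ ≤ _ := by nlinarith [sq_nonneg (cv m m x - 2 * cv f l x), sq_nonneg (cv m m x - 2 * cv h f x), sq_nonneg (2 * cv f l x - 2 * cv h f x)]

/-- Level set extraction from large energy. -/
lemma level_set {f : G → ℝ} (hf : ∀ x, 0 ≤ f x) {M N e : ℝ} (hM : 2 ≤ M) (hN : 0 < N) (he : 0 < e)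
    (h1 : ∑ x, f x ≤ N) (h2 : ∑ x, f x ^ 2 ≤ e)
    (hE : N ^ 2 * e ≤ M * ∑ x, cv f f x ^ 2) :
    ∃ A : Finset G, A.Nonempty ∧ (∀ a ∈ A, e / (48 * M * N) ≤ f a) ∧
      (A.card : ℝ) ^ 3 ≤ M ^ 53 * ∑ d, ((shiftInter A d).card : ℝ) ^ 2 ∧
      N ^ 2 ≤ M ^ 11 * A.card * e ∧ (A.card : ℝ) * e ≤ M ^ 7 * N ^ 2 := by
  classical
  set M' : ℝ := 48 * M with hM'
  have hM'0 : 0 < M' := by positivity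
  have hM'1 : M' ≤ M ^ 7 := by
    calc M' ≤ 2 ^ 6 * M := by rw [hM']; nlinarith
      _ ≤ M ^ 6 * M := by gcongr
      _ = M ^ 7 := by ring
  set A : Finset G := Finset.univ.filter (fun x => e / (M' * N) ≤ f x ∧ f x ≤ M' * e / N) with hA
  set m : G → ℝ := fun x => if x ∈ A then f x else 0 with hm
  set l : G → ℝ := fun x => if f x < e / (M' * N) then f x else 0 with hl
  set h : G → ℝ := fun x => if f x < e / (M' * N) then 0 else if M' * e / N < f x then f x else 0 with hh
  have hmem : ∀ x, x ∈ A ↔ e / (M' * N) ≤ f x ∧ f x ≤ M' * e / N := by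
    intro x; rw [hA, Finset.mem_filter]; simp
  have hm0 : ∀ x, 0 ≤ m x := by intro x; simp only [hm]; split_ifs; exacts [hf x, le_rfl]
  have hl0 : ∀ x, 0 ≤ l x := by intro x; simp only [hl]; split_ifs; exacts [hf x, le_rfl]
  have hh0 : ∀ x, 0 ≤ h x := by intro x; simp only [hh]; split_ifs; exacts [le_rfl, hf x, le_rfl]
  have hs : ∀ x, f x = m x + l x + h x := by
    intro x
    simp only [hm, hl, hh, hmem]
    by_cases c1 : f x < e / (M' * N)
    · rw [if_neg (by intro hc; linarith [hc.1]), if_pos c1, if_pos c1]; ring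
    · push Not at c1
      by_cases c2 : M' * e / N < f x
      · rw [if_neg (by intro hc; linarith [hc.2]), if_neg (by linarith), if_neg (by linarith), if_pos c2]; ring
      · push Not at c2
        rw [if_pos ⟨c1, c2⟩, if_neg (by linarith), if_neg (by linarith), if_neg (by linarith)]; ring
  have hsplit := energy_split hf hm0 hl0 hh0 hs
  have hf10 : 0 ≤ ∑ x, f x := Finset.sum_nonneg fun x _ => hf x
  have hl2 : ∑ x, l x ^ 2 ≤ e / M' := by
    calc ∑ x, l x ^ 2 ≤ ∑ x, e / (M' * N) * f x := by
          apply Finset.sum_le_sum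
          intro x _
          simp only [hl]
          split_ifs with hc
          · nlinarith [hf x]
          · rw [zero_pow (by norm_num)]; exact mul_nonneg (by positivity) (hf x)
      _ = e / (M' * N) * ∑ x, f x := by rw [Finset.mul_sum]
      _ ≤ e / (M' * N) * N := by gcongr
      _ = e / M' := by field_simp
  have hh1 : ∑ x, h x ≤ N / M' := by
    calc ∑ x, h x ≤ ∑ x, N / (M' * e) * f x ^ 2 := by
          apply Finset.sum_le_sum
          intro x _
          simp only [hh]
          split_ifs with hc hd
          · positivity
          · rw [div_lt_iff₀ hN] at hd
            rw [div_mul_eq_mul_div, le_div_iff₀ (by positivity)]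
            nlinarith [hf x]
          · positivity
      _ = N / (M' * e) * ∑ x, f x ^ 2 := by rw [Finset.mul_sum]
      _ ≤ N / (M' * e) * e := by gcongr
      _ = N / M' := by field_simp
  have hh10 : 0 ≤ ∑ x, h x := Finset.sum_nonneg fun x _ => hh0 x
  have y1 : ∑ x, cv f l x ^ 2 ≤ N ^ 2 * (e / M') := (young hf).trans (by gcongr)
  have y2 : ∑ x, cv h f x ^ 2 ≤ N ^ 2 * (e / M') := by
    refine (young hh0).trans ?_
    calc (∑ x, h x) ^ 2 * ∑ x, f x ^ 2 ≤ (N / M') ^ 2 * e := by gcongr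
      _ = (N ^ 2 * (e / M')) / M' := by field_simp
      _ ≤ N ^ 2 * (e / M') := div_le_self (by positivity) (by rw [hM']; linarith)
  have hEm : N ^ 2 * e ≤ 6 * M * ∑ x, cv m m x ^ 2 := by
    have e1 : M * (N ^ 2 * (e / M')) = N ^ 2 * e / 48 := by rw [hM']; field_simp
    have := mul_le_mul_of_nonneg_left hsplit (show 0 ≤ M by linarith)
    have := mul_le_mul_of_nonneg_left y1 (show 0 ≤ M by linarith)
    have := mul_le_mul_of_nonneg_left y2 (show 0 ≤ M by linarith)
    linarith
  have hmA : ∑ x, cv m m x ^ 2 ≤ (M' * e / N) ^ 4 * ∑ x, cv (ind A) (ind A) x ^ 2 := by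
    rw [Finset.mul_sum]
    apply Finset.sum_le_sum
    intro x _
    have : cv m m x ≤ (M' * e / N) ^ 2 * cv (ind A) (ind A) x := by
      unfold cv
      rw [Finset.mul_sum]
      apply Finset.sum_le_sum
      intro y _
      have hb : ∀ y, m y ≤ (M' * e / N) * ind A y := by
        intro y
        simp only [hm, ind]
        split_ifs with hc
        · rw [mul_one]; exact ((hmem y).1 hc).2
        · simp
      calc m y * m (x - y) ≤ ((M' * e / N) * ind A y) * ((M' * e / N) * ind A (x - y)) :=
            mul_le_mul (hb _) (hb _) (hm0 _) ((hm0 _).trans (hb _))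
        _ = _ := by ring
    calc cv m m x ^ 2 ≤ ((M' * e / N) ^ 2 * cv (ind A) (ind A) x) ^ 2 :=
          pow_le_pow_left₀ (cv_nonneg hm0 hm0 x) this 2
      _ = _ := by ring
  set EA := ∑ x, cv (ind A) (ind A) x ^ 2 with hEA
  have hEA3 : EA ≤ (A.card : ℝ) ^ 3 := by
    have := young (a := ind A) (b := ind A) (ind_nonneg A)
    rw [sum_ind, sum_ind_sq] at this
    calc EA ≤ _ := this
      _ = _ := by ring
  have hAc : (A.card : ℝ) * e ≤ M' * N ^ 2 := by
    have : (A.card : ℝ) * (e / (M' * N)) ≤ N := by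
      refine le_trans ?_ h1
      rw [← nsmul_eq_mul, ← Finset.sum_const]
      refine (Finset.sum_le_sum (g := f) fun x hx => ((hmem x).1 hx).1).trans ?_
      exact Finset.sum_le_sum_of_subset_of_nonneg (Finset.subset_univ _) (fun x _ _ => hf x)
    rw [← mul_div_assoc, div_le_iff₀ (by positivity)] at this
    linarith
  have key : N ^ 6 ≤ 6 * M * M' ^ 4 * EA * e ^ 3 := by
    have : N ^ 2 * e ≤ 6 * M * ((M' * e / N) ^ 4 * EA) := hEm.trans (by gcongr)
    have e1 : 6 * M * ((M' * e / N) ^ 4 * EA) = (6 * M * M' ^ 4 * EA * e ^ 3) * e / N ^ 4 := by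
      field_simp
    rw [e1, le_div_iff₀ (by positivity)] at this
    have h3 : N ^ 6 * e ≤ (6 * M * M' ^ 4 * EA * e ^ 3) * e := by linarith [show N ^ 2 * e * N ^ 4 = N ^ 6 * e by ring]
    exact le_of_mul_le_mul_right h3 he
  have h6M : 6 * M ≤ M ^ 4 := by
    calc 6 * M ≤ 2 ^ 3 * M := by linarith
      _ ≤ M ^ 3 * M := by gcongr
      _ = M ^ 4 := by ring
  have hEA0 : 0 ≤ EA := Finset.sum_nonneg fun _ _ => sq_nonneg _
  have hne : A.Nonempty := by
    rw [Finset.nonempty_iff_ne_empty]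
    intro hc
    have h3 : EA ≤ 0 := by
      refine hEA3.trans ?_
      rw [hc]; simp
    have h4 : EA = 0 := le_antisymm h3 hEA0
    rw [h4] at key
    have : 0 < N ^ 6 := by positivity
    linarith
  have hc0 : (0:ℝ) ≤ A.card := Nat.cast_nonneg _
  refine ⟨A, hne, fun a ha => ((hmem a).1 ha).1, ?_, ?_, ?_⟩
  · rw [← energy_ind, ← hEA]
    have h5 : ((A.card : ℝ) * e) ^ 3 ≤ M' ^ 3 * N ^ 6 := by
      calc ((A.card : ℝ) * e) ^ 3 ≤ (M' * N ^ 2) ^ 3 := pow_le_pow_left₀ (mul_nonneg hc0 he.le) hAc 3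
        _ = _ := by ring
    have h6 : (A.card : ℝ) ^ 3 * e ^ 3 ≤ (M ^ 53 * EA) * e ^ 3 := by
      calc (A.card : ℝ) ^ 3 * e ^ 3 = ((A.card : ℝ) * e) ^ 3 := by ring
        _ ≤ M' ^ 3 * N ^ 6 := h5
        _ ≤ M' ^ 3 * (6 * M * M' ^ 4 * EA * e ^ 3) := by gcongr
        _ = (6 * M) * M' ^ 7 * EA * e ^ 3 := by ring
        _ ≤ M ^ 4 * (M ^ 7) ^ 7 * EA * e ^ 3 := by gcongr
        _ = _ := by ring
    exact le_of_mul_le_mul_right h6 (by positivity)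
  · have h5 : (N ^ 2) ^ 3 ≤ (M ^ 11 * A.card * e) ^ 3 := by
      calc (N ^ 2) ^ 3 = N ^ 6 := by ring
        _ ≤ 6 * M * M' ^ 4 * EA * e ^ 3 := key
        _ ≤ M ^ 4 * (M ^ 7) ^ 4 * (A.card : ℝ) ^ 3 * e ^ 3 := by gcongr
        _ = M ^ 32 * ((A.card : ℝ) ^ 3 * e ^ 3) := by ring
        _ ≤ M ^ 33 * ((A.card : ℝ) ^ 3 * e ^ 3) :=
          mul_le_mul_of_nonneg_right (pow_le_pow_right₀ (by linarith) (by norm_num))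
            (mul_nonneg (pow_nonneg hc0 3) (pow_nonneg he.le 3))
        _ = _ := by ring
    exact le_of_pow_le_pow_left₀ (by norm_num) (mul_nonneg (mul_nonneg (pow_nonneg (by linarith) _) hc0) he.le) h5
  · exact hAc.trans (by gcongr)

end Conv

section Flat
variable {p : ℕ} [Fact p.Prime]

lemma sum_dil (g : ZMod p → ℝ) (h : (ZMod p)ˣ) : ∑ x, g ((h : ZMod p) * x) = ∑ x, g x :=
  Fintype.sum_equiv (Units.mulLeft h) _ _ (fun _ => rfl)

theorem flat_lemma : ∃ C : ℕ, 1 ≤ C ∧ ∀ (p : ℕ) [Fact p.Prime] (f g : ZMod p → ℝ) (H : Finset (ZMod p)ˣ)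
    (M : ℝ), 2 ≤ M → (∀ x, 0 ≤ f x) → H.Nonempty → (∀ h ∈ H, ∀ x, f x ≤ g ((h : ZMod p) * x)) →
    ((H / H).card : ℝ) ≤ M * H.card → 0 < ∑ x, g x → 0 < ∑ x, g x ^ 2 →
    (∑ x, g x) ^ 2 * (∑ x, g x ^ 2) ≤ M * ∑ x, cv f f x ^ 2 →
    (∑ x, g x) ^ 2 ≤ M ^ C * (∑ x, g x ^ 2) ∨ (H.card : ℝ) ≤ M ^ C ∨
      p * (∑ x, g x ^ 2) ≤ M ^ C * (∑ x, g x) ^ 2 := by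
  refine ⟨40000, by norm_num, ?_⟩
  intro p _ f g H M hM hf hH hfg hHH hN he hE
  classical
  obtain ⟨h0, hh0⟩ := hH
  have hg : ∀ x, 0 ≤ g x := by
    intro x
    have := hfg h0 hh0 (((h0⁻¹ : (ZMod p)ˣ) : ZMod p) * x)
    rw [Units.mul_inv_cancel_left] at this
    exact (hf _).trans this
  have hf1 : ∑ x, f x ≤ ∑ x, g x := by
    rw [← sum_dil g h0]
    exact Finset.sum_le_sum fun x _ => hfg h0 hh0 x
  have hf2 : ∑ x, f x ^ 2 ≤ ∑ x, g x ^ 2 := by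
    rw [← sum_dil (fun x => g x ^ 2) h0]
    exact Finset.sum_le_sum fun x _ => pow_le_pow_left₀ (hf x) (hfg h0 hh0 x) 2
  set N := ∑ x, g x with hNd
  set e := ∑ x, g x ^ 2 with hed
  have hM1 : 1 ≤ M := by linarith
  have hM0 : 0 < M := by linarith
  obtain ⟨A, hA, hAf, hAE, hNA, hAN⟩ := level_set hf hM hN he hf1 hf2 hE
  obtain ⟨A', hA's, hA', hAA', hA'A'⟩ := bsg A hA (M ^ 53) (one_le_pow₀ hM1) hAE
  have hA'pos : (0:ℝ) < A'.card := by exact_mod_cast hA'.card_pos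
  set D : Finset (ZMod p) := Finset.univ.filter (fun x => e / (48 * M * N) ≤ g x) with hD
  have hDc : (D.card : ℝ) * e ≤ M ^ 7 * N ^ 2 := by
    have : (D.card : ℝ) * (e / (48 * M * N)) ≤ N := by
      rw [← nsmul_eq_mul, ← Finset.sum_const]
      refine (Finset.sum_le_sum (g := g) fun x hx => (Finset.mem_filter.1 hx).2).trans ?_
      exact Finset.sum_le_sum_of_subset_of_nonneg (Finset.subset_univ _) (fun x _ _ => hg x)
    rw [← mul_div_assoc, div_le_iff₀ (by positivity)] at this
    calc (D.card : ℝ) * e ≤ N * (48 * M * N) := this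
      _ = 48 * (M * N ^ 2) := by ring
      _ ≤ 2 ^ 6 * (M * N ^ 2) := by gcongr; norm_num
      _ ≤ M ^ 6 * (M * N ^ 2) := by gcongr
      _ = _ := by ring
  have hA56 : (A.card : ℝ) ≤ M ^ 56 * A'.card := by
    calc (A.card : ℝ) ≤ 6 * M ^ 53 * A'.card := hAA'
      _ ≤ 2 ^ 3 * M ^ 53 * A'.card := by gcongr; norm_num
      _ ≤ M ^ 3 * M ^ 53 * A'.card := by gcongr
      _ = _ := by ring
  have hs := set_lemma A' D H (M ^ 228) (by
      calc (2:ℝ) ≤ M := hM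
        _ = M ^ 1 := by ring
        _ ≤ M ^ 228 := pow_le_pow_right₀ hM1 (by norm_num)) hA' ⟨h0, hh0⟩ (by
      intro h hh a ha
      rw [hD, Finset.mem_filter]
      exact ⟨Finset.mem_univ _, (hAf a (hA's ha)).trans (hfg h hh a)⟩) (by
      apply le_of_mul_le_mul_right _ he
      calc (D.card : ℝ) * e ≤ M ^ 7 * N ^ 2 := hDc
        _ ≤ M ^ 7 * (M ^ 11 * A.card * e) := by gcongr
        _ ≤ M ^ 7 * (M ^ 11 * (M ^ 56 * A'.card) * e) := by gcongr
        _ = M ^ 74 * A'.card * e := by ring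
        _ ≤ M ^ 228 * A'.card * e := by gcongr <;> first | exact hM1 | norm_num) (by
      calc ((A' - A').card : ℝ) ≤ 2 ^ 13 * (M ^ 53) ^ 3 * A.card := hA'A'
        _ ≤ M ^ 13 * (M ^ 53) ^ 3 * (M ^ 56 * A'.card) := by gcongr
        _ = M ^ 228 * A'.card := by ring) (by
      refine hHH.trans ?_
      gcongr
      calc M = M ^ 1 := by ring
        _ ≤ M ^ 228 := pow_le_pow_right₀ hM1 (by norm_num))
  rcases hs with h | h | h
  · left
    have h4 : (4:ℝ) ≤ M ^ 2 := by nlinarith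
    calc N ^ 2 ≤ M ^ 11 * A.card * e := hNA
      _ ≤ M ^ 11 * (M ^ 56 * A'.card) * e := by gcongr
      _ ≤ M ^ 11 * (M ^ 56 * (M ^ 2 * M ^ 228)) * e := by
        gcongr
        exact h.trans (by gcongr)
      _ = M ^ 297 * e := by ring
      _ ≤ M ^ 40000 * e := by
        apply mul_le_mul_of_nonneg_right _ he.le
        exact pow_le_pow_right₀ hM1 (by norm_num)
  · right; left
    rw [← pow_mul] at h
    exact h.trans (pow_le_pow_right₀ hM1 (by norm_num))
  · right; right
    rw [← pow_mul] at h
    have hAc : (A'.card : ℝ) ≤ A.card := by exact_mod_cast Finset.card_le_card hA's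
    calc (p:ℝ) * e ≤ (M ^ (228 * 151) * A'.card) * e := by gcongr
      _ ≤ (M ^ (228 * 151) * A.card) * e := by gcongr
      _ = M ^ (228 * 151) * (A.card * e) := mul_assoc _ _ _
      _ ≤ M ^ (228 * 151) * (M ^ 7 * N ^ 2) := by
        apply mul_le_mul_of_nonneg_left hAN (by positivity)
      _ = M ^ (228 * 151 + 7) * N ^ 2 := by rw [pow_add, mul_assoc]
      _ ≤ M ^ 40000 * N ^ 2 := by
        apply mul_le_mul_of_nonneg_right _ (by positivity)
        exact pow_le_pow_right₀ hM1 (by norm_num)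

end Flat
end S5


namespace S5
set_option linter.unusedSectionVars false

/-- the conclusion of the flattening lemma with constant C -/
def FlatProp (C : ℕ) : Prop := ∀ (p : ℕ) [Fact p.Prime] (f g : ZMod p → ℝ) (H : Finset (ZMod p)ˣ)
    (M : ℝ), 2 ≤ M → (∀ x, 0 ≤ f x) → H.Nonempty → (∀ h ∈ H, ∀ x, f x ≤ g ((h : ZMod p) * x)) →
    ((H / H).card : ℝ) ≤ M * H.card → 0 < ∑ x, g x → 0 < ∑ x, g x ^ 2 →
    (∑ x, g x) ^ 2 * (∑ x, g x ^ 2) ≤ M * ∑ x, cv f f x ^ 2 →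
    (∑ x, g x) ^ 2 ≤ M ^ C * (∑ x, g x ^ 2) ∨ (H.card : ℝ) ≤ M ^ C ∨
      p * (∑ x, g x ^ 2) ≤ M ^ C * (∑ x, g x) ^ 2

section Iter
variable {p : ℕ} [Fact p.Prime]

/-- representation counts -/
def rr (S : Finset (ZMod p)ˣ) : ℕ → ZMod p → ℝ
  | 0 => fun x => if x = 0 then 1 else 0
  | (m + 1) => fun x => ∑ s ∈ S, rr S m (x - (s : ZMod p))

lemma rr_nonneg (S : Finset (ZMod p)ˣ) (m : ℕ) (x : ZMod p) : 0 ≤ rr S m x := by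
  induction m generalizing x with
  | zero => simp only [rr]; split_ifs <;> norm_num
  | succ m ih => exact Finset.sum_nonneg fun s _ => ih _

lemma rr_sum (S : Finset (ZMod p)ˣ) (m : ℕ) : ∑ x, rr S m x = (S.card : ℝ) ^ m := by
  induction m with
  | zero => simp [rr]
  | succ m ih =>
    simp only [rr]
    rw [Finset.sum_comm]
    have : ∀ s ∈ S, ∑ x, rr S m (x - (s : ZMod p)) = (S.card : ℝ) ^ m := by
      intro s _
      rw [sum_shift, ih]
    rw [Finset.sum_congr rfl this, Finset.sum_const, nsmul_eq_mul]
    ring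

lemma rr_add (S : Finset (ZMod p)ˣ) (a b : ℕ) (x : ZMod p) :
    rr S (a + b) x = cv (rr S a) (rr S b) x := by
  induction a generalizing x with
  | zero =>
    unfold cv
    simp only [rr, zero_add]
    simp
  | succ a ih =>
    have e : a + 1 + b = (a + b) + 1 := by ring
    rw [e]
    simp only [rr]
    simp_rw [ih]
    unfold cv
    simp only [rr]
    simp_rw [Finset.sum_mul]
    conv_rhs => rw [Finset.sum_comm]
    refine Finset.sum_congr rfl fun s _ => ?_
    rw [← sum_shift _ (s : ZMod p)]
    refine Finset.sum_congr rfl fun y _ => ?_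
    have : x - (s : ZMod p) - (y - (s : ZMod p)) = x - y := by ring
    rw [this]

lemma rr_dil (S S' : Finset (ZMod p)ˣ) (z : (ZMod p)ˣ) (h : ∀ s ∈ S, z * s ∈ S') (m : ℕ) (x : ZMod p) :
    rr S m x ≤ rr S' m ((z : ZMod p) * x) := by
  induction m generalizing x with
  | zero =>
    simp only [rr]
    by_cases hx : x = 0
    · subst hx; rw [mul_zero]
    · rw [if_neg hx]; split_ifs <;> norm_num
  | succ m ih =>
    simp only [rr]
    calc ∑ s ∈ S, rr S m (x - (s : ZMod p)) ≤ ∑ s ∈ S, rr S' m ((z : ZMod p) * x - ((z * s : (ZMod p)ˣ) : ZMod p)) := by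
          apply Finset.sum_le_sum
          intro s _
          refine (ih _).trans (le_of_eq ?_)
          rw [mul_sub, Units.val_mul]
      _ = ∑ t ∈ S.image (fun s => z * s), rr S' m ((z : ZMod p) * x - (t : ZMod p)) := by
          rw [Finset.sum_image (fun a _ b _ hab => mul_left_cancel hab)]
      _ ≤ _ := by
          apply Finset.sum_le_sum_of_subset_of_nonneg
          · intro t ht
            rw [Finset.mem_image] at ht
            obtain ⟨s, hs, rfl⟩ := ht
            exact h s hs
          · intro t _ _
            exact rr_nonneg _ _ _

lemma rr_one_le (S : Finset (ZMod p)ˣ) (x : ZMod p) : rr S 1 x ≤ 1 := by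
  simp only [rr]
  rw [Finset.sum_boole]
  have : (S.filter (fun s : (ZMod p)ˣ => x - (s : ZMod p) = 0)).card ≤ 1 := by
    rw [Finset.card_le_one]
    intro a ha b hb
    have h1 := (Finset.mem_filter.1 ha).2
    have h2 := (Finset.mem_filter.1 hb).2
    apply Units.ext
    exact (sub_eq_zero.1 h1).symm.trans (sub_eq_zero.1 h2)
  exact_mod_cast this

lemma rr_one_sq (S : Finset (ZMod p)ˣ) : ∑ x, rr S 1 x ^ 2 ≤ S.card := by
  have := rr_sum S 1
  rw [pow_one] at this
  rw [← this]
  apply Finset.sum_le_sum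
  intro x _
  have h1 := rr_one_le S x
  have h0 := rr_nonneg S 1 x
  nlinarith

lemma rr_sq_le (S : Finset (ZMod p)ˣ) (m : ℕ) :
    ∑ x, rr S (m + 1) x ^ 2 ≤ ((S.card : ℝ) ^ m) ^ 2 * S.card := by
  simp_rw [rr_add]
  refine (young (rr_nonneg S m)).trans ?_
  rw [rr_sum]
  gcongr
  exact rr_one_sq S

lemma rr_sq_pos (S : Finset (ZMod p)ˣ) (hS : S.Nonempty) (m : ℕ) : 0 < ∑ x, rr S m x ^ 2 := by
  by_contra hc
  have h0 : ∑ x, rr S m x ^ 2 = 0 := le_antisymm (not_lt.1 hc) (Finset.sum_nonneg fun _ _ => sq_nonneg _)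
  rw [Finset.sum_eq_zero_iff_of_nonneg (fun _ _ => sq_nonneg _)] at h0
  have h1 := rr_sum S m
  have h2 : ∑ x, rr S m x = 0 := Finset.sum_eq_zero fun x hx => by
    have := h0 x hx
    exact pow_eq_zero_iff (two_ne_zero) |>.1 this
  rw [h2] at h1
  have : (0:ℝ) < (S.card : ℝ) ^ m := by
    apply pow_pos
    exact_mod_cast hS.card_pos
  linarith

theorem iter {C : ℕ} (hC : FlatProp C) (Z : Finset (ZMod p)ˣ) (hZ : Z.Nonempty) (M Λ : ℝ) (hM : 2 ≤ M)
    (hZZ : ((Z / Z).card : ℝ) ≤ M * Z.card) (hbig : M ^ C < Z.card)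
    (S : ℕ → Finset (ZMod p)ˣ) (J : ℕ) (hS : ∀ i, ∀ z ∈ Z, ∀ s ∈ S i, z * s ∈ S (i + 1))
    (hSl : ∀ i, Z.card ≤ (S i).card) (hSu : ∀ i, i ≤ J → ((S i).card : ℝ) ≤ Λ) (j : ℕ) (hj : j ≤ J) :
    ∑ x, rr (S (J - j)) (2 ^ j) x ^ 2 ≤ Λ ^ (2 * 2 ^ j) * max ((M ^ j)⁻¹) (M ^ C / p) := by
  have hp : (0:ℝ) < p := by exact_mod_cast (Fact.out : p.Prime).pos
  have hZ1 : (1:ℝ) ≤ Z.card := by exact_mod_cast hZ.card_pos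
  have hΛ : 1 ≤ Λ := by
    refine le_trans ?_ (hSu 0 (by omega))
    refine hZ1.trans ?_
    exact_mod_cast hSl 0
  have hM0 : 0 < M := by linarith
  induction j with
  | zero =>
    simp only [Nat.sub_zero, pow_zero, inv_one, mul_one]
    refine (rr_one_sq _).trans ?_
    calc ((S J).card : ℝ) ≤ Λ := hSu J le_rfl
      _ ≤ Λ * Λ := by nlinarith
      _ = Λ ^ 2 * 1 := by ring
      _ ≤ Λ ^ 2 * max 1 (M ^ C / p) := by
        gcongr
        exact le_max_left _ _
  | succ j ih =>
    have ih := ih (by omega)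
    set i := J - (j + 1) with hi
    have hi1 : J - j = i + 1 := by omega
    rw [hi1] at ih
    have hSi : (S (i + 1)).Nonempty := by
      rw [← Finset.card_pos]
      exact lt_of_lt_of_le hZ.card_pos (hSl _)
    set f := rr (S i) (2 ^ j) with hf
    set g := rr (S (i + 1)) (2 ^ j) with hg
    have hgs : ∑ x, g x = ((S (i + 1)).card : ℝ) ^ (2 ^ j) := rr_sum _ _
    have hgle : ∑ x, g x ≤ Λ ^ (2 ^ j) := by
      rw [hgs]
      exact pow_le_pow_left₀ (by positivity) (hSu (i + 1) (by omega)) _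
    have hc : ∀ x, rr (S i) (2 ^ (j + 1)) x = cv f f x := by
      intro x
      rw [pow_succ, mul_two, rr_add]
    simp_rw [hc]
    have hfg : ∀ h ∈ Z, ∀ x, f x ≤ g ((h : ZMod p) * x) := fun h hh x =>
      rr_dil _ _ _ (hS i h hh) _ _
    have hg1 : 0 < ∑ x, g x := by
      rw [hgs]; apply pow_pos; exact_mod_cast hSi.card_pos
    have hg2 : 0 < ∑ x, g x ^ 2 := rr_sq_pos _ hSi _
    have hf0 : ∀ x, 0 ≤ f x := fun x => rr_nonneg _ _ _
    obtain ⟨h0, hh0⟩ := hZ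
    have hf1 : ∑ x, f x ≤ ∑ x, g x := by
      rw [← sum_dil g h0]
      exact Finset.sum_le_sum fun x _ => hfg h0 hh0 x
    have hf2 : ∑ x, f x ^ 2 ≤ ∑ x, g x ^ 2 := by
      rw [← sum_dil (fun x => g x ^ 2) h0]
      exact Finset.sum_le_sum fun x _ => pow_le_pow_left₀ (hf0 x) (hfg h0 hh0 x) 2
    have hfs0 : 0 ≤ ∑ x, f x := Finset.sum_nonneg fun x _ => hf0 x
    have eΛ : Λ ^ (2 * 2 ^ (j + 1)) = (Λ ^ 2 ^ j) ^ 2 * Λ ^ (2 * 2 ^ j) := by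
      rw [← pow_mul, ← pow_add]; congr 1; ring
    have eΛ2 : Λ ^ (2 * 2 ^ j) = (Λ ^ 2 ^ j) ^ 2 := by
      rw [← pow_mul]; congr 1; ring
    have hΛ0 : 0 < Λ ^ 2 ^ j := by positivity
    by_cases hE : (∑ x, g x) ^ 2 * (∑ x, g x ^ 2) ≤ M * ∑ x, cv f f x ^ 2
    · rcases hC p f g Z M hM hf0 ⟨h0, hh0⟩ hfg hZZ hg1 hg2 hE with h | h | h
      · exfalso
        obtain ⟨n, hn⟩ : ∃ n, 2 ^ j = n + 1 := ⟨2 ^ j - 1, by have : 0 < 2 ^ j := by positivity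
                                                              omega⟩
        have h1 : ∑ x, g x ^ 2 ≤ ((((S (i + 1)).card : ℝ)) ^ n) ^ 2 * (S (i + 1)).card := by
          rw [hg, hn]; exact rr_sq_le _ _
        rw [hgs, hn] at h
        have hcpos : (0:ℝ) < (S (i + 1)).card := by exact_mod_cast hSi.card_pos
        have h2 : M ^ C < (S (i + 1)).card := lt_of_lt_of_le hbig (by exact_mod_cast hSl _)
        set c : ℝ := ((S (i + 1)).card : ℝ) with hcdef
        have h3 : (c ^ (n + 1)) ^ 2 < (c ^ (n + 1)) ^ 2 := by
          calc (c ^ (n + 1)) ^ 2 ≤ M ^ C * ∑ x, g x ^ 2 := h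
            _ ≤ M ^ C * ((c ^ n) ^ 2 * c) := by gcongr
            _ < c * ((c ^ n) ^ 2 * c) := by gcongr
            _ = _ := by ring
        exact lt_irrefl _ h3
      · exfalso; linarith
      · calc ∑ x, cv f f x ^ 2 ≤ (∑ x, f x) ^ 2 * ∑ x, f x ^ 2 := young hf0
          _ ≤ (∑ x, g x) ^ 2 * ∑ x, g x ^ 2 := by gcongr
          _ ≤ (∑ x, g x) ^ 2 * (M ^ C * (∑ x, g x) ^ 2 / p) := by
            gcongr
            rw [le_div_iff₀ hp]; linarith
          _ ≤ (Λ ^ (2 ^ j)) ^ 2 * (M ^ C * (Λ ^ (2 ^ j)) ^ 2 / p) := by gcongr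
          _ = Λ ^ (2 * 2 ^ (j + 1)) * (M ^ C / p) := by rw [eΛ, eΛ2]; ring
          _ ≤ _ := by
            gcongr
            exact le_max_right _ _
    · push Not at hE
      have h1 : M * ∑ x, cv f f x ^ 2 ≤ M * (Λ ^ (2 * 2 ^ (j + 1)) * max ((M ^ (j + 1))⁻¹) (M ^ C / p)) := by
        calc M * ∑ x, cv f f x ^ 2 ≤ (∑ x, g x) ^ 2 * ∑ x, g x ^ 2 := hE.le
          _ ≤ (Λ ^ (2 ^ j)) ^ 2 * (Λ ^ (2 * 2 ^ j) * max ((M ^ j)⁻¹) (M ^ C / p)) := by gcongr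
          _ = Λ ^ (2 * 2 ^ (j + 1)) * max ((M ^ j)⁻¹) (M ^ C / p) := by rw [eΛ]; ring
          _ ≤ Λ ^ (2 * 2 ^ (j + 1)) * (M * max ((M ^ (j + 1))⁻¹) (M ^ C / p)) := by
            gcongr
            rw [mul_max_of_nonneg _ _ hM0.le]
            apply max_le_max
            · apply le_of_eq
              rw [pow_succ]; field_simp
            · have : 0 ≤ M ^ C / p := by positivity
              nlinarith
          _ = _ := by ring
      exact le_of_mul_le_mul_left h1 hM0

end Iter
end S5


namespace S5
set_option linter.unusedSectionVars false

section Chain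
variable {p : ℕ} [Fact p.Prime]

/-- truth value as a real -/
def tv (P : Prop) [Decidable P] : ℝ := if P then 1 else 0

lemma tv_nonneg (P : Prop) [Decidable P] : 0 ≤ tv P := by unfold tv; split_ifs <;> norm_num

lemma tv_congr {P Q : Prop} [Decidable P] [Decidable Q] (h : P ↔ Q) : tv P = tv Q := by
  unfold tv; simp only [h]

/-- dilation operator -/
def matD (Z : Finset (ZMod p)ˣ) : Matrix (ZMod p) (ZMod p) ℝ :=
  fun v x => ∑ z ∈ Z, tv (x = (z : ZMod p) * v)

/-- translation operator -/
def matT (t : ZMod p) : Matrix (ZMod p) (ZMod p) ℝ := fun v x => tv (x = v + t)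

/-- sum-product operator -/
def tun (Z : Finset (ZMod p)ˣ) (t : ZMod p) : Matrix (ZMod p) (ZMod p) ℝ :=
  matD Z * matT t * (matD Z).transpose

/-- half step operator -/
def matQ (Z : Finset (ZMod p)ˣ) (t : ZMod p) : Matrix (ZMod p) (ZMod p) ℝ :=
  (matD Z).transpose * matD Z * matT t

/-- operator represented by a weight -/
def rep (α : ZMod p) (N : (ZMod p)ˣ → ZMod p → ℝ) : Matrix (ZMod p) (ZMod p) ℝ :=
  fun v x => ∑ y, ∑ s, N y s * tv ((y : ZMod p) * x = v + α * s)

/-- step on weights -/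
def stepN (Z : Finset (ZMod p)ˣ) (ε : ZMod p) (N : (ZMod p)ˣ → ZMod p → ℝ) :
    (ZMod p)ˣ → ZMod p → ℝ :=
  fun y s => ∑ z ∈ Z, ∑ z' ∈ Z, N (y * z' / z) (s - ε * (y : ZMod p))

lemma mul_matT (X : Matrix (ZMod p) (ZMod p) ℝ) (t : ZMod p) (v x : ZMod p) :
    (X * matT t) v x = X v (x - t) := by
  rw [Matrix.mul_apply]
  rw [Finset.sum_eq_single (x - t)]
  · simp [matT, tv]
  · intro y _ hy
    have : ¬ (x = y + t) := fun h => hy (by rw [h]; ring)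
    simp [matT, tv, this]
  · intro h; exact absurd (Finset.mem_univ _) h

lemma matT_transpose (t : ZMod p) : (matT t).transpose = matT (-t) := by
  ext v x
  simp only [Matrix.transpose_apply, matT]
  apply tv_congr
  constructor
  · intro h; rw [h]; ring
  · intro h; rw [h]; ring

lemma tun_transpose (Z : Finset (ZMod p)ˣ) (t : ZMod p) : (tun Z t).transpose = tun Z (-t) := by
  unfold tun
  rw [Matrix.transpose_mul, Matrix.transpose_mul, Matrix.transpose_transpose, matT_transpose, Matrix.mul_assoc]

lemma mul_matD (X : Matrix (ZMod p) (ZMod p) ℝ) (Z : Finset (ZMod p)ˣ) (v x : ZMod p) :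
    (X * matD Z) v x = ∑ z ∈ Z, X v (((z⁻¹ : (ZMod p)ˣ) : ZMod p) * x) := by
  rw [Matrix.mul_apply]
  simp only [matD, Finset.mul_sum]
  rw [Finset.sum_comm]
  refine Finset.sum_congr rfl fun z _ => ?_
  rw [Finset.sum_eq_single (((z⁻¹ : (ZMod p)ˣ) : ZMod p) * x)]
  · rw [Units.mul_inv_cancel_left]; unfold tv; rw [if_pos rfl, mul_one]
  · intro y _ hy
    have : ¬ (x = (z : ZMod p) * y) := fun h => hy (by rw [h, Units.inv_mul_cancel_left])
    simp only [tv, this, if_false, mul_zero]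
  · intro h; exact absurd (Finset.mem_univ _) h

lemma mul_matD_transpose (X : Matrix (ZMod p) (ZMod p) ℝ) (Z : Finset (ZMod p)ˣ) (v x : ZMod p) :
    (X * (matD Z).transpose) v x = ∑ z ∈ Z, X v ((z : ZMod p) * x) := by
  rw [Matrix.mul_apply]
  simp only [matD, Matrix.transpose_apply, Finset.mul_sum]
  rw [Finset.sum_comm]
  refine Finset.sum_congr rfl fun z _ => ?_
  rw [Finset.sum_eq_single ((z : ZMod p) * x)]
  · simp [tv]
  · intro y _ hy
    simp only [tv, hy, if_false, mul_zero]
  · intro h; exact absurd (Finset.mem_univ _) h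

lemma mul_matQ (X : Matrix (ZMod p) (ZMod p) ℝ) (Z : Finset (ZMod p)ˣ) (t v x : ZMod p) :
    (X * matQ Z t) v x = ∑ z' ∈ Z, ∑ z ∈ Z, X v ((z : ZMod p) * (((z'⁻¹ : (ZMod p)ˣ) : ZMod p) * (x - t))) := by
  unfold matQ
  rw [← Matrix.mul_assoc, ← Matrix.mul_assoc, mul_matT, mul_matD]
  refine Finset.sum_congr rfl fun z _ => ?_
  rw [mul_matD_transpose]

lemma rep_step (Z : Finset (ZMod p)ˣ) (α ε : ZMod p) (N : (ZMod p)ˣ → ZMod p → ℝ) :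
    rep α N * matQ Z (ε * α) = rep α (stepN Z ε N) := by
  ext v x
  rw [mul_matQ]
  simp only [rep, stepN, Finset.sum_mul]
  have h1 : ∀ (y : (ZMod p)ˣ), ∑ s, ∑ z ∈ Z, ∑ z' ∈ Z, N (y * z' / z) (s - ε * (y : ZMod p)) * tv ((y : ZMod p) * x = v + α * s)
      = ∑ z ∈ Z, ∑ z' ∈ Z, ∑ s, N (y * z' / z) (s - ε * (y : ZMod p)) * tv ((y : ZMod p) * x = v + α * s) := by
    intro y
    rw [Finset.sum_comm]
    refine Finset.sum_congr rfl fun z _ => ?_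
    rw [Finset.sum_comm]
  simp_rw [h1]
  rw [Finset.sum_comm]
  conv_rhs => rw [Finset.sum_comm]
  refine Finset.sum_congr rfl fun z _ => ?_
  conv_rhs => rw [Finset.sum_comm]
  refine Finset.sum_congr rfl fun z' _ => ?_
  rw [Fintype.sum_equiv (Equiv.mulRight (z * z'⁻¹)) _
    (fun y => ∑ s, N (y * z' / z) (s - ε * (y : ZMod p)) * tv ((y : ZMod p) * x = v + α * s))]
  intro y
  simp only [Equiv.coe_mulRight]
  refine Eq.trans ?_ (sum_shift' _ (ε * ((y * (z * z'⁻¹) : (ZMod p)ˣ) : ZMod p)))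
  refine Finset.sum_congr rfl fun s _ => ?_
  have e1 : y * (z * z'⁻¹) * z' / z = y := by
    rw [mul_assoc, mul_assoc, inv_mul_cancel, mul_one, mul_div_cancel_right]
  rw [e1, add_sub_cancel_right]
  congr 1
  apply tv_congr
  push_cast
  constructor
  · intro h; linear_combination h
  · intro h; linear_combination h

/-- cross correlation of representation counts -/
def corr (S : Finset (ZMod p)ˣ) (a b : ℕ) (s : ZMod p) : ℝ := ∑ x, rr S a (x + s) * rr S b x

lemma corr_nonneg (S : Finset (ZMod p)ˣ) (a b : ℕ) (s : ZMod p) : 0 ≤ corr S a b s :=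
  Finset.sum_nonneg fun x _ => mul_nonneg (rr_nonneg _ _ _) (rr_nonneg _ _ _)

lemma corr_left (S : Finset (ZMod p)ˣ) (a b : ℕ) (s : ZMod p) :
    corr S (a + 1) b s = ∑ y ∈ S, corr S a b (s - (y : ZMod p)) := by
  unfold corr
  simp only [rr, Finset.sum_mul]
  rw [Finset.sum_comm]
  refine Finset.sum_congr rfl fun y _ => Finset.sum_congr rfl fun x _ => ?_
  rw [add_sub_assoc]

lemma corr_right (S : Finset (ZMod p)ˣ) (a b : ℕ) (s : ZMod p) :
    corr S a (b + 1) s = ∑ y ∈ S, corr S a b (s + (y : ZMod p)) := by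
  unfold corr
  simp only [rr, Finset.mul_sum]
  rw [Finset.sum_comm]
  refine Finset.sum_congr rfl fun y _ => ?_
  conv_rhs => rw [← sum_shift _ (y : ZMod p)]
  refine Finset.sum_congr rfl fun x _ => ?_
  congr 2
  ring

lemma corr_zero (S : Finset (ZMod p)ˣ) (s : ZMod p) : corr S 1 0 s = rr S 1 s := by
  unfold corr
  rw [Finset.sum_eq_single 0]
  · simp [rr]
  · intro x _ hx
    have : rr S 0 x = 0 := by simp [rr, hx]
    rw [this, mul_zero]
  · intro h; exact absurd (Finset.mem_univ _) h

/-- invariants of a weight after k half steps -/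
structure Inv (Z S : Finset (ZMod p)ˣ) (k a b : ℕ) (N : (ZMod p)ˣ → ZMod p → ℝ) : Prop where
  nonneg : ∀ y s, 0 ≤ N y s
  supp : ∀ y s, N y s ≠ 0 → y ∈ Z⁻¹ * (Z / Z) ^ k
  marg : ∀ s, ∑ y, N y s ≤ (Z.card : ℝ) ^ k * corr S a b s
  mass : ∑ y, ∑ s, N y s ≤ (Z.card : ℝ) ^ (2 * k + 1)

lemma step_nonneg {Z : Finset (ZMod p)ˣ} {ε : ZMod p} {N : (ZMod p)ˣ → ZMod p → ℝ}
    (h : ∀ y s, 0 ≤ N y s) (y : (ZMod p)ˣ) (s : ZMod p) : 0 ≤ stepN Z ε N y s :=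
  Finset.sum_nonneg fun _ _ => Finset.sum_nonneg fun _ _ => h _ _

lemma step_supp {Z : Finset (ZMod p)ˣ} {ε : ZMod p} {N : (ZMod p)ˣ → ZMod p → ℝ} {k : ℕ}
    (h : ∀ y s, N y s ≠ 0 → y ∈ Z⁻¹ * (Z / Z) ^ k) (y : (ZMod p)ˣ) (s : ZMod p)
    (hy : stepN Z ε N y s ≠ 0) : y ∈ Z⁻¹ * (Z / Z) ^ (k + 1) := by
  obtain ⟨z, hz, h1⟩ := Finset.exists_ne_zero_of_sum_ne_zero hy
  obtain ⟨z', hz', h2⟩ := Finset.exists_ne_zero_of_sum_ne_zero h1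
  have h3 := h _ _ h2
  have e : y = (y * z' / z) * (z / z') := by
    rw [div_mul_div_cancel, mul_div_cancel_right]
  rw [pow_succ, ← mul_assoc, e]
  exact Finset.mul_mem_mul h3 (Finset.div_mem_div hz hz')

lemma step_marg {Z S : Finset (ZMod p)ˣ} {ε : ZMod p} {N : (ZMod p)ˣ → ZMod p → ℝ} {k : ℕ}
    (h0 : ∀ y s, 0 ≤ N y s)
    (h : ∀ y s, N y s ≠ 0 → y ∈ Z⁻¹ * (Z / Z) ^ k) (hS : Z⁻¹ * (Z / Z) ^ (k + 1) ⊆ S)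
    {φ : ZMod p → ℝ} (hφ : ∀ s, ∑ y, N y s ≤ φ s) (s : ZMod p) :
    ∑ y, stepN Z ε N y s ≤ Z.card * ∑ y ∈ S, φ (s - ε * (y : ZMod p)) := by
  have h1 : ∑ y, stepN Z ε N y s = ∑ y ∈ S, stepN Z ε N y s := by
    symm
    apply Finset.sum_subset (Finset.subset_univ _)
    intro y _ hy
    by_contra hc
    exact hy (hS (step_supp h y s hc))
  rw [h1, Finset.mul_sum]
  apply Finset.sum_le_sum
  intro y _
  unfold stepN
  rw [Finset.sum_comm, ← nsmul_eq_mul, ← Finset.sum_const]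
  apply Finset.sum_le_sum
  intro z' _
  refine le_trans ?_ (hφ _)
  calc ∑ z ∈ Z, N (y * z' / z) (s - ε * (y : ZMod p)) = ∑ t ∈ Z.image (fun z => y * z' / z), N t (s - ε * (y : ZMod p)) := by
        rw [Finset.sum_image (fun a _ b _ hab => by simpa using hab)]
    _ ≤ _ := Finset.sum_le_sum_of_subset_of_nonneg (Finset.subset_univ _) (fun t _ _ => h0 _ _)

lemma step_mass {Z : Finset (ZMod p)ˣ} {ε : ZMod p} {N : (ZMod p)ˣ → ZMod p → ℝ} :
    ∑ y, ∑ s, stepN Z ε N y s = (Z.card : ℝ) ^ 2 * ∑ y, ∑ s, N y s := by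
  unfold stepN
  have h1 : ∀ (y : (ZMod p)ˣ), ∑ s, ∑ z ∈ Z, ∑ z' ∈ Z, N (y * z' / z) (s - ε * (y : ZMod p))
      = ∑ z ∈ Z, ∑ z' ∈ Z, ∑ s, N (y * z' / z) s := by
    intro y
    rw [Finset.sum_comm]
    refine Finset.sum_congr rfl fun z _ => ?_
    rw [Finset.sum_comm]
    refine Finset.sum_congr rfl fun z' _ => ?_
    exact sum_shift (fun s => N (y * z' / z) s) _
  simp_rw [h1]
  rw [Finset.sum_comm]
  have h2 : ∀ z ∈ Z, ∑ y, ∑ z' ∈ Z, ∑ s, N (y * z' / z) s = Z.card * ∑ y, ∑ s, N y s := by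
    intro z _
    rw [Finset.sum_comm, ← nsmul_eq_mul, ← Finset.sum_const]
    refine Finset.sum_congr rfl fun z' _ => ?_
    exact Fintype.sum_equiv (Equiv.mulRight (z' * z⁻¹)) _ _ (fun y => by
      simp only [Equiv.coe_mulRight]
      rw [div_eq_mul_inv, mul_assoc])
  rw [Finset.sum_congr rfl h2, Finset.sum_const, nsmul_eq_mul]
  ring

lemma Inv.minus {Z S : Finset (ZMod p)ˣ} {k a b : ℕ} {N : (ZMod p)ˣ → ZMod p → ℝ}
    (h : Inv Z S k a b N) (hS : Z⁻¹ * (Z / Z) ^ (k + 1) ⊆ S) : Inv Z S (k + 1) a (b + 1) (stepN Z (-1) N) where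
  nonneg := step_nonneg h.nonneg
  supp := step_supp h.supp
  marg := by
    intro s
    refine (step_marg h.nonneg h.supp hS h.marg s).trans (le_of_eq ?_)
    rw [corr_right, Finset.mul_sum, Finset.mul_sum]
    refine Finset.sum_congr rfl fun y _ => ?_
    have : s - -1 * (y : ZMod p) = s + y := by ring
    rw [this]; ring
  mass := by
    rw [step_mass]
    calc (Z.card : ℝ) ^ 2 * ∑ y, ∑ s, N y s ≤ (Z.card : ℝ) ^ 2 * (Z.card : ℝ) ^ (2 * k + 1) := by
          gcongr
          exact h.mass
      _ = _ := by ring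

lemma Inv.plus {Z S : Finset (ZMod p)ˣ} {k a b : ℕ} {N : (ZMod p)ˣ → ZMod p → ℝ}
    (h : Inv Z S k a b N) (hS : Z⁻¹ * (Z / Z) ^ (k + 1) ⊆ S) : Inv Z S (k + 1) (a + 1) b (stepN Z 1 N) where
  nonneg := step_nonneg h.nonneg
  supp := step_supp h.supp
  marg := by
    intro s
    refine (step_marg h.nonneg h.supp hS h.marg s).trans (le_of_eq ?_)
    rw [corr_left, Finset.mul_sum, Finset.mul_sum]
    refine Finset.sum_congr rfl fun y _ => ?_
    rw [one_mul]; ring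
  mass := by
    rw [step_mass]
    calc (Z.card : ℝ) ^ 2 * ∑ y, ∑ s, N y s ≤ (Z.card : ℝ) ^ 2 * (Z.card : ℝ) ^ (2 * k + 1) := by
          gcongr
          exact h.mass
      _ = _ := by ring

/-- base weight -/
def baseN (Z : Finset (ZMod p)ˣ) : (ZMod p)ˣ → ZMod p → ℝ :=
  fun y s => tv (y ∈ Z⁻¹ ∧ s = (y : ZMod p))

lemma base_inv (Z S : Finset (ZMod p)ˣ) (hS : Z⁻¹ ⊆ S) : Inv Z S 0 1 0 (baseN Z) where
  nonneg := fun y s => tv_nonneg _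
  supp := by
    intro y s h
    rw [pow_zero, mul_one]
    by_contra hc
    apply h
    unfold baseN tv
    rw [if_neg (fun hh => hc hh.1)]
  marg := by
    intro s
    rw [pow_zero, one_mul, corr_zero]
    simp only [rr]
    rw [← Finset.sum_subset (Finset.subset_univ S)]
    · apply Finset.sum_le_sum
      intro y _
      unfold baseN tv
      by_cases hc : s = (y : ZMod p)
      · rw [if_pos (sub_eq_zero.2 hc)]
        split_ifs <;> norm_num
      · rw [if_neg (fun hh => hc hh.2)]
        split_ifs <;> norm_num
    · intro y _ hy
      unfold baseN tv
      rw [if_neg (fun hh => hy (hS hh.1))]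
  mass := by
    unfold baseN tv
    have : ∀ y : (ZMod p)ˣ, (∑ s : ZMod p, if (y ∈ Z⁻¹ ∧ s = (y : ZMod p)) then (1:ℝ) else 0) = if y ∈ Z⁻¹ then 1 else 0 := by
      intro y
      by_cases hy : y ∈ Z⁻¹ <;> simp [hy]
    simp_rw [this]
    rw [Finset.sum_boole, Finset.filter_mem_eq_inter, Finset.univ_inter, Finset.card_inv]
    simp

lemma base_rep (Z : Finset (ZMod p)ˣ) (α : ZMod p) : matD Z * matT α = rep α (baseN Z) := by
  ext v x
  rw [mul_matT]
  unfold matD rep baseN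
  have h1 : ∀ y : (ZMod p)ˣ, ∑ s, tv (y ∈ Z⁻¹ ∧ s = (y : ZMod p)) * tv ((y : ZMod p) * x = v + α * s)
      = if y ∈ Z⁻¹ then tv ((y : ZMod p) * x = v + α * y) else 0 := by
    intro y
    rw [Finset.sum_eq_single (y : ZMod p)]
    · by_cases hy : y ∈ Z⁻¹ <;> simp [hy, tv]
    · intro s _ hs
      simp [tv, hs]
    · intro h; exact absurd (Finset.mem_univ _) h
  simp_rw [h1]
  rw [← Finset.sum_filter, Finset.filter_mem_eq_inter, Finset.univ_inter, ← Finset.image_inv_eq_inv,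
    Finset.sum_image (fun a _ b _ hab => inv_injective hab)]
  refine Finset.sum_congr rfl fun z _ => ?_
  apply tv_congr
  constructor
  · intro h
    have e : x = (z : ZMod p) * v + α := by linear_combination h
    rw [e, mul_add, Units.inv_mul_cancel_left]; ring
  · intro h
    have := congrArg (fun t => (z : ZMod p) * t) h
    simp only [Units.mul_inv_cancel_left, mul_add] at this
    rw [this]
    have : (z : ZMod p) * (α * ((z⁻¹ : (ZMod p)ˣ) : ZMod p)) = α := by
      rw [mul_left_comm, Units.mul_inv, mul_one]
    rw [this]; ring

lemma rep_trace (Z : Finset (ZMod p)ˣ) (α : ZMod p) (hα : α ≠ 0) (N : (ZMod p)ˣ → ZMod p → ℝ)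
    (h0 : ∀ y s, 0 ≤ N y s) :
    (rep α N * (matD Z).transpose).trace ≤ Z.card * ∑ y, ∑ s, N y s + p * ∑ y, N y 0 := by
  have h1 : ∀ (z y : (ZMod p)ˣ) (s : ZMod p), ∑ v : ZMod p, tv ((y : ZMod p) * ((z : ZMod p) * v) = v + α * s)
      ≤ 1 + (p : ℝ) * tv (s = 0 ∧ y = z⁻¹) := by
    intro z y s
    unfold tv
    rw [Finset.sum_boole]
    by_cases hc : s = 0 ∧ y = z⁻¹
    · rw [if_pos hc, mul_one]
      have : (Finset.univ.filter fun v : ZMod p => (y : ZMod p) * ((z : ZMod p) * v) = v + α * s).card ≤ p := by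
        refine (Finset.card_le_univ _).trans (le_of_eq (ZMod.card p))
      have h2 : ((Finset.univ.filter fun v : ZMod p => (y : ZMod p) * ((z : ZMod p) * v) = v + α * s).card : ℝ) ≤ p := by
        exact_mod_cast this
      linarith
    · rw [if_neg hc, mul_zero, add_zero]
      have : (Finset.univ.filter fun v : ZMod p => (y : ZMod p) * ((z : ZMod p) * v) = v + α * s).card ≤ 1 := by
        rw [Finset.card_le_one]
        intro a ha b hb
        rw [Finset.mem_filter] at ha hb
        have h3 : ((y : ZMod p) * z - 1) * (a - b) = 0 := by linear_combination ha.2 - hb.2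
        rcases mul_eq_zero.1 h3 with h4 | h4
        · exfalso
          apply hc
          have h5 : (y : ZMod p) * z = 1 := by linear_combination h4
          have h6 : α * s = 0 := by linear_combination (-1) * ha.2 + a * h4
          refine ⟨(mul_eq_zero.1 h6).resolve_left hα, ?_⟩
          apply eq_inv_of_mul_eq_one_left
          apply Units.ext
          rw [Units.val_mul, h5, Units.val_one]
        · exact sub_eq_zero.1 h4
      exact_mod_cast this
  have h2 : (rep α N * (matD Z).transpose).trace
      = ∑ z ∈ Z, ∑ y, ∑ s, N y s * ∑ v : ZMod p, tv ((y : ZMod p) * ((z : ZMod p) * v) = v + α * s) := by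
    unfold Matrix.trace
    simp only [Matrix.diag_apply, mul_matD_transpose]
    rw [Finset.sum_comm]
    refine Finset.sum_congr rfl fun z _ => ?_
    unfold rep
    rw [Finset.sum_comm]
    refine Finset.sum_congr rfl fun y _ => ?_
    rw [Finset.sum_comm]
    refine Finset.sum_congr rfl fun s _ => ?_
    rw [Finset.mul_sum]
  rw [h2]
  calc ∑ z ∈ Z, ∑ y, ∑ s, N y s * ∑ v : ZMod p, tv ((y : ZMod p) * ((z : ZMod p) * v) = v + α * s)
      ≤ ∑ z ∈ Z, ∑ y, ∑ s, N y s * (1 + (p : ℝ) * tv (s = 0 ∧ y = z⁻¹)) := by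
        refine Finset.sum_le_sum fun z _ => Finset.sum_le_sum fun y _ => Finset.sum_le_sum fun s _ => ?_
        exact mul_le_mul_of_nonneg_left (h1 z y s) (h0 y s)
    _ = ∑ z ∈ Z, (∑ y, ∑ s, N y s + p * N z⁻¹ 0) := by
        refine Finset.sum_congr rfl fun z _ => ?_
        simp only [mul_add, mul_one, Finset.sum_add_distrib]
        congr 1
        rw [Finset.sum_eq_single z⁻¹, Finset.sum_eq_single 0]
        · unfold tv; rw [if_pos ⟨rfl, rfl⟩]; ring
        · intro s _ hs
          unfold tv; rw [if_neg (fun h => hs h.1)]; ring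
        · intro h; exact absurd (Finset.mem_univ _) h
        · intro y _ hy
          refine Finset.sum_eq_zero fun s _ => ?_
          unfold tv; rw [if_neg (fun h => hy h.2)]; ring
        · intro h; exact absurd (Finset.mem_univ _) h
    _ = Z.card * ∑ y, ∑ s, N y s + p * ∑ z ∈ Z, N z⁻¹ 0 := by
        rw [Finset.sum_add_distrib, Finset.sum_const, nsmul_eq_mul, ← Finset.mul_sum]
    _ ≤ _ := by
        have : ∑ z ∈ Z, N z⁻¹ 0 ≤ ∑ y, N y 0 := by
          rw [← Fintype.sum_equiv (Equiv.inv (ZMod p)ˣ) (fun y => N y⁻¹ 0) (fun y => N y 0) (fun y => rfl)]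
          exact Finset.sum_le_sum_of_subset_of_nonneg (Finset.subset_univ _) (fun t _ _ => h0 _ _)
        have hp : (0 : ℝ) ≤ p := Nat.cast_nonneg p
        have := mul_le_mul_of_nonneg_left this hp
        linarith

lemma chain (Z S : Finset (ZMod p)ˣ) (α : ZMod p) (n : ℕ)
    (hS : ∀ k, k ≤ 2 * n + 1 → Z⁻¹ * (Z / Z) ^ k ⊆ S) :
    ∃ N, Inv Z S (2 * n + 1) (n + 1) (n + 1) N ∧
      (tun Z α * (tun Z α).transpose) ^ (n + 1) = rep α N * (matD Z).transpose := by
  induction n with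
  | zero =>
    refine ⟨_, (base_inv Z S (by simpa using hS 0 (by omega))).minus (hS 1 (by omega)), ?_⟩
    rw [← rep_step, ← base_rep, zero_add, pow_one, tun_transpose]
    unfold tun matQ
    simp only [Matrix.mul_assoc, neg_mul, one_mul]
  | succ n ih =>
    obtain ⟨N, hN, hE⟩ := ih (fun k hk => hS k (by omega))
    refine ⟨_, (hN.plus (hS _ (by omega))).minus (hS _ (by omega)), ?_⟩
    rw [← rep_step, ← rep_step, pow_succ, hE, tun_transpose]
    unfold tun matQ
    simp only [Matrix.mul_assoc, neg_mul, one_mul]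

lemma trace_bound (Z S : Finset (ZMod p)ˣ) (α : ZMod p) (hα : α ≠ 0) (n : ℕ)
    (hS : ∀ k, k ≤ 2 * n + 1 → Z⁻¹ * (Z / Z) ^ k ⊆ S) :
    ((tun Z α * (tun Z α).transpose) ^ (n + 1)).trace
      ≤ (Z.card : ℝ) ^ (4 * (n + 1)) + p * (Z.card : ℝ) ^ (2 * n + 1) * ∑ x, rr S (n + 1) x ^ 2 := by
  obtain ⟨N, hN, hE⟩ := chain Z S α n hS
  rw [hE]
  refine (rep_trace Z α hα N hN.nonneg).trans ?_
  have h1 := hN.marg 0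
  have h2 : corr S (n + 1) (n + 1) 0 = ∑ x, rr S (n + 1) x ^ 2 := by
    unfold corr
    refine Finset.sum_congr rfl fun x _ => ?_
    rw [add_zero, sq]
  rw [h2] at h1
  have hp : (0 : ℝ) ≤ p := Nat.cast_nonneg p
  have hz : (0 : ℝ) ≤ Z.card := Nat.cast_nonneg _
  have h3 := mul_le_mul_of_nonneg_left h1 hp
  have h4 := mul_le_mul_of_nonneg_left hN.mass hz
  have h5 : (Z.card : ℝ) * (Z.card : ℝ) ^ (2 * (2 * n + 1) + 1) = (Z.card : ℝ) ^ (4 * (n + 1)) := by ring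
  rw [h5] at h4
  linarith

end Chain
end S5


namespace S5
set_option linter.unusedSectionVars false

section Spectral
variable {ι : Type} [Fintype ι] [DecidableEq ι]

/-- all ones -/
def onesM (ι : Type) : Matrix ι ι ℝ := fun _ _ => 1

lemma ones_mul_ones : onesM ι * onesM ι = (Fintype.card ι : ℝ) • onesM ι := by
  ext i j
  simp [Matrix.mul_apply, onesM]

lemma mul_ones {G : Matrix ι ι ℝ} {q : ℝ} (h : ∀ i, ∑ j, G i j = q) : G * onesM ι = q • onesM ι := by
  ext i j
  simp [Matrix.mul_apply, onesM, h]

lemma ones_mul {G : Matrix ι ι ℝ} {q : ℝ} (h : ∀ j, ∑ i, G i j = q) : onesM ι * G = q • onesM ι := by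
  ext i j
  simp [Matrix.mul_apply, onesM, h]

lemma ones_transpose : (onesM ι).transpose = onesM ι := rfl

lemma centered_pow [Nonempty ι] {W : Matrix ι ι ℝ} {r : ℝ} (h1 : W * onesM ι = r • onesM ι)
    (h2 : onesM ι * W = r • onesM ι) (n : ℕ) :
    (W - (r / Fintype.card ι) • onesM ι) ^ (n + 1) = W ^ (n + 1) - (r ^ (n + 1) / Fintype.card ι) • onesM ι := by
  have hc : (Fintype.card ι : ℝ) ≠ 0 := by exact_mod_cast Fintype.card_ne_zero
  induction n with
  | zero => simp
  | succ n ih =>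
    have h3 : W ^ (n + 1) * onesM ι = r ^ (n + 1) • onesM ι := by
      clear ih
      induction n with
      | zero => simp [h1]
      | succ n ih => rw [pow_succ, Matrix.mul_assoc, h1, Matrix.mul_smul, ih, smul_smul]; congr 1; ring
    rw [pow_succ, ih, pow_succ W (n + 1)]
    simp only [Matrix.sub_mul, Matrix.mul_sub, Matrix.mul_smul, Matrix.smul_mul, h2, h3, ones_mul_ones, smul_smul]
    have e3 : r ^ (n + 1) / (Fintype.card ι : ℝ) * r = r ^ (n + 1 + 1) / Fintype.card ι := by
      rw [pow_succ r (n + 1)]; ring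
    rw [e3, div_mul_cancel₀ _ hc, sub_self, smul_zero, sub_zero]

lemma centered_sq [Nonempty ι] {G : Matrix ι ι ℝ} {q : ℝ} (hr : ∀ i, ∑ j, G i j = q) (hcol : ∀ j, ∑ i, G i j = q) :
    (G - (q / Fintype.card ι) • onesM ι) * (G - (q / Fintype.card ι) • onesM ι).transpose
      = G * G.transpose - (q ^ 2 / Fintype.card ι) • onesM ι := by
  have hc : (Fintype.card ι : ℝ) ≠ 0 := by exact_mod_cast Fintype.card_ne_zero
  have h1 := mul_ones hr
  have h2 : onesM ι * G.transpose = q • onesM ι := ones_mul (G := G.transpose) (fun j => hr j)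
  rw [Matrix.transpose_sub, Matrix.transpose_smul, ones_transpose]
  simp only [Matrix.sub_mul, Matrix.mul_sub, Matrix.mul_smul, Matrix.smul_mul, h1, h2, ones_mul_ones, smul_smul]
  have e2 : q / (Fintype.card ι : ℝ) * q = q ^ 2 / Fintype.card ι := by ring
  rw [e2, div_mul_cancel₀ _ hc, sub_self, smul_zero, sub_zero]

lemma centered_trace [Nonempty ι] {G : Matrix ι ι ℝ} {q : ℝ} (hr : ∀ i, ∑ j, G i j = q)
    (hcol : ∀ j, ∑ i, G i j = q) (n : ℕ) :
    (((G - (q / Fintype.card ι) • onesM ι) * (G - (q / Fintype.card ι) • onesM ι).transpose) ^ (n + 1)).trace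
      = ((G * G.transpose) ^ (n + 1)).trace - q ^ (2 * (n + 1)) := by
  have hc : (Fintype.card ι : ℝ) ≠ 0 := by exact_mod_cast Fintype.card_ne_zero
  have h1 := mul_ones hr
  have h2 := ones_mul hcol
  have h3 : onesM ι * G.transpose = q • onesM ι := ones_mul (G := G.transpose) (fun j => hr j)
  have h4 : G.transpose * onesM ι = q • onesM ι := mul_ones (G := G.transpose) (fun j => hcol j)
  rw [centered_sq hr hcol, centered_pow]
  · rw [Matrix.trace_sub, Matrix.trace_smul]
    have : (onesM ι).trace = Fintype.card ι := by simp [Matrix.trace, onesM]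
    rw [this, smul_eq_mul, div_mul_cancel₀ _ hc, ← pow_mul]
  · rw [Matrix.mul_assoc, h4, Matrix.mul_smul, h1, smul_smul, sq]
  · rw [← Matrix.mul_assoc, h2, Matrix.smul_mul, h3, smul_smul, sq]

lemma dot_sq_le (x y : ι → ℝ) : (x ⬝ᵥ y) ^ 2 ≤ (x ⬝ᵥ x) * (y ⬝ᵥ y) := by
  unfold dotProduct
  have := Finset.sum_mul_sq_le_sq_mul_sq Finset.univ x y
  simpa only [sq] using this

lemma dot_self_nonneg (x : ι → ℝ) : 0 ≤ x ⬝ᵥ x :=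
  Finset.sum_nonneg fun i _ => mul_self_nonneg _

lemma dot_trans (M : Matrix ι ι ℝ) (x y : ι → ℝ) : x ⬝ᵥ (M.mulVec y) = (M.transpose.mulVec x) ⬝ᵥ y := by
  rw [Matrix.dotProduct_mulVec, Matrix.mulVec_transpose]

lemma frob (M : Matrix ι ι ℝ) (x : ι → ℝ) :
    (M.mulVec x) ⬝ᵥ (M.mulVec x) ≤ (M * M.transpose).trace * (x ⬝ᵥ x) := by
  unfold Matrix.trace
  rw [Finset.sum_mul]
  unfold Matrix.mulVec
  rw [dotProduct]
  refine Finset.sum_le_sum fun i _ => ?_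
  have := dot_sq_le (fun j => M i j) x
  rw [sq] at this
  exact this

lemma spectral (B : Matrix ι ι ℝ) (x y : ι → ℝ) (J : ℕ) (hJ : 1 ≤ J) :
    (x ⬝ᵥ B.mulVec y) ^ (2 * 2 ^ J) ≤ (y ⬝ᵥ y) ^ (2 ^ J) * (x ⬝ᵥ x) ^ (2 ^ J) * ((B * B.transpose) ^ (2 ^ J)).trace := by
  set S := B * B.transpose with hSdef
  have hsym : ∀ m, (S ^ m).transpose = S ^ m := by
    intro m
    rw [Matrix.transpose_pow, hSdef, Matrix.transpose_mul, Matrix.transpose_transpose]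
  set a : ℕ → ℝ := fun k => x ⬝ᵥ (S ^ k).mulVec x with ha
  have hdbl : ∀ m, a (2 * m) = (S ^ m).mulVec x ⬝ᵥ (S ^ m).mulVec x := by
    intro m
    simp only [ha]
    rw [two_mul, pow_add, ← Matrix.mulVec_mulVec, dot_trans, hsym]
  have ha0 : a 0 = x ⬝ᵥ x := by simp [ha]
  have ha0n : 0 ≤ a 0 := by rw [ha0]; exact dot_self_nonneg x
  have h1 : ∀ m, a m ^ 2 ≤ a 0 * a (2 * m) := by
    intro m
    rw [hdbl, ha0]
    exact dot_sq_le _ _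
  have ha1 : a 1 = B.transpose.mulVec x ⬝ᵥ B.transpose.mulVec x := by
    simp only [ha]
    rw [pow_one, hSdef, ← Matrix.mulVec_mulVec, dot_trans]
  have ha1n : 0 ≤ a 1 := by rw [ha1]; exact dot_self_nonneg _
  have hdn : ∀ m, 0 ≤ a (2 * m) := by intro m; rw [hdbl]; exact dot_self_nonneg _
  have h2 : (x ⬝ᵥ B.mulVec y) ^ 2 ≤ a 1 * (y ⬝ᵥ y) := by
    rw [dot_trans, ha1]; exact dot_sq_le _ _
  have htr : 0 ≤ (S ^ (2 ^ J)).trace ∧ a (2 ^ J) ≤ (S ^ (2 ^ J)).trace * a 0 := by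
    obtain ⟨j, rfl⟩ : ∃ j, J = j + 1 := ⟨J - 1, by omega⟩
    have e : 2 ^ (j + 1) = 2 * 2 ^ j := by ring
    have e2 : S ^ (2 * 2 ^ j) = S ^ (2 ^ j) * (S ^ (2 ^ j)).transpose := by
      rw [hsym, two_mul, pow_add]
    rw [e]
    constructor
    · rw [e2]
      unfold Matrix.trace
      refine Finset.sum_nonneg fun i _ => ?_
      exact dot_self_nonneg (fun k => (S ^ (2 ^ j)) i k)
    · rw [hdbl, ha0, e2]
      exact frob _ _
  rcases eq_or_lt_of_le ha0n with h0 | h0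
  · have hx : x = 0 := by
      have : x ⬝ᵥ x = 0 := by rw [← ha0, ← h0]
      exact dotProduct_self_eq_zero.1 this
    rw [hx]
    simp
  have hind : ∀ j, a 1 ^ (2 ^ j) * a 0 ≤ a 0 ^ (2 ^ j) * a (2 ^ j) := by
    intro j
    induction j with
    | zero => simp [mul_comm]
    | succ j ih =>
      have e : 2 ^ (j + 1) = 2 * 2 ^ j := by ring
      rw [e]
      have hn : 0 ≤ a 1 ^ (2 ^ j) * a 0 := by positivity
      have h3 : (a 1 ^ (2 ^ j) * a 0) ^ 2 ≤ (a 0 ^ (2 ^ j) * a (2 ^ j)) ^ 2 := pow_le_pow_left₀ hn ih 2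
      have h4 : (a 0 ^ (2 ^ j) * a (2 ^ j)) ^ 2 ≤ (a 0 ^ (2 ^ j)) ^ 2 * (a 0 * a (2 * 2 ^ j)) := by
        rw [mul_pow]
        exact mul_le_mul_of_nonneg_left (h1 _) (by positivity)
      have h5 : a 0 * (a 1 ^ (2 * 2 ^ j) * a 0) ≤ a 0 * (a 0 ^ (2 * 2 ^ j) * a (2 * 2 ^ j)) := by
        calc a 0 * (a 1 ^ (2 * 2 ^ j) * a 0) = (a 1 ^ (2 ^ j) * a 0) ^ 2 := by ring
          _ ≤ _ := h3.trans h4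
          _ = _ := by ring
      exact le_of_mul_le_mul_left h5 h0
  have h6 : a 1 ^ (2 ^ J) ≤ a 0 ^ (2 ^ J) * (S ^ (2 ^ J)).trace := by
    have h7 := (hind J).trans (mul_le_mul_of_nonneg_left htr.2 (by positivity : 0 ≤ a 0 ^ (2 ^ J)))
    refine le_of_mul_le_mul_right (h7.trans (le_of_eq ?_)) h0
    ring
  have hy := dot_self_nonneg y
  rw [pow_mul]
  calc ((x ⬝ᵥ B.mulVec y) ^ 2) ^ (2 ^ J) ≤ (a 1 * (y ⬝ᵥ y)) ^ (2 ^ J) := pow_le_pow_left₀ (sq_nonneg _) h2 _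
    _ = (y ⬝ᵥ y) ^ (2 ^ J) * a 1 ^ (2 ^ J) := by rw [mul_pow]; ring
    _ ≤ (y ⬝ᵥ y) ^ (2 ^ J) * (a 0 ^ (2 ^ J) * (S ^ (2 ^ J)).trace) := mul_le_mul_of_nonneg_left h6 (by positivity)
    _ = _ := by rw [ha0]; ring

end Spectral

section Apply
variable {p : ℕ} [Fact p.Prime]

lemma tun_apply (Z : Finset (ZMod p)ˣ) (t v u : ZMod p) :
    tun Z t v u = ∑ z ∈ Z, ∑ z' ∈ Z, tv ((z : ZMod p) * u = (z' : ZMod p) * v + t) := by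
  unfold tun
  rw [mul_matD_transpose]
  refine Finset.sum_congr rfl fun z _ => ?_
  rw [mul_matT]
  unfold matD
  refine Finset.sum_congr rfl fun z' _ => ?_
  exact tv_congr sub_eq_iff_eq_add

lemma tun_row (Z : Finset (ZMod p)ˣ) (t v : ZMod p) : ∑ u, tun Z t v u = (Z.card : ℝ) ^ 2 := by
  simp only [tun_apply]
  rw [Finset.sum_comm]
  have : ∀ z ∈ Z, ∑ u : ZMod p, ∑ z' ∈ Z, tv ((z : ZMod p) * u = (z' : ZMod p) * v + t) = Z.card := by
    intro z _
    rw [Finset.sum_comm]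
    have : ∀ z' ∈ Z, ∑ u : ZMod p, tv ((z : ZMod p) * u = (z' : ZMod p) * v + t) = 1 := by
      intro z' _
      rw [Finset.sum_eq_single (((z⁻¹ : (ZMod p)ˣ) : ZMod p) * ((z' : ZMod p) * v + t))]
      · unfold tv; rw [Units.mul_inv_cancel_left, if_pos rfl]
      · intro u _ hu
        unfold tv
        rw [if_neg]
        intro h
        exact hu (by rw [← h, Units.inv_mul_cancel_left])
      · intro h; exact absurd (Finset.mem_univ _) h
    rw [Finset.sum_congr rfl this]; simp
  rw [Finset.sum_congr rfl this]; simp [sq]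

lemma tun_col (Z : Finset (ZMod p)ˣ) (t u : ZMod p) : ∑ v, tun Z t v u = (Z.card : ℝ) ^ 2 := by
  have := tun_row Z (-t) u
  rw [← tun_transpose] at this
  exact this

/-- indicator vector -/
def iv (U : Finset (ZMod p)) : ZMod p → ℝ := fun x => tv (x ∈ U)

lemma iv_sum (U : Finset (ZMod p)) (f : ZMod p → ℝ) : ∑ x, iv U x * f x = ∑ x ∈ U, f x := by
  unfold iv tv
  simp

lemma iv_dot (U : Finset (ZMod p)) : iv U ⬝ᵥ iv U = U.card := by
  unfold dotProduct
  rw [iv_sum]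
  unfold iv tv
  simp

lemma tun_mix (Z S : Finset (ZMod p)ˣ) (α : ZMod p) (hα : α ≠ 0) (J : ℕ) (hJ : 1 ≤ J)
    (hS : ∀ k, k ≤ 2 * 2 ^ J → Z⁻¹ * (Z / Z) ^ k ⊆ S) (U V : Finset (ZMod p)) :
    (∑ v ∈ V, ∑ u ∈ U, tun Z α v u - (Z.card : ℝ) ^ 2 * U.card * V.card / p) ^ (2 * 2 ^ J)
      ≤ (U.card : ℝ) ^ (2 ^ J) * (V.card : ℝ) ^ (2 ^ J) *
        (p * (Z.card : ℝ) ^ (2 * 2 ^ J - 1) * ∑ x, rr S (2 ^ J) x ^ 2) := by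
  have hpc : Fintype.card (ZMod p) = p := ZMod.card p
  have h1 := spectral (tun Z α - ((Z.card : ℝ) ^ 2 / Fintype.card (ZMod p)) • onesM (ZMod p)) (iv V) (iv U) J hJ
  rw [iv_dot, iv_dot] at h1
  have h2 : iv V ⬝ᵥ (tun Z α - ((Z.card : ℝ) ^ 2 / Fintype.card (ZMod p)) • onesM (ZMod p)).mulVec (iv U)
      = ∑ v ∈ V, ∑ u ∈ U, tun Z α v u - (Z.card : ℝ) ^ 2 * U.card * V.card / p := by
    unfold dotProduct
    rw [iv_sum]
    have : ∀ v ∈ V, (tun Z α - ((Z.card : ℝ) ^ 2 / Fintype.card (ZMod p)) • onesM (ZMod p)).mulVec (iv U) v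
        = ∑ u ∈ U, tun Z α v u - (Z.card : ℝ) ^ 2 / p * U.card := by
      intro v _
      unfold Matrix.mulVec
      rw [dotProduct_comm]
      unfold dotProduct
      rw [iv_sum]
      simp only [Matrix.sub_apply, Matrix.smul_apply, onesM, smul_eq_mul, mul_one, Finset.sum_sub_distrib, Finset.sum_const,
        nsmul_eq_mul, hpc]
      ring
    rw [Finset.sum_congr rfl this, Finset.sum_sub_distrib, Finset.sum_const, nsmul_eq_mul]
    ring
  rw [h2] at h1
  have hn : 1 ≤ 2 ^ J := Nat.one_le_two_pow
  obtain ⟨n, hn'⟩ : ∃ n, 2 ^ J = n + 1 := ⟨2 ^ J - 1, by omega⟩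
  rw [hn'] at h1 hS ⊢
  rw [centered_trace (tun_row Z α) (tun_col Z α)] at h1
  have h3 := trace_bound Z S α hα n (fun k hk => hS k (by omega))
  have e : 2 * (n + 1) - 1 = 2 * n + 1 := by omega
  rw [e]
  refine h1.trans ?_
  apply mul_le_mul_of_nonneg_left _ (by positivity)
  have e2 : ((Z.card : ℝ) ^ 2) ^ (2 * (n + 1)) = (Z.card : ℝ) ^ (4 * (n + 1)) := by
    rw [← pow_mul]; congr 1; ring
  rw [e2]
  linarith

end Apply
end S5


namespace S5
set_option linter.unusedSectionVars false

section Core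
variable {p : ℕ} [Fact p.Prime]

lemma plu (Z : Finset (ZMod p)ˣ) (hZ : Z.Nonempty) (Kt : ℝ) (hK : 1 ≤ Kt)
    (hZZ : ((Z * Z).card : ℝ) ≤ Kt * Z.card) (a b : ℕ) :
    ((Z ^ a / Z ^ b).card : ℝ) ≤ Kt ^ (a + b) * Z.card := by
  have h := Finset.pluennecke_ruzsa_inequality_pow_div_pow_mul hZ Z a b
  have h2 := (NNRat.cast_le (K := ℝ)).2 h
  push_cast at h2
  have hz : (0 : ℝ) < Z.card := by exact_mod_cast hZ.card_pos
  refine h2.trans ?_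
  have h3 : ((Z * Z).card : ℝ) / Z.card ≤ Kt := by rw [div_le_iff₀ hz]; exact hZZ
  have h4 : 0 ≤ ((Z * Z).card : ℝ) / Z.card := by positivity
  exact mul_le_mul_of_nonneg_right (pow_le_pow_left₀ h4 h3 _) hz.le

lemma core {C : ℕ} (hC : FlatProp C) (Z : Finset (ZMod p)ˣ) (hZ : Z.Nonempty) (Kt M : ℝ) (hK : 2 ≤ Kt)
    (hZZ : ((Z * Z).card : ℝ) ≤ Kt * Z.card) (hM : Kt ^ 2 ≤ M) (hbig : M ^ C < Z.card)
    (J : ℕ) (hJ : 1 ≤ J) (hp : (p : ℝ) ≤ M ^ J) (α : ZMod p) (hα : α ≠ 0) (U V : Finset (ZMod p)) :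
    (∑ v ∈ V, ∑ u ∈ U, tun Z α v u - (Z.card : ℝ) ^ 2 * U.card * V.card / p) ^ (2 * 2 ^ J)
      ≤ ((U.card : ℝ) * V.card) ^ (2 ^ J) * (Z.card : ℝ) ^ (4 * 2 ^ J) *
        (Kt ^ (12 * 2 ^ J * 2 ^ J) * M ^ C / Z.card) := by
  have hK1 : 1 ≤ Kt := by linarith
  have hz : (0 : ℝ) < Z.card := by exact_mod_cast hZ.card_pos
  have hM2 : 2 ≤ M := by nlinarith
  have hp0 : (0 : ℝ) < p := by exact_mod_cast (Fact.out : p.Prime).pos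
  set n := 2 ^ J with hn
  have hn1 : 1 ≤ n := Nat.one_le_two_pow
  have hJn : J ≤ n := (Nat.lt_two_pow_self).le
  set S : ℕ → Finset (ZMod p)ˣ := fun i => Z ^ (i + 2 * n) / Z ^ (2 * n + 1) with hS
  have hSne : ∀ i, (Z ^ (i + 2 * n)).Nonempty := fun i => hZ.pow
  have hstep : ∀ i, ∀ z ∈ Z, ∀ s ∈ S i, z * s ∈ S (i + 1) := by
    intro i z hz s hs
    obtain ⟨x, hx, y, hy, rfl⟩ := Finset.mem_div.1 hs
    rw [← mul_div_assoc]
    refine Finset.div_mem_div ?_ hy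
    have : i + 1 + 2 * n = (i + 2 * n) + 1 := by ring
    rw [this, pow_succ']
    exact Finset.mul_mem_mul hz hx
  have hlow : ∀ i, Z.card ≤ (S i).card := by
    intro i
    have h1 : Z.card ≤ (Z ^ (2 * n + 1)).card := by
      rw [pow_succ]
      exact Finset.card_le_card_mul_left hZ.pow
    refine h1.trans ?_
    simp only [hS]
    rw [div_eq_mul_inv, ← Finset.card_inv (Z ^ (2 * n + 1))]
    exact Finset.card_le_card_mul_left (hSne i)
  have hup : ∀ i, i ≤ J → ((S i).card : ℝ) ≤ Kt ^ (6 * n) * Z.card := by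
    intro i hi
    refine (plu Z hZ Kt hK1 hZZ _ _).trans ?_
    apply mul_le_mul_of_nonneg_right _ hz.le
    exact pow_le_pow_right₀ hK1 (by omega)
  have hdiv : ((Z / Z).card : ℝ) ≤ M * Z.card := by
    have := plu Z hZ Kt hK1 hZZ 1 1
    rw [pow_one] at this
    refine this.trans ?_
    exact mul_le_mul_of_nonneg_right hM hz.le
  have hsub : ∀ k, k ≤ 2 * n → Z⁻¹ * (Z / Z) ^ k ⊆ S 0 := by
    intro k hk
    have h1 : (1 : Finset (ZMod p)ˣ) ⊆ Z / Z := by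
      rw [Finset.one_subset, Finset.one_mem_div_iff]
      rw [Finset.not_disjoint_iff]
      obtain ⟨z, hz⟩ := hZ
      exact ⟨z, hz, hz⟩
    have h2 : (Z / Z) ^ k ⊆ (Z / Z) ^ (2 * n) := Finset.pow_subset_pow_right (Finset.one_subset.1 h1) hk
    refine (Finset.mul_subset_mul_left h2).trans (le_of_eq ?_)
    simp only [hS, zero_add]
    rw [div_pow, pow_succ, ← div_div, div_eq_mul_inv _ Z, mul_comm]
  have h1 := tun_mix Z (S 0) α hα J hJ hsub U V
  have h2 := iter hC Z hZ M (Kt ^ (6 * n) * Z.card) hM2 hdiv hbig S J hstep hlow hup J le_rfl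
  rw [Nat.sub_self] at h2
  have hMp : 0 < M := by linarith
  have hMC : 1 ≤ M ^ C := one_le_pow₀ (by linarith)
  have h3 : max ((M ^ J)⁻¹) (M ^ C / p) = M ^ C / p := by
    apply max_eq_right
    rw [inv_eq_one_div]
    exact (one_div_le_one_div_of_le hp0 hp).trans (div_le_div_of_nonneg_right hMC hp0.le)
  rw [h3] at h2
  rw [← hn] at h1 h2
  refine h1.trans ?_
  have h4 : (p : ℝ) * (Z.card : ℝ) ^ (2 * n - 1) * ∑ x, rr (S 0) n x ^ 2
      ≤ p * (Z.card : ℝ) ^ (2 * n - 1) * ((Kt ^ (6 * n) * Z.card) ^ (2 * n) * (M ^ C / p)) :=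
    mul_le_mul_of_nonneg_left h2 (by positivity)
  have h5 : (p : ℝ) * (Z.card : ℝ) ^ (2 * n - 1) * ((Kt ^ (6 * n) * Z.card) ^ (2 * n) * (M ^ C / p))
      = (Z.card : ℝ) ^ (4 * n) * (Kt ^ (12 * n * n) * M ^ C / Z.card) := by
    have e1 : (Z.card : ℝ) ^ (4 * n) = (Z.card : ℝ) ^ (2 * n - 1) * (Z.card : ℝ) ^ (2 * n) * Z.card := by
      rw [← pow_add, ← pow_succ]; congr 1; omega
    rw [e1, mul_pow, ← pow_mul]
    have e2 : 6 * n * (2 * n) = 12 * n * n := by ring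
    rw [e2]
    field_simp
  rw [h5] at h4
  calc (U.card : ℝ) ^ n * (V.card : ℝ) ^ n * (p * (Z.card : ℝ) ^ (2 * n - 1) * ∑ x, rr (S 0) n x ^ 2)
      ≤ (U.card : ℝ) ^ n * (V.card : ℝ) ^ n * ((Z.card : ℝ) ^ (4 * n) * (Kt ^ (12 * n * n) * M ^ C / Z.card)) :=
        mul_le_mul_of_nonneg_left h4 (by positivity)
    _ = _ := by rw [mul_pow]; ring

lemma params (C : ℕ) (hC : 1 ≤ C) (P Kt δ : ℝ) (hK : 2 ≤ Kt) (hKP : Real.log Kt < Real.log P)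
    (hP : 1 < P) (hδ : 0 < δ) (hδ1 : δ ≤ 1)
    (h : (8 * C + 7 : ℝ) / Real.log (Real.log P / Real.log Kt) ≤ δ) :
    ∃ J k : ℕ, 1 ≤ J ∧ 1 ≤ k ∧ (k : ℝ) ≤ (4 * C + 5) / δ ∧ P ≤ (P ^ (δ / (4 * C))) ^ J ∧
      Kt ^ 2 ≤ P ^ (δ / (4 * C)) ∧ (P ^ (δ / (4 * C))) ^ C = P ^ (δ / 4) ∧
      Kt ^ (12 * 2 ^ J * 2 ^ J) ≤ P ^ (δ / 4) ∧ P ^ (-(δ / (4 * 2 ^ J))) ≤ P ^ (-(1 : ℝ) / 16 ^ k) := by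
  have hP0 : 0 < P := by linarith
  have hC' : (1 : ℝ) ≤ C := by exact_mod_cast hC
  have hK0 : 0 < Kt := by linarith
  have hlK : 0 < Real.log Kt := Real.log_pos (by linarith)
  have hlP : 0 < Real.log P := hlK.trans hKP
  have hR : 1 < Real.log P / Real.log Kt := by rw [one_lt_div hlK]; exact hKP
  have hl : 0 < Real.log (Real.log P / Real.log Kt) := Real.log_pos hR
  have h1 : (8 * C + 7 : ℝ) / δ ≤ Real.log (Real.log P / Real.log Kt) := by
    rw [div_le_iff₀ hl] at h
    rw [div_le_iff₀ hδ]; linarith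
  have h2 : Real.exp ((8 * C + 7 : ℝ) / δ) * Real.log Kt ≤ Real.log P := by
    have := Real.exp_le_exp.2 h1
    rw [Real.exp_log (by linarith)] at this
    rwa [le_div_iff₀ hlK] at this
  have hinv : 1 ≤ 1 / δ := by rw [le_div_iff₀ hδ]; linarith
  set J := ⌈4 * (C : ℝ) / δ⌉₊ with hJ
  have hJl : 4 * (C : ℝ) / δ ≤ J := Nat.le_ceil _
  have hJu : (J : ℝ) < 4 * (C : ℝ) / δ + 1 := Nat.ceil_lt_add_one (by positivity)
  set I := ⌈1 / δ⌉₊ with hI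
  have hIl : 1 / δ ≤ I := Nat.le_ceil _
  have hIu : (I : ℝ) < 1 / δ + 1 := Nat.ceil_lt_add_one (by positivity)
  have hpos : 0 < 4 * (C : ℝ) / δ := by positivity
  have e4 : 4 * (C : ℝ) / δ = 4 * C * (1 / δ) := by ring
  refine ⟨J, J + 2 + I, ?_, by omega, ?_, ?_, ?_, ?_, ?_, ?_⟩
  · have : (0 : ℝ) < J := by linarith
    exact_mod_cast this
  · push_cast
    have : (4 * (C : ℝ) + 5) / δ = 4 * (C : ℝ) / δ + 5 * (1 / δ) := by ring
    rw [this]; linarith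
  · rw [← Real.rpow_natCast, ← Real.rpow_mul hP0.le]
    have : (1 : ℝ) ≤ δ / (4 * C) * J := by
      have h3 : δ / (4 * C) * (4 * (C : ℝ) / δ) = 1 := by field_simp
      rw [← h3]
      exact mul_le_mul_of_nonneg_left hJl (by positivity)
    calc P = P ^ (1 : ℝ) := (Real.rpow_one P).symm
      _ ≤ _ := Real.rpow_le_rpow_of_exponent_le hP.le this
  · rw [← Real.log_le_log_iff (by positivity) (by positivity), Real.log_pow, Real.log_rpow hP0]
    push_cast
    have h3 : 8 * C / δ ≤ Real.exp ((8 * C + 7 : ℝ) / δ) := by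
      have := Real.add_one_le_exp ((8 * C + 7 : ℝ) / δ)
      have e : (8 * C + 7 : ℝ) / δ = 8 * C / δ + 7 * (1 / δ) := by ring
      linarith
    have h4 : 8 * C / δ * Real.log Kt ≤ Real.log P := (mul_le_mul_of_nonneg_right h3 hlK.le).trans h2
    calc 2 * Real.log Kt = δ / (4 * C) * (8 * C / δ * Real.log Kt) := by field_simp; norm_num
      _ ≤ _ := mul_le_mul_of_nonneg_left h4 (by positivity)
  · rw [← Real.rpow_natCast, ← Real.rpow_mul hP0.le]
    congr 1
    field_simp
  · rw [← Real.log_le_log_iff (by positivity) (by positivity), Real.log_pow, Real.log_rpow hP0]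
    push_cast
    have e1 : (2 : ℝ) ≤ Real.exp 1 := by have := Real.add_one_le_exp (1 : ℝ); linarith
    have hn : (2 : ℝ) ^ J * 2 ^ J ≤ 4 * Real.exp (8 * C / δ) := by
      have h3 : (2 : ℝ) ^ J ≤ 2 ^ (4 * (C : ℝ) / δ + 1) := by
        rw [← Real.rpow_natCast]
        exact Real.rpow_le_rpow_of_exponent_le (by norm_num) hJu.le
      have h4 : (2 : ℝ) ^ (4 * (C : ℝ) / δ + 1) = 2 ^ (4 * (C : ℝ) / δ) * 2 := by
        rw [Real.rpow_add (by norm_num), Real.rpow_one]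
      have h5 : (2 : ℝ) ^ (4 * (C : ℝ) / δ) ≤ Real.exp (4 * C / δ) := by
        calc (2 : ℝ) ^ (4 * (C : ℝ) / δ) ≤ (Real.exp 1) ^ (4 * (C : ℝ) / δ) :=
              Real.rpow_le_rpow (by norm_num) e1 hpos.le
          _ = _ := by rw [← Real.exp_mul, one_mul]
      have h6 : (2 : ℝ) ^ J ≤ Real.exp (4 * C / δ) * 2 := by rw [h4] at h3; linarith
      calc (2 : ℝ) ^ J * 2 ^ J ≤ (Real.exp (4 * C / δ) * 2) * (Real.exp (4 * C / δ) * 2) :=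
            mul_le_mul h6 h6 (by positivity) (by positivity)
        _ = 4 * Real.exp (4 * C / δ + 4 * C / δ) := by rw [Real.exp_add]; ring
        _ = _ := by congr 2; ring
    have h3 : 48 * (2 ^ J * 2 ^ J) * (1 / δ) ≤ Real.exp ((8 * C + 7 : ℝ) / δ) := by
      have e : (8 * C + 7 : ℝ) / δ = 8 * C / δ + (6 * (1 / δ) + 1 / δ) := by ring
      rw [e, Real.exp_add, Real.exp_add]
      have h7 : 1 / δ ≤ Real.exp (1 / δ) := by have := Real.add_one_le_exp (1 / δ); linarith
      have h8 : (192 : ℝ) ≤ Real.exp (6 * (1 / δ)) := by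
        have h9 : Real.exp 6 ≤ Real.exp (6 * (1 / δ)) := Real.exp_le_exp.2 (by linarith)
        have h10 : Real.exp 6 = Real.exp 1 ^ 6 := by rw [← Real.exp_nat_mul]; norm_num
        have h11 : (2.7 : ℝ) ^ 6 ≤ Real.exp 1 ^ 6 :=
          pow_le_pow_left₀ (by norm_num) (by have := Real.exp_one_gt_d9; linarith) 6
        have h12 : (192 : ℝ) ≤ 2.7 ^ 6 := by norm_num
        linarith
      calc 48 * (2 ^ J * 2 ^ J) * (1 / δ) ≤ 48 * (4 * Real.exp (8 * C / δ)) * Real.exp (1 / δ) := by gcongr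
        _ = Real.exp (8 * C / δ) * (192 * Real.exp (1 / δ)) := by ring
        _ ≤ _ := by gcongr
    have h4 := (mul_le_mul_of_nonneg_right h3 hlK.le).trans h2
    calc (12 : ℝ) * 2 ^ J * 2 ^ J * Real.log Kt = δ / 4 * (48 * (2 ^ J * 2 ^ J) * (1 / δ) * Real.log Kt) := by
          field_simp; norm_num
      _ ≤ _ := mul_le_mul_of_nonneg_left h4 (by positivity)
  · apply Real.rpow_le_rpow_of_exponent_le hP.le
    rw [neg_div, neg_le_neg_iff]
    rw [div_le_div_iff₀ (by positivity) (by positivity)]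
    have h3 : (1 / δ) ≤ 2 ^ I := by
      have : (I : ℝ) ≤ 2 ^ I := by exact_mod_cast (Nat.lt_two_pow_self).le
      linarith
    have h4 : (4 * 2 ^ J : ℝ) * (1 / δ) ≤ 2 ^ (J + 2 + I) := by
      calc (4 * 2 ^ J : ℝ) * (1 / δ) ≤ (4 * 2 ^ J : ℝ) * 2 ^ I := by gcongr
        _ = _ := by ring
    have h5 : (2 : ℝ) ^ (J + 2 + I) ≤ 16 ^ (J + 2 + I) := pow_le_pow_left₀ (by norm_num) (by norm_num) _
    have h6 := mul_le_mul_of_nonneg_left (h4.trans h5) hδ.le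
    calc 1 * (4 * 2 ^ J : ℝ) = δ * ((4 * 2 ^ J : ℝ) * (1 / δ)) := by field_simp
      _ ≤ _ := h6

end Core
end S5


namespace S5
set_option linter.unusedSectionVars false

section Final
variable {p : ℕ} [Fact p.Prime]

/-- lift of a set of nonzero elements to units -/
def lif (Z : Finset (ZMod p)) : Finset (ZMod p)ˣ := Finset.univ.filter (fun u => (u : ZMod p) ∈ Z)

lemma mem_lif {Z : Finset (ZMod p)} {u : (ZMod p)ˣ} : u ∈ lif Z ↔ (u : ZMod p) ∈ Z := by
  simp [lif]

lemma lif_image {Z : Finset (ZMod p)} (hZ : ∀ z ∈ Z, z ≠ 0) :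
    (lif Z).image (fun u : (ZMod p)ˣ => (u : ZMod p)) = Z := by
  ext x
  rw [Finset.mem_image]
  constructor
  · rintro ⟨u, hu, rfl⟩; exact mem_lif.1 hu
  · intro hx
    exact ⟨Units.mk0 x (hZ x hx), mem_lif.2 hx, rfl⟩

lemma lif_card {Z : Finset (ZMod p)} (hZ : ∀ z ∈ Z, z ≠ 0) : (lif Z).card = Z.card := by
  conv_rhs => rw [← lif_image hZ]
  rw [Finset.card_image_of_injective _ Units.val_injective]

lemma lif_mul {Z : Finset (ZMod p)} (hZ : ∀ z ∈ Z, z ≠ 0) : (lif Z * lif Z).card ≤ (Z * Z).card := by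
  rw [← Finset.card_image_of_injective (lif Z * lif Z) (Units.val_injective (α := ZMod p))]
  apply Finset.card_le_card
  intro x hx
  obtain ⟨u, hu, rfl⟩ := Finset.mem_image.1 hx
  obtain ⟨a, ha, b, hb, rfl⟩ := Finset.mem_mul.1 hu
  rw [Units.val_mul]
  exact Finset.mul_mem_mul (mem_lif.1 ha) (mem_lif.1 hb)

lemma count_le (Z : Finset (ZMod p)ˣ) (α β : ZMod p) (hβ : β ≠ 0) (A B : Finset (ZMod p))
    (hA : ∀ a ∈ A, a ≠ 0) (hB : ∀ b ∈ B, b ≠ 0) (f : ZMod p → ZMod p) (B' : Finset (ZMod p))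
    (hB' : ∀ b ∈ B', b ∈ B ∧ f b ∈ A ∧ α * b + β ≠ 0 ∧ f b = b / (α * b + β))
    (U V : Finset (ZMod p)) (hU : ∀ a ∈ A, ∀ z ∈ Z, (a * (z : ZMod p))⁻¹ ∈ U)
    (hV : ∀ b ∈ B, ∀ z ∈ Z, β * (b * (z : ZMod p))⁻¹ ∈ V) :
    (B'.card : ℝ) * (Z.card : ℝ) ^ 2 ≤ ∑ v ∈ V, ∑ u ∈ U, tun Z α v u := by
  have h1 : ∑ v ∈ V, ∑ u ∈ U, tun Z α v u
      = ∑ z ∈ Z, ∑ z' ∈ Z, ∑ v ∈ V, ∑ u ∈ U, tv ((z : ZMod p) * u = (z' : ZMod p) * v + α) := by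
    simp only [tun_apply]
    have : ∀ v ∈ V, ∑ u ∈ U, ∑ z ∈ Z, ∑ z' ∈ Z, tv ((z : ZMod p) * u = (z' : ZMod p) * v + α)
        = ∑ z ∈ Z, ∑ z' ∈ Z, ∑ u ∈ U, tv ((z : ZMod p) * u = (z' : ZMod p) * v + α) := by
      intro v _
      rw [Finset.sum_comm]
      refine Finset.sum_congr rfl fun z _ => ?_
      rw [Finset.sum_comm]
    rw [Finset.sum_congr rfl this, Finset.sum_comm]
    refine Finset.sum_congr rfl fun z _ => ?_
    rw [Finset.sum_comm]
  have h2 : ∀ z ∈ Z, ∀ z' ∈ Z, (B'.card : ℝ) ≤ ∑ v ∈ V, ∑ u ∈ U, tv ((z : ZMod p) * u = (z' : ZMod p) * v + α) := by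
    intro z hz z' hz'
    rw [← Finset.sum_product']
    unfold tv
    rw [Finset.sum_boole]
    norm_cast
    have hz0 : (z : ZMod p) ≠ 0 := z.ne_zero
    have hz0' : (z' : ZMod p) ≠ 0 := z'.ne_zero
    apply Finset.card_le_card_of_injOn (fun b => (β * (b * (z' : ZMod p))⁻¹, (f b * (z : ZMod p))⁻¹))
    · intro b hb
      obtain ⟨hb1, hb2, hb3, hb4⟩ := hB' b hb
      have hb0 := hB b hb1
      rw [Finset.mem_coe, Finset.mem_filter, Finset.mem_product]
      refine ⟨⟨hV b hb1 z' hz', hU _ hb2 z hz⟩, ?_⟩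
      simp only
      rw [hb4]
      have e1 : (z : ZMod p) * (b / (α * b + β) * (z : ZMod p))⁻¹ = (α * b + β) / b := by
        field_simp
      have e2 : (z' : ZMod p) * (β * (b * (z' : ZMod p))⁻¹) = β / b := by
        field_simp
      rw [e1, e2]
      field_simp
      ring
    · intro b hb c hc hbc
      have h3 := (Prod.mk.inj hbc).1
      have h4 := mul_left_cancel₀ hβ h3
      exact mul_right_cancel₀ hz0' (inv_injective h4)
  rw [h1]
  calc (B'.card : ℝ) * (Z.card : ℝ) ^ 2 = ∑ z ∈ Z, ∑ z' ∈ Z, (B'.card : ℝ) := by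
        simp only [Finset.sum_const, nsmul_eq_mul]; ring
    _ ≤ _ := Finset.sum_le_sum fun z hz => Finset.sum_le_sum fun z' hz' => h2 z hz z' hz'

lemma card_AZ (X Y Z A : Finset (ZMod p)) (hA : A = X * Y) (Ks K : ℝ)
    (h1 : (X.card : ℝ) * Y.card = Ks * A.card) (h2 : ((X * Z).card : ℝ) ≤ K * X.card) :
    ((A * Z).card : ℝ) ≤ K * Ks * A.card := by
  have e : A * Z = X * Z * Y := by rw [hA, mul_right_comm]
  have h3 : ((A * Z).card : ℝ) ≤ (X * Z).card * Y.card := by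
    rw [e]; exact_mod_cast Finset.card_mul_le
  calc ((A * Z).card : ℝ) ≤ (X * Z).card * Y.card := h3
    _ ≤ K * X.card * Y.card := mul_le_mul_of_nonneg_right h2 (Nat.cast_nonneg _)
    _ = K * (X.card * Y.card) := by ring
    _ = _ := by rw [h1]; ring

lemma count_split (α β : ZMod p) (hα : α ≠ 0) (f : ZMod p → ZMod p) (A B : Finset (ZMod p)) :
    Set.ncard {q : ZMod p × ZMod p | q.1 ∈ A ∧ q.2 ∈ B ∧ q.1 = f q.2}
      ≤ (B.filter (fun b => f b ∈ A ∧ α * b + β ≠ 0)).card + 1 := by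
  have h1 : {q : ZMod p × ZMod p | q.1 ∈ A ∧ q.2 ∈ B ∧ q.1 = f q.2}
      ⊆ ((insert (-β / α) (B.filter (fun b => f b ∈ A ∧ α * b + β ≠ 0))).image (fun b => (f b, b)) : Finset _) := by
    rintro ⟨a, b⟩ ⟨ha, hb, hab⟩
    simp only at ha hb hab
    rw [Finset.mem_coe, Finset.mem_image]
    refine ⟨b, ?_, by rw [hab]⟩
    rw [Finset.mem_insert, Finset.mem_filter]
    by_cases hc : α * b + β = 0
    · left
      rw [eq_div_iff hα]
      linear_combination hc
    · right
      exact ⟨hb, hab ▸ ha, hc⟩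
  refine (Set.ncard_le_ncard h1 (Finset.finite_toSet _)).trans ?_
  rw [Set.ncard_coe_finset]
  exact Finset.card_image_le.trans (Finset.card_insert_le _ _)

end Final
end S5

open S5

set_option maxHeartbeats 2000000
theorem stmt5 :
    ∃ C0 C1 C2 : ℝ, 0 < C0 ∧ 0 < C1 ∧ 0 < C2 ∧
      ∀ (p : ℕ) [Fact p.Prime],
        ∀ α β : ZMod p, α ≠ 0 → β ≠ 0 →
          ∀ f : ZMod p → ZMod p,
            (∀ x : ZMod p, (α * x + β ≠ 0 → f x = x / (α * x + β)) ∧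
              (α * x + β = 0 → f x = α⁻¹)) →
            ∀ X Y1 Y2 Z : Finset (ZMod p),
              X.Nonempty → Y1.Nonempty → Y2.Nonempty → Z.Nonempty →
              (∀ x ∈ X, x ≠ 0) → (∀ y ∈ Y1, y ≠ 0) → (∀ y ∈ Y2, y ≠ 0) →
              (∀ z ∈ Z, z ≠ 0) →
              ∀ A B : Finset (ZMod p), A = X * Y1 → B = X * Y2 →
                ∀ Kstar K Kt : ℝ, 1 ≤ Kstar → 1 ≤ K → 2 ≤ Kt →
                  ((X.card : ℝ) * Y1.card = Kstar * A.card) →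
                  ((X.card : ℝ) * Y2.card = Kstar * B.card) →
                  (((X * Z).card : ℝ) ≤ K * X.card) →
                  (((Z * Z).card : ℝ) ≤ Kt * Z.card) →
                  Real.log Kt < Real.log p →
                  ∀ δ : ℝ, 0 < δ → δ ≤ 1 →
                    C0 / Real.log (Real.log p / Real.log Kt) ≤ δ →
                    (p : ℝ) ^ δ ≤ Z.card →
                    ∃ k : ℕ, 1 ≤ k ∧ (k : ℝ) ≤ C1 / δ ∧
                      (Set.ncard {q : ZMod p × ZMod p |
                          q.1 ∈ A ∧ q.2 ∈ B ∧ q.1 = f q.2} : ℝ)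
                          - K ^ 2 * Kstar ^ 2 * A.card * B.card / p
                        ≤ C2 * K ^ 2 * Kstar ^ 2 * Kt *
                            Real.sqrt ((A.card : ℝ) * B.card) *
                            (p : ℝ) ^ (-(1 : ℝ) / 16 ^ k) := by
  obtain ⟨C, hC1, hC⟩ : ∃ C : ℕ, 1 ≤ C ∧ FlatProp C := flat_lemma
  refine ⟨8 * C + 7, 4 * C + 5, 2, by positivity, by positivity, by norm_num, ?_⟩
  intro p _ α β hα hβ f hf X Y1 Y2 Z hX hY1 hY2 hZ hX0 hY10 hY20 hZ0 A B hA hB Ks K Kt hKs hK hKt hXY1 hXY2 hXZ hZZ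
    hlog δ hδ hδ1 hCδ hpZ
  have hp1 : (1 : ℝ) < p := by exact_mod_cast (Fact.out : p.Prime).one_lt
  have hp0 : (0 : ℝ) < p := by linarith
  obtain ⟨J, k, hJ, hk, hkC, hPJ, hM, hMC, hL, hfin⟩ := params C hC1 p Kt δ hKt hlog hp1 hδ hδ1 hCδ
  refine ⟨k, hk, hkC, ?_⟩
  have hA0 : ∀ a ∈ A, a ≠ 0 := by
    intro a ha
    rw [hA] at ha
    obtain ⟨x, hx, y, hy, rfl⟩ := Finset.mem_mul.1 ha
    exact mul_ne_zero (hX0 x hx) (hY10 y hy)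
  have hB0 : ∀ a ∈ B, a ≠ 0 := by
    intro a ha
    rw [hB] at ha
    obtain ⟨x, hx, y, hy, rfl⟩ := Finset.mem_mul.1 ha
    exact mul_ne_zero (hX0 x hx) (hY20 y hy)
  have hcard := lif_card hZ0
  have hzpos : (0 : ℝ) < Z.card := by exact_mod_cast hZ.card_pos
  have hLne : (lif Z).Nonempty := by
    rw [← Finset.card_pos, hcard]; exact hZ.card_pos
  set U : Finset (ZMod p) := (A * Z).image (fun t => t⁻¹) with hU
  set V : Finset (ZMod p) := (B * Z).image (fun t => β * t⁻¹) with hV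
  set B' := B.filter (fun b => f b ∈ A ∧ α * b + β ≠ 0) with hB'
  have hUc : (U.card : ℝ) ≤ K * Ks * A.card := by
    refine le_trans ?_ (card_AZ X Y1 Z A hA Ks K hXY1 hXZ)
    exact_mod_cast Finset.card_image_le
  have hVc : (V.card : ℝ) ≤ K * Ks * B.card := by
    refine le_trans ?_ (card_AZ X Y2 Z B hB Ks K hXY2 hXZ)
    exact_mod_cast Finset.card_image_le
  have hcount := count_le (lif Z) α β hβ A B hA0 hB0 f B'
    (fun b hb => by
      rw [hB', Finset.mem_filter] at hb
      exact ⟨hb.1, hb.2.1, hb.2.2, (hf b).1 hb.2.2⟩) U V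
    (fun a ha z hz => Finset.mem_image_of_mem _ (Finset.mul_mem_mul ha (mem_lif.1 hz)))
    (fun b hb z hz => Finset.mem_image_of_mem (fun t => β * t⁻¹) (Finset.mul_mem_mul hb (mem_lif.1 hz)))
  have hmix := core hC (lif Z) hLne Kt ((p : ℝ) ^ (δ / (4 * C))) hKt
    (by rw [hcard]; exact le_trans (by exact_mod_cast lif_mul hZ0) hZZ) hM
    (by
      rw [hMC, hcard]
      exact lt_of_lt_of_le (Real.rpow_lt_rpow_of_exponent_lt hp1 (by linarith)) hpZ)
    J hJ hPJ α hα U V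
  rw [hcard] at hmix hcount
  rw [hMC] at hmix
  set E := ∑ v ∈ V, ∑ u ∈ U, tun (lif Z) α v u - (Z.card : ℝ) ^ 2 * U.card * V.card / p with hE
  set n := 2 ^ J with hn
  have hn1 : 1 ≤ n := Nat.one_le_two_pow
  have hn0 : (0 : ℝ) < n := by exact_mod_cast hn1
  set ρ : ℝ := (p : ℝ) ^ (-(δ / (4 * n))) with hρ
  have hρ0 : 0 < ρ := Real.rpow_pos_of_pos hp0 _
  have hρ2 : ρ ^ (2 * n) = (p : ℝ) ^ (-(δ / 2)) := by
    rw [hρ, ← Real.rpow_natCast, ← Real.rpow_mul hp0.le]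
    congr 1
    push_cast
    field_simp
    norm_num
  have hfac : Kt ^ (12 * n * n) * (p : ℝ) ^ (δ / 4) / Z.card ≤ ρ ^ (2 * n) := by
    rw [hρ2, div_le_iff₀ hzpos]
    calc Kt ^ (12 * n * n) * (p : ℝ) ^ (δ / 4) ≤ (p : ℝ) ^ (δ / 4) * (p : ℝ) ^ (δ / 4) :=
          mul_le_mul_of_nonneg_right hL (by positivity)
      _ = (p : ℝ) ^ (-(δ / 2)) * (p : ℝ) ^ δ := by
          rw [← Real.rpow_add hp0, ← Real.rpow_add hp0]; congr 1; ring
      _ ≤ _ := mul_le_mul_of_nonneg_left hpZ (by positivity)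
  set s := Real.sqrt ((A.card : ℝ) * B.card) with hs
  have hs0 : 0 ≤ s := Real.sqrt_nonneg _
  have hs2 : s ^ 2 = (A.card : ℝ) * B.card := Real.sq_sqrt (by positivity)
  have hUV : (U.card : ℝ) * V.card ≤ (K * Ks * s) ^ 2 := by
    calc (U.card : ℝ) * V.card ≤ (K * Ks * A.card) * (K * Ks * B.card) :=
          mul_le_mul hUc hVc (by positivity) (by positivity)
      _ = (K * Ks) ^ 2 * ((A.card : ℝ) * B.card) := by ring
      _ = _ := by rw [← hs2]; ring
  have hEb : E ≤ K * Ks * s * (Z.card : ℝ) ^ 2 * ρ := by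
    have h0 : 0 ≤ K * Ks * s * (Z.card : ℝ) ^ 2 * ρ := by positivity
    have h1 : |E| ^ (2 * n) ≤ (K * Ks * s * (Z.card : ℝ) ^ 2 * ρ) ^ (2 * n) := by
      rw [pow_mul, sq_abs, ← pow_mul]
      refine hmix.trans ?_
      calc ((U.card : ℝ) * V.card) ^ n * (Z.card : ℝ) ^ (4 * n) * (Kt ^ (12 * n * n) * (p : ℝ) ^ (δ / 4) / Z.card)
          ≤ ((K * Ks * s) ^ 2) ^ n * (Z.card : ℝ) ^ (4 * n) * ρ ^ (2 * n) := by
            have := pow_le_pow_left₀ (by positivity) hUV n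
            exact mul_le_mul (mul_le_mul_of_nonneg_right this (by positivity)) hfac (by positivity) (by positivity)
        _ = _ := by
            rw [mul_pow (K * Ks * s * (Z.card : ℝ) ^ 2), mul_pow (K * Ks * s), ← pow_mul, ← pow_mul]
            congr 3
            ring
    have h2 := le_of_pow_le_pow_left₀ (by omega) h0 h1
    exact (le_abs_self E).trans h2
  have hB'c : (B'.card : ℝ) ≤ U.card * V.card / p + K * Ks * s * ρ := by
    have hq : (0 : ℝ) < (Z.card : ℝ) ^ 2 := by positivity
    refine le_of_mul_le_mul_right ?_ hq
    calc (B'.card : ℝ) * (Z.card : ℝ) ^ 2 ≤ E + (Z.card : ℝ) ^ 2 * U.card * V.card / p := by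
          rw [hE]; linarith
      _ ≤ K * Ks * s * (Z.card : ℝ) ^ 2 * ρ + (Z.card : ℝ) ^ 2 * U.card * V.card / p := by linarith
      _ = _ := by ring
  have hone : 1 ≤ K * s * ρ := by
    have hXA : X.card ≤ A.card := by
      rw [hA]
      obtain ⟨y, hy⟩ := hY1
      calc X.card = (X.image (fun x => x * y)).card :=
            (Finset.card_image_of_injective _ (mul_left_injective₀ (hY10 y hy))).symm
        _ ≤ _ := Finset.card_le_card (fun t ht => by
            obtain ⟨x, hx, rfl⟩ := Finset.mem_image.1 ht
            exact Finset.mul_mem_mul hx hy)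
    have hXB : X.card ≤ B.card := by
      rw [hB]
      obtain ⟨y, hy⟩ := hY2
      calc X.card = (X.image (fun x => x * y)).card :=
            (Finset.card_image_of_injective _ (mul_left_injective₀ (hY20 y hy))).symm
        _ ≤ _ := Finset.card_le_card (fun t ht => by
            obtain ⟨x, hx, rfl⟩ := Finset.mem_image.1 ht
            exact Finset.mul_mem_mul hx hy)
    have hZX : Z.card ≤ (X * Z).card := by
      obtain ⟨x, hx⟩ := hX
      calc Z.card = (Z.image (fun z => x * z)).card :=
            (Finset.card_image_of_injective _ (mul_right_injective₀ (hX0 x hx))).symm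
        _ ≤ _ := Finset.card_le_card (fun t ht => by
            obtain ⟨z, hz, rfl⟩ := Finset.mem_image.1 ht
            exact Finset.mul_mem_mul hx hz)
    have h1 : (X.card : ℝ) ≤ s := by
      apply Real.le_sqrt_of_sq_le
      rw [sq]
      exact mul_le_mul (by exact_mod_cast hXA) (by exact_mod_cast hXB) (by positivity) (by positivity)
    have h2 : (p : ℝ) ^ δ ≤ K * s := by
      have h3 : (Z.card : ℝ) ≤ (X * Z).card := by exact_mod_cast hZX
      have h4 := mul_le_mul_of_nonneg_left h1 (by linarith : 0 ≤ K)
      linarith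
    calc (1 : ℝ) ≤ (p : ℝ) ^ (δ + -(δ / (4 * n))) := by
          apply Real.one_le_rpow hp1.le
          have h5 : δ / (4 * n) ≤ δ := by
            apply div_le_self hδ.le
            have : (1 : ℝ) ≤ n := by exact_mod_cast hn1
            linarith
          linarith
      _ = (p : ℝ) ^ δ * ρ := by rw [Real.rpow_add hp0]
      _ ≤ _ := mul_le_mul_of_nonneg_right h2 hρ0.le
  have hsplit : (Set.ncard {q : ZMod p × ZMod p | q.1 ∈ A ∧ q.2 ∈ B ∧ q.1 = f q.2} : ℝ) ≤ B'.card + 1 := by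
    exact_mod_cast count_split α β hα f A B
  have hmain : (U.card : ℝ) * V.card / p ≤ K ^ 2 * Ks ^ 2 * A.card * B.card / p := by
    apply div_le_div_of_nonneg_right _ hp0.le
    refine hUV.trans (le_of_eq ?_)
    rw [mul_pow, mul_pow, hs2]; ring
  have hρk : ρ ≤ (p : ℝ) ^ (-(1 : ℝ) / 16 ^ k) := by
    have e : (n : ℝ) = 2 ^ J := by rw [hn]; push_cast; rfl
    rw [hρ, e]; exact hfin
  set τ := (p : ℝ) ^ (-(1 : ℝ) / 16 ^ k) with hτ
  have hsρ : 0 ≤ s * ρ := by positivity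
  have c1 : K * Ks ≤ K ^ 2 * Ks ^ 2 * Kt := by
    have : 1 ≤ K * Ks := one_le_mul_of_one_le_of_one_le hK hKs
    calc K * Ks ≤ (K * Ks) * (K * Ks) := le_mul_of_one_le_right (by linarith) this
      _ ≤ (K * Ks) * (K * Ks) * Kt := le_mul_of_one_le_right (by positivity) (by linarith)
      _ = _ := by ring
  have c2 : K ≤ K ^ 2 * Ks ^ 2 * Kt := (le_mul_of_one_le_right (by linarith) hKs).trans c1
  have d1 := mul_le_mul_of_nonneg_right c1 hsρ
  have d2 := mul_le_mul_of_nonneg_right c2 hsρ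
  have d3 : K ^ 2 * Ks ^ 2 * Kt * (s * ρ) ≤ K ^ 2 * Ks ^ 2 * Kt * (s * τ) := by
    apply mul_le_mul_of_nonneg_left _ (by positivity)
    exact mul_le_mul_of_nonneg_left hρk hs0
  have e1 : 2 * K ^ 2 * Ks ^ 2 * Kt * s * τ = 2 * (K ^ 2 * Ks ^ 2 * Kt * (s * τ)) := by ring
  rw [e1]
  have e2 : K * Ks * s * ρ = K * Ks * (s * ρ) := by ring
  have e3 : K * s * ρ = K * (s * ρ) := by ring
  rw [e2] at hB'c
  rw [e3] at hone
  linarith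
end

section
/- There exist absolute constants C > 0 and κ ∈ (0,1) with the following property. Let p ≥ 16 be a prime, g a primitive root modulo p, a, b ∈ F_p^*, and let n be an integer with exp(C·log p / log log p) ≤ n ≤ p/2. Set I = {a·g^i : 0 ≤ i ≤ n−1} and J = {b·g^i : 0 ≤ i ≤ n−1} (each of cardinality n). Then #{(x, y) ∈ I × J : x = f_*(y)} ≤ (1 − κ)·n. -/
open scoped BigOperators

section helpers

/-- number of points of `X` not mapped into `Y` by `f` -/
def dfc {F : Type*} [DecidableEq F] (f : F → F) (X Y : Finset F) : ℕ :=
  (X.filter (fun x => f x ∉ Y)).card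

lemma dfc_comp {F : Type*} [DecidableEq F] (f k : F → F) (hf : Function.Injective f)
    (X Y Z : Finset F) : dfc (fun x => k (f x)) X Z ≤ dfc f X Y + dfc k Y Z := by
  classical
  unfold dfc
  have hsub : X.filter (fun x => k (f x) ∉ Z) ⊆
      X.filter (fun x => f x ∉ Y) ∪ X.filter (fun x => f x ∈ Y ∧ k (f x) ∉ Z) := by
    intro x hx
    simp only [Finset.mem_filter, Finset.mem_union] at hx ⊢
    tauto
  have h2 : (X.filter (fun x => f x ∈ Y ∧ k (f x) ∉ Z)).card ≤
      (Y.filter (fun x => k x ∉ Z)).card := by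
    apply Finset.card_le_card_of_injOn f
    · intro x hx
      simp only [Finset.coe_filter, Set.mem_ofPred_eq] at hx ⊢
      exact hx.2
    · exact hf.injOn
  calc _ ≤ _ := Finset.card_le_card hsub
    _ ≤ _ := Finset.card_union_le _ _
    _ ≤ _ := by omega

lemma dfc_inv {F : Type*} [DecidableEq F] (f k : F → F) (h1 : ∀ x, k (f x) = x)
    (h2 : ∀ x, f (k x) = x) (X Y : Finset F) (hc : X.card = Y.card) :
    dfc k Y X ≤ dfc f X Y := by
  classical
  unfold dfc
  have e1 := Finset.card_filter_add_card_filter_not (s := X) (fun x => f x ∈ Y)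
  have e2 := Finset.card_filter_add_card_filter_not (s := Y) (fun x => k x ∈ X)
  have h3 : (X.filter (fun x => f x ∈ Y)).card ≤ (Y.filter (fun x => k x ∈ X)).card := by
    apply Finset.card_le_card_of_injOn f
    · intro x hx
      simp only [Finset.coe_filter, Set.mem_ofPred_eq] at hx ⊢
      exact ⟨hx.2, by rw [h1]; exact hx.1⟩
    · intro x _ y _ hxy
      rw [← h1 x, ← h1 y]
      exact congrArg k hxy
  omega

lemma dfc_pow {F : Type*} [Field F] [DecidableEq F] (h : F) (h0 : h ≠ 0) (A : Finset F)
    (hA : dfc (fun x => h * x) A A ≤ 1) (k : ℕ) : dfc (fun x => h ^ k * x) A A ≤ k := by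
  induction k with
  | zero => simp [dfc]
  | succ k ih =>
    have := dfc_comp (fun x => h ^ k * x) (fun x => h * x)
      (mul_right_injective₀ (pow_ne_zero k h0)) A A A
    have e : (fun x => h * (h ^ k * x)) = (fun x => h ^ (k+1) * x) := by
      funext x; ring
    rw [e] at this
    omega

lemma dfc_pow_inv {F : Type*} [Field F] [DecidableEq F] (h : F) (h0 : h ≠ 0) (A : Finset F)
    (hA : dfc (fun x => h * x) A A ≤ 1) (k : ℕ) : dfc (fun x => (h ^ k)⁻¹ * x) A A ≤ k := by
  have hk := pow_ne_zero k h0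
  refine le_trans (dfc_inv (fun x => h ^ k * x) _ ?_ ?_ A A rfl) (dfc_pow h h0 A hA k)
  · intro x; field_simp
  · intro x; field_simp

/-- translation defect -/
def tdf {F : Type*} [Field F] [DecidableEq F] (A : Finset F) (t : F) : ℕ :=
  dfc (fun x => x + t) A A

section field
variable {F : Type*} [Field F] [DecidableEq F]

lemma tdf_add (A : Finset F) (t s : F) : tdf A (t + s) ≤ tdf A t + tdf A s := by
  have := dfc_comp (fun x => x + t) (fun x => x + s) (add_left_injective t) A A A
  simpa [tdf, add_assoc] using this

lemma tdf_neg (A : Finset F) (t : F) : tdf A (-t) ≤ tdf A t := by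
  apply dfc_inv _ _ _ _ _ _ rfl
  · intro x; ring
  · intro x; ring

lemma tdf_mul (h : F) (h0 : h ≠ 0) (A : Finset F)
    (hA : dfc (fun x => h * x) A A ≤ 1) (j : ℕ) (t : F) :
    tdf A (h ^ j * t) ≤ tdf A t + 2 * j := by
  have hk := pow_ne_zero j h0
  have i1 : Function.Injective (fun x : F => (h ^ j)⁻¹ * x) :=
    mul_right_injective₀ (inv_ne_zero hk)
  have s1 := dfc_comp (fun x => (h ^ j)⁻¹ * x) (fun x => x + t) i1 A A A
  have s2 := dfc_comp (fun x => (h ^ j)⁻¹ * x + t) (fun x => h ^ j * x)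
    ((add_left_injective t).comp i1) A A A
  have e : (fun x => h ^ j * ((h ^ j)⁻¹ * x + t)) = fun x => x + h ^ j * t := by
    funext x; field_simp
  have a1 := dfc_pow h h0 A hA j
  have a2 := dfc_pow_inv h h0 A hA j
  simp only [e] at s2
  unfold tdf
  omega

lemma tdf_one_sub (h : F) (h0 : h ≠ 0) (A B : Finset F) (hc : A.card = B.card)
    (hA : dfc (fun x => h * x) A A ≤ 1) (hB : dfc (fun x => h * x) B B ≤ 1)
    (e : ℕ) (he : dfc (fun x => 1 - x) A B ≤ e) (k : ℕ) :
    tdf A (1 - h ^ k) ≤ 2 * e + 2 * k := by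
  have hk := pow_ne_zero k h0
  have he' : dfc (fun x => 1 - x) B A ≤ e :=
    le_trans (dfc_inv (fun x => 1 - x) _ (by intro x; ring) (by intro x; ring) A B hc) he
  have i1 : Function.Injective (fun x : F => (h ^ k)⁻¹ * x) :=
    mul_right_injective₀ (inv_ne_zero hk)
  have i2 : Function.Injective (fun x : F => 1 - x) := sub_right_injective
  have i3 : Function.Injective (fun x : F => h ^ k * x) := mul_right_injective₀ hk
  have s1 := dfc_comp (fun x => (h ^ k)⁻¹ * x) (fun x => 1 - x) i1 A A B
  have s2 := dfc_comp (fun x => 1 - (h ^ k)⁻¹ * x) (fun x => h ^ k * x) (i2.comp i1) A B B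
  have s3 := dfc_comp (fun x => h ^ k * (1 - (h ^ k)⁻¹ * x)) (fun x => 1 - x)
    (i3.comp (i2.comp i1)) A B A
  have e : (fun x => 1 - h ^ k * (1 - (h ^ k)⁻¹ * x)) = fun x => x + (1 - h ^ k) := by
    funext x; field_simp; ring
  have a1 := dfc_pow h h0 B hB k
  have a2 := dfc_pow_inv h h0 A hA k
  simp only [e] at s3
  unfold tdf
  omega

lemma tdf_sub (h : F) (h0 : h ≠ 0) (A B : Finset F) (hc : A.card = B.card)
    (hA : dfc (fun x => h * x) A A ≤ 1) (hB : dfc (fun x => h * x) B B ≤ 1)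
    (e : ℕ) (he : dfc (fun x => 1 - x) A B ≤ e) (m i j : ℕ) (hi : i ≤ m) (hj : j ≤ m) :
    tdf A (h ^ i - h ^ j) ≤ 2 * e + 2 * m := by
  have key : ∀ i j : ℕ, i ≤ j → j ≤ m → tdf A (h ^ i - h ^ j) ≤ 2 * e + 2 * m := by
    intro i j hij hj
    obtain ⟨k, rfl⟩ := Nat.exists_eq_add_of_le hij
    have a := tdf_one_sub h h0 A B hc hA hB e he k
    have b := tdf_mul h h0 A hA i (1 - h ^ k)
    have : h ^ i * (1 - h ^ k) = h ^ i - h ^ (i + k) := by ring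
    rw [this] at b
    omega
  rcases le_total i j with hij | hij
  · exact key i j hij hj
  · have := tdf_neg A (h ^ j - h ^ i)
    rw [neg_sub] at this
    exact this.trans (key j i hij hi)

/-- few translations have small defect -/
lemma tdf_count [Fintype F] (A : Finset F) (n : ℕ) (hA : A.card = n) (hn : 0 < n) :
    3 * (Finset.univ.filter (fun t => 4 * tdf A t ≤ n)).card ≤ 4 * n := by
  classical
  set S := Finset.univ.filter (fun t => 4 * tdf A t ≤ n) with hS
  have hsum : ∑ t : F, (A.filter (fun x => x + t ∈ A)).card = n * n := by
    simp only [Finset.card_filter]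
    rw [Finset.sum_comm]
    have : ∀ x ∈ A, ∑ t : F, (if x + t ∈ A then 1 else 0) = n := by
      intro x _
      rw [← Finset.card_filter, ← hA]
      apply Finset.card_bij (fun t _ => x + t)
      · intro t ht; simpa using ht
      · intro t _ s _ h; exact add_left_cancel h
      · intro y hy; exact ⟨y - x, by simpa using hy, by ring⟩
    rw [Finset.sum_congr rfl this]
    simp [hA]
  have hle : ∑ t ∈ S, (A.filter (fun x => x + t ∈ A)).card ≤ n * n := by
    rw [← hsum]
    exact Finset.sum_le_sum_of_subset (Finset.subset_univ _)
  have hge : ∀ t ∈ S, 3 * n ≤ 4 * (A.filter (fun x => x + t ∈ A)).card := by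
    intro t ht
    have ht' : 4 * tdf A t ≤ n := (Finset.mem_filter.1 ht).2
    have e1 := Finset.card_filter_add_card_filter_not (s := A) (fun x => x + t ∈ A)
    unfold tdf dfc at ht'
    beta_reduce at ht'
    omega
  have := Finset.sum_le_sum hge
  rw [Finset.sum_const, ← Finset.mul_sum, smul_eq_mul] at this
  have h4 : n * (3 * S.card) ≤ n * (4 * n) := by nlinarith
  exact Nat.le_of_mul_le_mul_left h4 hn

end field

lemma cs_collisions {α β : Type*} [DecidableEq α] [DecidableEq β] (S : Finset α) (φ : α → β)
    (T : Finset β) (hT : ∀ s ∈ S, φ s ∈ T) :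
    S.card ^ 2 ≤ T.card * ((S ×ˢ S).filter (fun w => φ w.1 = φ w.2)).card := by
  have h1 : S.card = ∑ t ∈ T, (S.filter (fun s => φ s = t)).card :=
    Finset.card_eq_sum_card_fiberwise hT
  have h2 : ((S ×ˢ S).filter (fun w => φ w.1 = φ w.2)).card
      = ∑ t ∈ T, (S.filter (fun s => φ s = t)).card ^ 2 := by
    rw [Finset.card_eq_sum_card_fiberwise (f := fun w => φ w.1) (t := T)]
    · apply Finset.sum_congr rfl
      intro t _
      rw [sq, ← Finset.card_product]
      congr 1
      ext ⟨x, y⟩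
      simp only [Finset.mem_filter, Finset.mem_product]
      constructor
      · rintro ⟨⟨⟨a, b⟩, c⟩, d⟩
        exact ⟨⟨a, d⟩, b, c ▸ d⟩
      · rintro ⟨⟨a, d⟩, b, c⟩
        exact ⟨⟨⟨a, b⟩, d.trans c.symm⟩, d⟩
    · intro w hw
      simp only [Finset.coe_filter, Set.mem_ofPred_eq, Finset.mem_product] at hw
      exact hT _ hw.1.1
  rw [h2]
  calc S.card ^ 2 = (∑ t ∈ T, (S.filter (fun s => φ s = t)).card) ^ 2 := by rw [← h1]
    _ ≤ _ := sq_sum_le_card_mul_sum_sq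

/-- total number of collisions over all slopes -/
lemma collisions_sum {F : Type*} [Field F] [DecidableEq F] [Fintype F] (G : Finset F) :
    ∑ ξ : F, (((G ×ˢ G) ×ˢ (G ×ˢ G)).filter
      (fun w => w.1.1 + ξ * w.1.2 = w.2.1 + ξ * w.2.2)).card
      ≤ Fintype.card F * G.card ^ 2 + G.card ^ 4 := by
  classical
  simp only [Finset.card_filter]
  rw [Finset.sum_comm]
  have hb : ∀ w ∈ (G ×ˢ G) ×ˢ (G ×ˢ G),
      (∑ ξ : F, if w.1.1 + ξ * w.1.2 = w.2.1 + ξ * w.2.2 then 1 else 0)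
        ≤ (if w.1 = w.2 then Fintype.card F else 0) + 1 := by
    rintro ⟨⟨x, y⟩, ⟨x', y'⟩⟩ _
    rw [← Finset.card_filter]
    split_ifs with hxy
    · exact (Finset.card_le_univ _).trans (Nat.le_succ _)
    · rw [zero_add, Finset.card_le_one]
      intro s hs t ht
      simp only [Finset.mem_filter, Finset.mem_univ, true_and] at hs ht
      by_contra hst
      apply hxy
      have h1 : (s - t) * (y - y') = 0 := by linear_combination hs - ht
      have h2 : y = y' := by
        rcases mul_eq_zero.1 h1 with h | h
        · exact absurd (sub_eq_zero.1 h) hst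
        · exact sub_eq_zero.1 h
      subst h2
      have h3 : x = x' := by simpa using hs
      simp [h3]
  refine (Finset.sum_le_sum hb).trans ?_
  rw [Finset.sum_add_distrib, Finset.sum_product]
  have : ∀ u ∈ G ×ˢ G, (∑ v ∈ G ×ˢ G, if (u, v).1 = (u, v).2 then Fintype.card F else 0)
      = Fintype.card F := by
    intro u hu
    simp only [Finset.sum_ite_eq, hu, if_true]
  rw [Finset.sum_congr rfl this]
  simp only [Finset.sum_const, Finset.card_product, smul_eq_mul, mul_one]
  apply le_of_eq
  ring

lemma core {p : ℕ} [Fact p.Prime] (h : ZMod p) (h0 : h ≠ 0) (n m e : ℕ) (A B : Finset (ZMod p))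
    (hA : A.card = n) (hB : B.card = n)
    (hAh : dfc (fun x => h * x) A A ≤ 1) (hBh : dfc (fun x => h * x) B B ≤ 1)
    (he : dfc (fun x => 1 - x) A B ≤ e)
    (hinj : Set.InjOn (fun i : ℕ => h ^ i) (Finset.range m : Set ℕ))
    (hm : 2 ≤ m) (hem : 4 * (6 * e + 12 * m) ≤ n) (hnp : 2 * n ≤ p) : m ^ 2 ≤ 4 * n := by
  classical
  have hn : 0 < n := by omega
  set G : Finset (ZMod p) := (Finset.range m).image (fun i => h ^ i) with hG
  have hGc : G.card = m := by
    rw [hG, Finset.card_image_of_injOn hinj, Finset.card_range]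
  set S : Finset (ZMod p) := Finset.univ.filter (fun t => 4 * tdf A t ≤ n) with hS
  have hSc : 3 * S.card ≤ 4 * n := tdf_count A n hA hn
  have hbas : ∀ x ∈ G, ∀ c ∈ G, ∀ d ∈ G, tdf A (x * (c - d)) ≤ 2 * e + 4 * m := by
    intro x hx c hc d hd
    simp only [hG, Finset.mem_image, Finset.mem_range] at hx hc hd
    obtain ⟨i, hi, rfl⟩ := hx
    obtain ⟨j, hj, rfl⟩ := hc
    obtain ⟨k, hk, rfl⟩ := hd
    have a := tdf_sub h h0 A B (hA.trans hB.symm) hAh hBh e he m j k hj.le hk.le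
    have b := tdf_mul h h0 A hAh i (h ^ j - h ^ k)
    omega
  let Q : ZMod p → Prop := fun ξ => ∃ a ∈ G, ∃ b ∈ G, ∃ c ∈ G, ∃ d ∈ G, c ≠ d ∧ ξ * (c - d) = a - b
  have hQ0 : Q 0 := by
    obtain ⟨c, hc, d, hd, hcd⟩ := Finset.one_lt_card.1 (by omega : 1 < G.card)
    exact ⟨c, hc, c, hc, c, hc, d, hd, hcd, by ring⟩
  by_cases hall : ∀ ξ, Q ξ
  · -- every slope is a quotient of differences
    have hξ : ∀ ξ : ZMod p, (m ^ 2) ^ 2 ≤ S.card * (((G ×ˢ G) ×ˢ (G ×ˢ G)).filter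
        (fun w => w.1.1 + ξ * w.1.2 = w.2.1 + ξ * w.2.2)).card := by
      intro ξ
      obtain ⟨a, ha, b, hb, c, hc, d, hd, hcd, hq⟩ := hall ξ
      have hcd' : c - d ≠ 0 := sub_ne_zero.2 hcd
      have key := cs_collisions (G ×ˢ G) (fun u => (u.1 + ξ * u.2) * (c - d)) S ?_
      · rw [Finset.card_product, hGc, ← sq] at key
        simpa only [mul_left_inj' hcd'] using key
      · rintro ⟨x, y⟩ hu
        rw [Finset.mem_product] at hu
        simp only [hS, Finset.mem_filter, Finset.mem_univ, true_and]
        have e1 : (x + ξ * y) * (c - d) = x * (c - d) + y * (a - b) := by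
          rw [← hq]; ring
        rw [e1]
        have := tdf_add A (x * (c - d)) (y * (a - b))
        have t1 := hbas x hu.1 c hc d hd
        have t2 := hbas y hu.2 a ha b hb
        omega
    have hs := Finset.sum_le_sum (fun ξ (_ : ξ ∈ (Finset.univ : Finset (ZMod p))) => hξ ξ)
    rw [← Finset.mul_sum, Finset.sum_const, smul_eq_mul, Finset.card_univ, ZMod.card] at hs
    have hc := collisions_sum G
    rw [ZMod.card, hGc] at hc
    have h1 : p * (m ^ 2) ^ 2 ≤ S.card * (p * m ^ 2 + m ^ 4) :=
      hs.trans (Nat.mul_le_mul_left _ hc)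
    have hm2 : 0 < m ^ 2 := by positivity
    have h2 : p * m ^ 2 ≤ S.card * (p + m ^ 2) := by
      apply Nat.le_of_mul_le_mul_left _ hm2
      calc m ^ 2 * (p * m ^ 2) = p * (m ^ 2) ^ 2 := by ring
        _ ≤ _ := h1
        _ = _ := by ring
    have h3 : 3 * (p * m ^ 2) ≤ 4 * n * (p + m ^ 2) := by
      calc 3 * (p * m ^ 2) ≤ 3 * (S.card * (p + m ^ 2)) := Nat.mul_le_mul_left _ h2
        _ = 3 * S.card * (p + m ^ 2) := by ring
        _ ≤ _ := Nat.mul_le_mul_right _ hSc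
    have h4 : 4 * n * m ^ 2 ≤ 2 * p * m ^ 2 := Nat.mul_le_mul_right _ (by omega)
    have hp : 0 < p := by omega
    apply Nat.le_of_mul_le_mul_left _ hp
    nlinarith
  · -- some slope is missing
    have hex : ∃ q, Q q ∧ ¬ Q (q + 1) := by
      by_contra hcon
      push Not at hcon
      apply hall
      have hnat : ∀ k : ℕ, Q (k : ZMod p) := by
        intro k
        induction k with
        | zero => simpa using hQ0
        | succ k ih => push_cast; exact hcon _ ih
      intro ξ
      have := hnat ξ.val
      rwa [ZMod.natCast_zmod_val] at this
    obtain ⟨q, ⟨a, ha, b, hb, c, hc, d, hd, hcd, hq⟩, hq1⟩ := hex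
    have hcd' : c - d ≠ 0 := sub_ne_zero.2 hcd
    have hcard : (G ×ˢ G).card ≤ S.card := by
      apply Finset.card_le_card_of_injOn (fun u => (u.1 + (q + 1) * u.2) * (c - d))
      · rintro ⟨x, y⟩ hu
        rw [Finset.mem_coe, Finset.mem_product] at hu
        simp only [hS, Finset.coe_filter, Set.mem_ofPred_eq, Finset.mem_univ, true_and]
        have e1 : (x + (q + 1) * y) * (c - d) = x * (c - d) + (y * (a - b) + y * (c - d)) := by
          rw [← hq]; ring
        rw [e1]
        have r1 := tdf_add A (x * (c - d)) (y * (a - b) + y * (c - d))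
        have r2 := tdf_add A (y * (a - b)) (y * (c - d))
        have t1 := hbas x hu.1 c hc d hd
        have t2 := hbas y hu.2 a ha b hb
        have t3 := hbas y hu.2 c hc d hd
        omega
      · rintro ⟨x, y⟩ hu ⟨x', y'⟩ hv huv
        rw [Finset.mem_coe, Finset.mem_product] at hu hv
        have huv' := mul_right_cancel₀ hcd' huv
        simp only at huv' hu hv
        have hyy : y = y' := by
          by_contra hne
          apply hq1
          exact ⟨x', hv.1, x, hu.1, y, hu.2, y', hv.2, hne, by linear_combination huv'⟩
        subst hyy
        have : x = x' := by simpa using huv'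
        rw [this]
    rw [Finset.card_product, hGc] at hcard
    nlinarith

lemma dfc_prog {F : Type*} [Field F] [DecidableEq F] (a h : F) (n : ℕ) (A : Finset F)
    (hA : A = (Finset.range n).image (fun i => a * h ^ i)) :
    dfc (fun x => h * x) A A ≤ 1 := by
  unfold dfc
  have : A.filter (fun x => h * x ∉ A) ⊆ {a * h ^ (n - 1)} := by
    intro x hx
    rw [Finset.mem_filter] at hx
    obtain ⟨hx1, hx2⟩ := hx
    rw [hA] at hx1 hx2
    simp only [Finset.mem_image, Finset.mem_range, not_exists, not_and] at hx1 hx2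
    obtain ⟨i, hi, rfl⟩ := hx1
    by_cases hin : i + 1 < n
    · exact absurd (by ring) (hx2 (i + 1) hin)
    · have : i = n - 1 := by omega
      simp [this]
  simpa using Finset.card_le_card this

end helpers

theorem stmt6 :
    ∃ C κ : ℝ, 0 < C ∧ 0 < κ ∧ κ < 1 ∧
      ∀ (p : ℕ) [Fact p.Prime], 16 ≤ p →
        ∀ g : ZMod p, IsPrimitiveRoot g (p - 1) →
          ∀ a b : ZMod p, a ≠ 0 → b ≠ 0 →
            ∀ n : ℕ,
              Real.exp (C * Real.log p / Real.log (Real.log p)) ≤ n →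
              (n : ℝ) ≤ (p : ℝ) / 2 →
              ∀ I J : Finset (ZMod p),
                I = (Finset.range n).image (fun i => a * g ^ i) →
                J = (Finset.range n).image (fun i => b * g ^ i) →
                I.card = n → J.card = n →
                (Set.ncard {q : ZMod p × ZMod p |
                    q.1 ∈ I ∧ q.2 ∈ J ∧
                    q.1 = (if q.2 = 1 then 1 else q.2 / (q.2 - 1))} : ℝ)
                  ≤ (1 - κ) * n := by
  classical
  refine ⟨1000000, 1 / 100, by norm_num, by norm_num, by norm_num, ?_⟩
  intro p _ hp16 g hg a b ha hb n hnlow hnp I J hI hJ hIc hJc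
  have hnbig : 1000000 ≤ n := by
    have hp16' : (16 : ℝ) ≤ p := by exact_mod_cast hp16
    have hlog : 1 < Real.log p := by
      rw [Real.lt_log_iff_exp_lt (by linarith)]
      have := Real.exp_one_lt_d9
      linarith
    have hll : 0 < Real.log (Real.log p) := Real.log_pos hlog
    have hle : Real.log (Real.log p) ≤ Real.log p := by
      have := Real.log_le_sub_one_of_pos (by linarith : 0 < Real.log p)
      linarith
    have h1 : (1000000 : ℝ) ≤ 1000000 * Real.log p / Real.log (Real.log p) := by
      rw [le_div_iff₀ hll]
      linarith
    have h2 := Real.add_one_le_exp (1000000 * Real.log p / Real.log (Real.log p))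
    have : (1000000 : ℝ) ≤ n := by linarith
    exact_mod_cast this
  have hnp' : 2 * n ≤ p := by
    have : (2 * n : ℝ) ≤ p := by linarith
    exact_mod_cast this
  have hg0 : g ≠ 0 := by
    have := hg.isUnit (by omega)
    exact this.ne_zero
  by_contra hcon
  push Not at hcon
  set N := Set.ncard {q : ZMod p × ZMod p |
                    q.1 ∈ I ∧ q.2 ∈ J ∧
                    q.1 = (if q.2 = 1 then 1 else q.2 / (q.2 - 1))} with hN
  set A := I.image (fun x => x⁻¹) with hA
  set B := J.image (fun x => x⁻¹) with hB
  have hAc : A.card = n := by rw [hA, Finset.card_image_of_injective _ inv_injective, hIc]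
  have hBc : B.card = n := by rw [hB, Finset.card_image_of_injective _ inv_injective, hJc]
  have hA' : A = (Finset.range n).image (fun i => a⁻¹ * (g⁻¹) ^ i) := by
    rw [hA, hI, Finset.image_image]
    congr 1
    funext i
    simp [mul_comm]
  have hB' : B = (Finset.range n).image (fun i => b⁻¹ * (g⁻¹) ^ i) := by
    rw [hB, hJ, Finset.image_image]
    congr 1
    funext i
    simp [mul_comm]
  have hNle : N ≤ (A.filter (fun u => 1 - u ∈ B)).card + 1 := by
    have hsub : {q : ZMod p × ZMod p | q.1 ∈ I ∧ q.2 ∈ J ∧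
          q.1 = (if q.2 = 1 then 1 else q.2 / (q.2 - 1))} ⊆
        ((insert (1, 1) ((A.filter (fun u => 1 - u ∈ B)).image
          (fun u => (u⁻¹, (1 - u)⁻¹))) : Finset (ZMod p × ZMod p)) : Set (ZMod p × ZMod p)) := by
      rintro ⟨x, y⟩ ⟨hx, hy, hxy⟩
      simp only at hx hy hxy
      rw [Finset.mem_coe, Finset.mem_insert]
      by_cases hy1 : y = 1
      · left
        rw [if_pos hy1] at hxy
        rw [hxy, hy1]
      · right
        rw [if_neg hy1] at hxy
        have hy0 : y ≠ 0 := by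
          rw [hJ] at hy
          simp only [Finset.mem_image] at hy
          obtain ⟨i, _, rfl⟩ := hy
          exact mul_ne_zero hb (pow_ne_zero i hg0)
        have hy1' : y - 1 ≠ 0 := sub_ne_zero.2 hy1
        have hrel : 1 - x⁻¹ = y⁻¹ := by
          rw [hxy]; field_simp; ring
        rw [Finset.mem_image]
        refine ⟨x⁻¹, ?_, ?_⟩
        · rw [Finset.mem_filter, hrel]
          exact ⟨Finset.mem_image_of_mem _ hx, Finset.mem_image_of_mem _ hy⟩
        · rw [hrel, inv_inv, inv_inv]
    have h1 := Set.ncard_le_ncard hsub (Finset.finite_toSet _)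
    rw [Set.ncard_coe_finset] at h1
    refine h1.trans ((Finset.card_insert_le _ _).trans ?_)
    exact Nat.add_le_add_right Finset.card_image_le 1
  have hsplit := Finset.card_filter_add_card_filter_not (s := A) (fun u => 1 - u ∈ B)
  have hNn : 99 * n < 100 * N := by
    have : (99 * n : ℝ) < 100 * N := by linarith
    exact_mod_cast this
  have he : dfc (fun x => 1 - x) A B ≤ n / 100 + 1 := by
    unfold dfc
    beta_reduce
    omega
  have hinj : Set.InjOn (fun i : ℕ => (g⁻¹) ^ i) (Finset.range (n / 100) : Set ℕ) := by
    have h1 : Set.InjOn (fun i : ℕ => a⁻¹ * (g⁻¹) ^ i) (Finset.range n : Set ℕ) := by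
      rw [← Finset.card_image_iff, ← hA', hAc, Finset.card_range]
    intro i hi j hj hij
    simp only [Finset.coe_range, Set.mem_Iio] at hi hj
    apply h1
    · simp only [Finset.coe_range, Set.mem_Iio]; omega
    · simp only [Finset.coe_range, Set.mem_Iio]; omega
    · simp only at hij ⊢
      rw [hij]
  have hfin := core g⁻¹ (inv_ne_zero hg0) n (n / 100) (n / 100 + 1) A B hAc hBc
    (dfc_prog _ _ n A hA') (dfc_prog _ _ n B hB') he hinj (by omega) (by omega) hnp'
  have hm : n < 100 * (n / 100) + 100 := by omega
  have hm2 : 10000 ≤ n / 100 := by omega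
  nlinarith
end
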